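/- arXiv:2101.07108 — 5 statements merged into one kernel-verified Lean document; each statement's English description precedes it below -/
import Mathlib

section
/- Fix n, d_X, d_Y, d_Z ∈ ℕ, let r = min(d_X, d_Y), assume d_Z ≥ r, and set d = ⌊d_Z / r⌋. Let ρ_1, …, ρ_r ∈ (0, 1) and let R be the d_X × d_Y rectangular diagonal matrix with diagonal entries ρ_1, …, ρ_r. Let q be the centered Gaussian distribution of (X, Y, Z) on ℝ^{d_X} × ℝ^{d_Y} × ℝ^{d_Z} in which X, Y and Z each have identity covariance matrix, Cov(X, Z) = Cov(Y, Z) = 0 and Cov(X, Y) = R, and let Q = q^{⊗n}. Let 𝒫₀^Q be the set of n-fold products p^{⊗n} of jointly Gaussian distributions p of (X, Y, Z) on ℝ^{d_X} × ℝ^{d_Y} × ℝ^{d_Z} with nonsingular covariance matrix such that X ⊥⊥ Y | Z under p and the marginal of Z under p is N(0, I_{d_Z}). Let ψ be a measurable test on (ℝ^{d_X} × ℝ^{d_Y} × ℝ^{d_Z})^n with values in {0, 1} whose size over 𝒫₀^Q is at most α, and let β = Q(ψ = 1). Then β ≤ α + (1/2)·sqrt( −1 + Π_{i=1}^{r} [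 (1+ρ_i)^n · Σ_{k=0}^{d} C(d,k) / ( 2^d · (1 + (3 − 4k/d)ρ_i)^n ) ] ), where C(d,k) denotes the binomial coefficient. -/
open MeasureTheory ProbabilityTheory Filter
open scoped ENNReal NNReal RealInnerProductSpace

noncomputable section

/-- A measure on a real normed space is (jointly) Gaussian if every continuous linear
functional pushes it forward to a (possibly degenerate) Gaussian distribution on `ℝ`. -/
def IsGaussianMeasure {E : Type*} [NormedAddCommGroup E] [NormedSpace ℝ E] [MeasurableSpace E]
    (μ : Measure E) : Prop :=
  ∀ L : E →L[ℝ] ℝ, ∃ (m : ℝ) (v : ℝ≥0), μ.map L = gaussianReal m v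

/-- The covariance form of a measure, evaluated at two continuous linear functionals. -/
def covForm {E : Type*} [NormedAddCommGroup E] [NormedSpace ℝ E] [MeasurableSpace E]
    (μ : Measure E) (L₁ L₂ : E →L[ℝ] ℝ) : ℝ :=
  ∫ x, (L₁ x - ∫ y, L₁ y ∂μ) * (L₂ x - ∫ y, L₂ y ∂μ) ∂μ

/-- The covariance operator of `μ` is injective: if `Cov(L₁, L₂) = 0` for every continuous
linear functional `L₂`, then `L₁ = 0`.  On a Hilbert space this is precisely injectivity of
the covariance operator. -/
def HasInjectiveCovariance {E : Type*} [NormedAddCommGroup E] [NormedSpace ℝ E] [MeasurableSpace E]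
    (μ : Measure E) : Prop :=
  ∀ L₁ : E →L[ℝ] ℝ, (∀ L₂ : E →L[ℝ] ℝ, covForm μ L₁ L₂ = 0) → L₁ = 0

/-- `X ⫫ Y | Z` under `μ`: for all bounded measurable real-valued `f, g`,
`E(f(X) g(Y) | Z) = E(f(X) | Z) ⬝ E(g(Y) | Z)` almost surely. -/
def CondIndepGiven {Ω α β γ : Type*} [MeasurableSpace Ω] [MeasurableSpace α] [MeasurableSpace β]
    [MeasurableSpace γ] (μ : Measure Ω) (X : Ω → α) (Y : Ω → β) (Z : Ω → γ) : Prop :=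
  ∀ (f : α → ℝ) (g : β → ℝ), Measurable f → Measurable g →
    (∃ C, ∀ a, |f a| ≤ C) → (∃ C, ∀ b, |g b| ≤ C) →
    μ[(fun ω => f (X ω) * g (Y ω))|MeasurableSpace.comap Z inferInstance] =ᵐ[μ]
      fun ω => ((μ[(fun ω' => f (X ω'))|MeasurableSpace.comap Z inferInstance]) ω) *
        ((μ[(fun ω' => g (Y ω'))|MeasurableSpace.comap Z inferInstance]) ω)

/-- standard Gaussian on a finite product -/
def stdG (ι : Type*) [Fintype ι] : Measure (ι → ℝ) := Measure.pi fun _ => gaussianReal 0 1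

instance stdG_prob (ι : Type*) [Fintype ι] : IsProbabilityMeasure (stdG ι) := by
  unfold stdG; infer_instance

lemma charFunDual_stdG {ι : Type*} [Fintype ι] [DecidableEq ι] (L : StrongDual ℝ (ι → ℝ)) :
    charFunDual (stdG ι) L = Complex.exp (((-(∑ i, (L (Pi.single i 1)) ^ 2) / 2 : ℝ) : ℂ)) := by
  unfold stdG
  rw [charFunDual_pi]
  have : ∀ i : ι, charFunDual (gaussianReal 0 1)
      (L.comp (ContinuousLinearMap.single ℝ (fun _ : ι => ℝ) i)) =
      Complex.exp (((-((L (Pi.single i 1)) ^ 2) / 2 : ℝ) : ℂ)) := by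
    intro i
    rw [charFunDual_apply]
    have h := charFun_gaussianReal (μ := 0) (v := 1) (L (Pi.single i 1))
    rw [charFun_apply_real] at h
    have e : ∀ x : ℝ, (L.comp (ContinuousLinearMap.single ℝ (fun _ : ι => ℝ) i)) x
        = L (Pi.single i 1) * x := by
      intro x
      have : (Pi.single i x : ι → ℝ) = x • Pi.single i 1 := by
        rw [← Pi.single_smul]; simp
      simp only [ContinuousLinearMap.comp_apply, ContinuousLinearMap.single_apply]
      rw [this, map_smul, smul_eq_mul, mul_comm]
    simp only [e]
    push_cast
    rw [h]
    congr 1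
    push_cast
    simp
    ring
  simp only [this]
  rw [← Complex.exp_sum]
  congr 1
  push_cast
  rw [← Finset.sum_div, Finset.sum_neg_distrib]

instance stdG_gauss (ι : Type*) [Fintype ι] : IsGaussian (stdG ι) := by
  classical
  refine isGaussian_of_map_eq_gaussianReal fun L =>
    ⟨0, (∑ i, (L (Pi.single i 1)) ^ 2).toNNReal, ?_⟩
  apply Measure.ext_of_charFun
  ext t
  rw [charFun_map_eq_charFunDual_smul, charFunDual_stdG, charFun_gaussianReal,
    Real.coe_toNNReal _ (Finset.sum_nonneg fun i _ => sq_nonneg _)]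
  congr 1
  simp only [smul_apply, smul_eq_mul, mul_pow, ← Finset.mul_sum]
  push_cast
  simp
  ring

/-- centered Gaussian with quadratic form `V` -/
def HasCF {E : Type*} [NormedAddCommGroup E] [NormedSpace ℝ E] [MeasurableSpace E]
    (μ : Measure E) (V : StrongDual ℝ E → ℝ) : Prop :=
  ∀ L, charFunDual μ L = Complex.exp (((-(V L) / 2 : ℝ) : ℂ))

set_option linter.unusedSectionVars false

section CF
variable {E F : Type*} [NormedAddCommGroup E] [NormedSpace ℝ E] [MeasurableSpace E]
  [BorelSpace E] [NormedAddCommGroup F] [NormedSpace ℝ F]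
  [MeasurableSpace F] [BorelSpace F]

lemma HasCF.map {μ : Measure E} {V : StrongDual ℝ E → ℝ} (h : HasCF μ V) (T : E →L[ℝ] F) :
    HasCF (μ.map T) (fun L => V (L.comp T)) := by
  intro L
  rw [charFunDual_map, h]

lemma HasCF.prod {μ : Measure E} {ν : Measure F} [SFinite μ] [SFinite ν]
    {V : StrongDual ℝ E → ℝ} {W : StrongDual ℝ F → ℝ} (h : HasCF μ V) (h' : HasCF ν W) :
    HasCF (μ.prod ν) (fun L => V (L.comp (.inl ℝ E F)) + W (L.comp (.inr ℝ E F))) := by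
  intro L
  rw [charFunDual_prod, h, h', ← Complex.exp_add]
  congr 1
  push_cast
  ring

lemma HasCF.ext [SecondCountableTopology E] [CompleteSpace E] {μ ν : Measure E}
    [IsFiniteMeasure μ] [IsFiniteMeasure ν]
    {V W : StrongDual ℝ E → ℝ} (h : HasCF μ V) (h' : HasCF ν W) (hVW : ∀ L, V L = W L) :
    μ = ν := by
  apply Measure.ext_of_charFunDual
  ext L
  rw [h, h', hVW]

lemma HasCF.variance {μ : Measure E} [IsGaussian μ] {V : StrongDual ℝ E → ℝ} (h : HasCF μ V)
    (L : StrongDual ℝ E) : Var[L; μ] = V L := by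
  have h1 := IsGaussian.charFunDual_eq (μ := μ) L
  rw [h L] at h1
  have h2 := congrArg norm h1
  rw [Complex.norm_exp, Complex.norm_exp, Real.exp_eq_exp] at h2
  simp only [integral_complex_ofReal, Complex.sub_re, Complex.ofReal_re, Complex.mul_re,
    Complex.I_re, Complex.I_im, Complex.ofReal_im] at h2
  have : ((Var[L; μ] : ℂ) / 2).re = Var[L; μ] / 2 := by
    rw [show ((Var[L; μ] : ℂ) / 2) = ((Var[L; μ] / 2 : ℝ) : ℂ) by push_cast; rfl]
    rfl
  rw [this] at h2
  linarith

lemma covForm_self (μ : Measure E) [IsGaussian μ] (L : E →L[ℝ] ℝ) :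
    covForm μ L L = Var[L; μ] := by
  unfold covForm
  rw [variance_eq_integral (by fun_prop)]
  simp only [pow_two]

lemma gaussianMeasure_of_isGaussian (μ : Measure E) [IsGaussian μ] : IsGaussianMeasure μ :=
  fun L => ⟨_, _, IsGaussian.map_eq_gaussianReal L⟩

end CF

/-- the base Gaussian on `((z, D), s)` -/
def baseG (N M : ℕ) : Measure (((Fin M → ℝ) × (Fin N → ℝ)) × (Fin N → ℝ)) :=
  ((stdG (Fin M)).prod (stdG (Fin N))).prod (stdG (Fin N))

instance baseG_prob (N M : ℕ) : IsProbabilityMeasure (baseG N M) := by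
  unfold baseG; infer_instance

instance baseG_gauss (N M : ℕ) : IsGaussian (baseG N M) := by
  unfold baseG; infer_instance

lemma hasCF_stdG (ι : Type*) [Fintype ι] [DecidableEq ι] :
    HasCF (stdG ι) (fun L => ∑ i, (L (Pi.single i 1)) ^ 2) := fun L => charFunDual_stdG L

lemma hasCF_baseG (N M : ℕ) : HasCF (baseG N M) (fun L =>
    (∑ l, (L ((Pi.single l 1, 0), 0)) ^ 2 + ∑ k, (L ((0, Pi.single k 1), 0)) ^ 2)
      + ∑ k, (L ((0, 0), Pi.single k 1)) ^ 2) :=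
  ((hasCF_stdG _).prod (hasCF_stdG _)).prod (hasCF_stdG _)

lemma lintegral_pi_prod {ι : Type*} [Fintype ι] {Ω : ι → Type*} [∀ i, MeasurableSpace (Ω i)]
    (μ : ∀ i, Measure (Ω i))
    [∀ i, IsProbabilityMeasure (μ i)] (f : ∀ i, Ω i → ℝ≥0∞) (hf : ∀ i, Measurable (f i)) :
    ∫⁻ x, ∏ i, f i (x i) ∂(Measure.pi μ) = ∏ i, ∫⁻ x, f i x ∂(μ i) := by
  have h := lintegral_prod_eq_prod_lintegral_of_indepFun (μ := Measure.pi μ) Finset.univ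
    (fun i x => f i (x i)) (iIndepFun_pi fun i => (hf i).aemeasurable)
    (fun i => (hf i).comp (measurable_pi_apply i))
  rw [h]
  refine Finset.prod_congr rfl fun i _ => ?_
  exact (measurePreserving_eval μ i).lintegral_comp (hf i)

lemma pi_withDensity' {ι : Type*} [Fintype ι] {Ω : ι → Type*} [∀ i, MeasurableSpace (Ω i)]
    (μ : ∀ i, Measure (Ω i))
    [∀ i, IsProbabilityMeasure (μ i)] (f : ∀ i, Ω i → ℝ≥0∞) (hf : ∀ i, Measurable (f i))
    [∀ i, IsProbabilityMeasure ((μ i).withDensity (f i))] :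
    Measure.pi (fun i => (μ i).withDensity (f i)) =
      (Measure.pi μ).withDensity (fun x => ∏ i, f i (x i)) := by
  classical
  refine Measure.pi_eq fun s hs => ?_
  rw [withDensity_apply _ (MeasurableSet.univ_pi hs), ← lintegral_indicator (.univ_pi hs)]
  have : ∀ x : (∀ i, Ω i), (Set.univ.pi s).indicator (fun x => ∏ i, f i (x i)) x =
      ∏ i, (s i).indicator (f i) (x i) := by
    intro x
    by_cases hx : x ∈ Set.univ.pi s
    · rw [Set.indicator_of_mem hx]
      refine Finset.prod_congr rfl fun i _ => ?_
      rw [Set.indicator_of_mem (hx i trivial)]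
    · rw [Set.indicator_of_notMem hx]
      simp only [Set.mem_pi, Set.mem_univ, true_implies, not_forall] at hx
      obtain ⟨i, hi⟩ := hx
      exact (Finset.prod_eq_zero (Finset.mem_univ i) (Set.indicator_of_notMem hi _)).symm
  simp only [this]
  rw [lintegral_pi_prod μ _ fun i => (hf i).indicator (hs i)]
  refine Finset.prod_congr rfl fun i _ => ?_
  rw [lintegral_indicator (hs i), withDensity_apply _ (hs i)]

lemma lintegral_exp_quad (A B C : ℝ) (hA : A < 1 / 2) :
    ∫⁻ s, ENNReal.ofReal (Real.exp (A * s ^ 2 + B * s + C)) ∂(gaussianReal 0 1) =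
      ENNReal.ofReal ((Real.sqrt (1 - 2 * A))⁻¹ *
        Real.exp (B ^ 2 / (2 * (1 - 2 * A)) + C)) := by
  have hc : 0 < 1 - 2 * A := by linarith
  set c := 1 - 2 * A with hcdef
  have hAc : A = (1 - c) / 2 := by rw [hcdef]; ring
  let v : ℝ≥0 := ⟨c⁻¹, (inv_pos.2 hc).le⟩
  have hv : v ≠ 0 := by
    intro h
    have : (v : ℝ) = 0 := by rw [h]; rfl
    exact (inv_pos.2 hc).ne' this
  have hvc : (v : ℝ) = c⁻¹ := rfl
  rw [gaussianReal_of_var_ne_zero _ one_ne_zero,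
    lintegral_withDensity_eq_lintegral_mul _ (measurable_gaussianPDF _ _) (by fun_prop)]
  have key : ∀ s : ℝ, gaussianPDFReal 0 1 s * Real.exp (A * s ^ 2 + B * s + C) =
      ((Real.sqrt c)⁻¹ * Real.exp (B ^ 2 / (2 * c) + C)) * gaussianPDFReal (B / c) v s := by
    intro s
    simp only [gaussianPDFReal, hvc, NNReal.coe_one, mul_one, sub_zero]
    have h1 : Real.sqrt (2 * Real.pi * c⁻¹) = Real.sqrt (2 * Real.pi) * (Real.sqrt c)⁻¹ := by
      rw [Real.sqrt_mul (by positivity), Real.sqrt_inv]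
    rw [h1, mul_inv, inv_inv, mul_assoc, ← Real.exp_add]
    have hsc : Real.sqrt c ≠ 0 := (Real.sqrt_pos.2 hc).ne'
    have e : -s ^ 2 / 2 + (A * s ^ 2 + B * s + C) =
      (B ^ 2 / (2 * c) + C) + (-(s - B / c) ^ 2 / (2 * c⁻¹)) := by
      rw [hAc]; field_simp; ring
    rw [e, Real.exp_add]
    field_simp
  have : ∀ s : ℝ, (gaussianPDF 0 1 * fun s => ENNReal.ofReal (Real.exp (A * s ^ 2 + B * s + C))) s
      = ENNReal.ofReal ((Real.sqrt c)⁻¹ * Real.exp (B ^ 2 / (2 * c) + C)) *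
        gaussianPDF (B / c) v s := by
    intro s
    simp only [Pi.mul_apply, gaussianPDF]
    rw [← ENNReal.ofReal_mul (gaussianPDFReal_nonneg _ _ _), key,
      ENNReal.ofReal_mul (by positivity)]
  simp only [this]
  rw [lintegral_const_mul _ (measurable_gaussianPDF _ _), lintegral_gaussianPDF_eq_one _ hv,
    mul_one]

/-- density of `N(w, v)` with respect to `N(0, 1)` -/
def fd (v w s : ℝ) : ℝ := (Real.sqrt v)⁻¹ * Real.exp (-(s - w) ^ 2 / (2 * v) + s ^ 2 / 2)

lemma fd_nonneg (v w s : ℝ) : 0 ≤ fd v w s := by unfold fd; positivity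

lemma measurable_fd (v : ℝ) : Measurable (fun p : ℝ × ℝ => fd v p.1 p.2) := by
  unfold fd; fun_prop

lemma withDensity_fd (v : ℝ≥0) (hv : v ≠ 0) (w : ℝ) :
    (gaussianReal 0 1).withDensity (fun s => ENNReal.ofReal (fd v w s)) = gaussianReal w v := by
  rw [gaussianReal_of_var_ne_zero _ one_ne_zero, gaussianReal_of_var_ne_zero _ hv,
    ← withDensity_mul _ (measurable_gaussianPDF _ _) (by unfold fd; fun_prop)]
  congr 1
  ext s
  simp only [Pi.mul_apply, gaussianPDF]
  rw [← ENNReal.ofReal_mul (gaussianPDFReal_nonneg _ _ _)]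
  congr 1
  have hv' : (0:ℝ) < v := by positivity
  simp only [gaussianPDFReal, NNReal.coe_one, mul_one, sub_zero, fd]
  rw [Real.sqrt_mul (x := 2 * Real.pi) (by positivity) v, mul_inv, Real.exp_add, neg_div (2 : ℝ),
    Real.exp_neg]
  have := Real.exp_pos (s ^ 2 / 2)
  have hsc : Real.sqrt v ≠ 0 := (Real.sqrt_pos.2 hv').ne'
  field_simp

lemma lintegral_fd_fd (v : ℝ) (hv : 0 < v) (hv1 : v ≤ 1) (W V : ℝ) :
    ∫⁻ s, ENNReal.ofReal (fd v (W + V) s) * ENNReal.ofReal (fd v (W - V) s) ∂(gaussianReal 0 1)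
      = ENNReal.ofReal (v⁻¹ * (Real.sqrt ((2 - v) / v))⁻¹) *
        (ENNReal.ofReal (Real.exp (W ^ 2 / (2 - v))) * ENNReal.ofReal (Real.exp (-V ^ 2 / v))) := by
  have h2 : 2 - v ≠ 0 := by linarith
  have key : ∀ s : ℝ, ENNReal.ofReal (fd v (W + V) s) * ENNReal.ofReal (fd v (W - V) s) =
      ENNReal.ofReal v⁻¹ * ENNReal.ofReal (Real.exp ((1 - 1 / v) * s ^ 2 + (2 * W / v) * s +
        (-(W ^ 2 + V ^ 2) / v))) := by
    intro s
    rw [← ENNReal.ofReal_mul (fd_nonneg _ _ _), ← ENNReal.ofReal_mul (by positivity)]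
    congr 1
    unfold fd
    rw [mul_mul_mul_comm, ← mul_inv, Real.mul_self_sqrt hv.le, ← Real.exp_add]
    congr 2
    field_simp
    ring
  simp only [key]
  rw [lintegral_const_mul _ (by fun_prop), lintegral_exp_quad _ _ _ (by
    have : 1 ≤ 1 / v := by rw [le_div_iff₀ hv]; linarith
    linarith)]
  rw [← ENNReal.ofReal_mul (by positivity), ← ENNReal.ofReal_mul (by positivity),
    ← ENNReal.ofReal_mul (by positivity)]
  congr 1
  have e1 : 1 - 2 * (1 - 1 / v) = (2 - v) / v := by field_simp; ring
  rw [e1, mul_assoc, ← Real.exp_add]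
  congr 3
  field_simp
  ring

lemma chi_const (κ t : ℝ) (hκ0 : 0 ≤ κ) (hκ : κ < 1) (ht : |t| ≤ 1) :
    ENNReal.ofReal ((1 - κ)⁻¹ * (Real.sqrt ((2 - (1 - κ)) / (1 - κ)))⁻¹) *
      ((∫⁻ x, ENNReal.ofReal (Real.exp ((Real.sqrt (κ * (1 + t) / 2) * x) ^ 2 / (2 - (1 - κ))))
        ∂(gaussianReal 0 1)) *
       (∫⁻ x, ENNReal.ofReal (Real.exp (-(Real.sqrt (κ * (1 - t) / 2) * x) ^ 2 / (1 - κ)))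
        ∂(gaussianReal 0 1))) = ENNReal.ofReal (1 - κ * t)⁻¹ := by
  have ht' := abs_le.1 ht
  have hp : 0 < 1 - κ := by linarith
  have hq : 0 < 1 + κ := by linarith
  have h1t : 0 < 1 - κ * t := by nlinarith
  have e1 : ∀ x : ℝ, (Real.sqrt (κ * (1 + t) / 2) * x) ^ 2 / (2 - (1 - κ)) =
      (κ * (1 + t) / 2 / (1 + κ)) * x ^ 2 + 0 * x + 0 := by
    intro x
    rw [mul_pow, Real.sq_sqrt (by nlinarith)]
    rw [show 2 - (1 - κ) = 1 + κ by ring]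
    ring
  have e2 : ∀ x : ℝ, -(Real.sqrt (κ * (1 - t) / 2) * x) ^ 2 / (1 - κ) =
      (-(κ * (1 - t) / 2) / (1 - κ)) * x ^ 2 + 0 * x + 0 := by
    intro x
    rw [mul_pow, Real.sq_sqrt (by nlinarith)]
    ring
  simp only [e1, e2]
  rw [lintegral_exp_quad _ _ _ (by rw [div_lt_iff₀ hq]; nlinarith),
    lintegral_exp_quad _ _ _ (by rw [div_lt_iff₀ hp]; nlinarith)]
  rw [← ENNReal.ofReal_mul (by positivity), ← ENNReal.ofReal_mul (by positivity)]
  congr 1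
  simp only [ne_eq, OfNat.ofNat_ne_zero, not_false_eq_true, zero_pow, zero_div, add_zero,
    Real.exp_zero, mul_one]
  have f1 : 1 - 2 * (κ * (1 + t) / 2 / (1 + κ)) = (1 - κ * t) / (1 + κ) := by
    field_simp; ring
  have f2 : 1 - 2 * (-(κ * (1 - t) / 2) / (1 - κ)) = (1 - κ * t) / (1 - κ) := by
    field_simp; ring
  rw [f1, f2, show 2 - (1 - κ) = 1 + κ by ring]
  rw [Real.sqrt_div hq.le, Real.sqrt_div h1t.le, Real.sqrt_div h1t.le]
  have g1 := Real.mul_self_sqrt hp.le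
  have g2 := Real.mul_self_sqrt hq.le
  have g3 := Real.mul_self_sqrt h1t.le
  have p1 := Real.sqrt_pos.2 hp
  have p2 := Real.sqrt_pos.2 hq
  have p3 := Real.sqrt_pos.2 h1t
  generalize Real.sqrt (1 - κ) = a at *
  generalize Real.sqrt (1 + κ) = b at *
  generalize Real.sqrt (1 - κ * t) = c at *
  rw [← g1, ← g3]
  field_simp

/-- linear maps given by a matrix -/
def matL {K : Type*} [Fintype K] {M : ℕ} (b : K → Fin M → ℝ) : (Fin M → ℝ) →L[ℝ] (K → ℝ) :=
  LinearMap.toContinuousLinearMap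
    { toFun := fun z k => ∑ l, b k l * z l
      map_add' := by intro x y; ext k; simp [mul_add, Finset.sum_add_distrib]
      map_smul' := by
        intro c x; ext k
        simp only [Pi.smul_apply, smul_eq_mul, RingHom.id_apply, Finset.mul_sum]
        exact Finset.sum_congr rfl fun l _ => by ring }

lemma matL_apply {K : Type*} [Fintype K] {M : ℕ} (b : K → Fin M → ℝ) (z : Fin M → ℝ) (k : K) :
    matL b z k = ∑ l, b k l * z l := rfl

lemma matL_single {K : Type*} [Fintype K] {M : ℕ} (b : K → Fin M → ℝ) (l : Fin M) :
    matL b (Pi.single l 1) = fun k => b k l := by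
  ext k
  simp [matL_apply, Pi.single_apply]

lemma dual_pi_apply {K : Type*} [Fintype K] [DecidableEq K] (L : StrongDual ℝ (K → ℝ))
    (x : K → ℝ) : L x = ∑ k, x k * L (Pi.single k 1) := by
  conv_lhs => rw [pi_eq_sum_univ' x]
  rw [map_sum]
  refine Finset.sum_congr rfl fun k _ => ?_
  rw [map_smul, smul_eq_mul]

lemma gram_sum {K : Type*} [Fintype K] [DecidableEq K] {M : ℕ} (b : K → Fin M → ℝ) (g : K → ℝ)
    (hb : ∀ k k', ∑ l, b k l * b k' l = if k = k' then g k else 0) (c : K → ℝ) :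
    ∑ l, (∑ k, b k l * c k) ^ 2 = ∑ k, c k ^ 2 * g k := by
  have : ∀ l, (∑ k, b k l * c k) ^ 2 = ∑ k, ∑ k', c k * c k' * (b k l * b k' l) := by
    intro l
    rw [pow_two, Finset.sum_mul_sum]
    refine Finset.sum_congr rfl fun k _ => Finset.sum_congr rfl fun k' _ => by ring
  simp only [this]
  rw [Finset.sum_comm]
  refine Finset.sum_congr rfl fun k _ => ?_
  rw [Finset.sum_comm]
  simp only [← Finset.mul_sum, hb]
  simp [pow_two]

/-- diagonal map -/
def diagL {K : Type*} [Fintype K] (c : K → ℝ) : (K → ℝ) →L[ℝ] (K → ℝ) :=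
  LinearMap.toContinuousLinearMap
    { toFun := fun z k => c k * z k
      map_add' := by intro x y; ext k; simp [mul_add]
      map_smul' := by
        intro c x; ext k
        simp only [Pi.smul_apply, smul_eq_mul, RingHom.id_apply]
        ring }

lemma diagL_apply {K : Type*} [Fintype K] (c : K → ℝ) (z : K → ℝ) :
    diagL c z = fun k => c k * z k := rfl

lemma map_matL {K : Type*} [Fintype K] [DecidableEq K] {M : ℕ} (b : K → Fin M → ℝ) (g : K → ℝ)
    (hg : ∀ k, 0 ≤ g k)
    (hb : ∀ k k', ∑ l, b k l * b k' l = if k = k' then g k else 0) :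
    (stdG (Fin M)).map (matL b) = (stdG K).map (diagL fun k => Real.sqrt (g k)) := by
  refine HasCF.ext ((hasCF_stdG _).map _) ((hasCF_stdG _).map _) fun L => ?_
  simp only [ContinuousLinearMap.comp_apply, matL_single]
  have e : ∀ l : Fin M, L (fun k => b k l) = ∑ k, b k l * L (Pi.single k 1) :=
    fun l => dual_pi_apply L _
  simp only [e]
  rw [gram_sum b g hb]
  refine Finset.sum_congr rfl fun k _ => ?_
  have : diagL (fun k => Real.sqrt (g k)) (Pi.single k 1) = Real.sqrt (g k) • Pi.single k 1 := by
    rw [diagL_apply]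
    ext j
    by_cases h : j = k
    · subst h; simp
    · simp [h]
  rw [this, map_smul, smul_eq_mul, mul_pow, Real.sq_sqrt (hg k)]
  ring

/-- the shift map -/
def shiftM {N M : ℕ} (κ : Fin N → ℝ) (a : Fin N → Fin M → ℝ) :
    (((Fin M → ℝ) × (Fin N → ℝ)) × (Fin N → ℝ)) →L[ℝ]
      (((Fin M → ℝ) × (Fin N → ℝ)) × (Fin N → ℝ)) :=
  (ContinuousLinearMap.fst ℝ _ _).prod
    ((diagL fun k => Real.sqrt (1 - κ k)).comp (ContinuousLinearMap.snd ℝ _ _) +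
      (matL a).comp ((ContinuousLinearMap.fst ℝ _ _).comp (ContinuousLinearMap.fst ℝ _ _)))

/-- the density -/
def dens {N M : ℕ} (κ : Fin N → ℝ) (a : Fin N → Fin M → ℝ)
    (x : ((Fin M → ℝ) × (Fin N → ℝ)) × (Fin N → ℝ)) : ℝ :=
  ∏ k, fd (1 - κ k) (matL a x.1.1 k) (x.2 k)

lemma dens_nonneg {N M : ℕ} (κ : Fin N → ℝ) (a : Fin N → Fin M → ℝ)
    (x : ((Fin M → ℝ) × (Fin N → ℝ)) × (Fin N → ℝ)) : 0 ≤ dens κ a x :=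
  Finset.prod_nonneg fun _ _ => fd_nonneg _ _ _

lemma measurable_dens {N M : ℕ} (κ : Fin N → ℝ) (a : Fin N → Fin M → ℝ) :
    Measurable (dens κ a) := by
  unfold dens
  refine Finset.measurable_fun_prod _ fun k _ => ?_
  unfold fd
  simp only [matL_apply]
  fun_prop

lemma map_affine {N : ℕ} (κ : Fin N → ℝ) (hκ : ∀ k, κ k < 1) (w : Fin N → ℝ) :
    (stdG (Fin N)).map (fun s k => Real.sqrt (1 - κ k) * s k + w k) =
      (stdG (Fin N)).withDensity (fun s => ∏ k, ENNReal.ofReal (fd (1 - κ k) (w k) (s k))) := by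
  unfold stdG
  have hv : ∀ k, (0:ℝ) < 1 - κ k := fun k => by linarith [hκ k]
  have h1 : ∀ k, (gaussianReal 0 1).withDensity (fun s => ENNReal.ofReal (fd (1 - κ k) (w k) s))
      = gaussianReal (w k) (1 - κ k).toNNReal := by
    intro k
    have := withDensity_fd (1 - κ k).toNNReal (by simpa using hκ k) (w k)
    rwa [Real.coe_toNNReal _ (hv k).le] at this
  have h2 : ∀ k, (gaussianReal 0 1).map (fun s => Real.sqrt (1 - κ k) * s + w k)
      = gaussianReal (w k) (1 - κ k).toNNReal := by
    intro k
    have e : (fun s => Real.sqrt (1 - κ k) * s + w k) =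
      (fun x => x + w k) ∘ (fun s => Real.sqrt (1 - κ k) * s) := rfl
    rw [e, ← Measure.map_map (by fun_prop) (by fun_prop), gaussianReal_map_const_mul,
      gaussianReal_map_add_const]
    congr 1
    · simp
    · ext
      simp [Real.sq_sqrt (hv k).le, (hv k).le]
  have i1 : ∀ k, IsProbabilityMeasure
      ((gaussianReal 0 1).withDensity (fun s => ENNReal.ofReal (fd (1 - κ k) (w k) s))) := by
    intro k; rw [h1]; infer_instance
  have i2 : ∀ k, IsProbabilityMeasure
      ((gaussianReal 0 1).map (fun s => Real.sqrt (1 - κ k) * s + w k)) := by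
    intro k; rw [h2]; infer_instance
  rw [Measure.pi_map_pi (f := fun k s => Real.sqrt (1 - κ k) * s + w k) (by fun_prop),
    ← pi_withDensity' (fun _ : Fin N => gaussianReal 0 1)
      (fun k s => ENNReal.ofReal (fd (1 - κ k) (w k) s)) (by unfold fd; fun_prop)]
  congr 1
  ext1 k
  rw [h1, h2]

lemma ofReal_dens {N M : ℕ} (κ : Fin N → ℝ) (a : Fin N → Fin M → ℝ)
    (x : ((Fin M → ℝ) × (Fin N → ℝ)) × (Fin N → ℝ)) :
    ENNReal.ofReal (dens κ a x) =
      ∏ k, ENNReal.ofReal (fd (1 - κ k) (matL a x.1.1 k) (x.2 k)) :=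
  ENNReal.ofReal_prod_of_nonneg fun _ _ => fd_nonneg _ _ _

lemma map_shiftM {N M : ℕ} (κ : Fin N → ℝ) (hκ : ∀ k, κ k < 1) (a : Fin N → Fin M → ℝ) :
    (baseG N M).map (shiftM κ a) =
      (baseG N M).withDensity (fun x => ENNReal.ofReal (dens κ a x)) := by
  have hdm : Measurable (fun x => ENNReal.ofReal (dens κ a x)) :=
    (measurable_dens κ a).ennreal_ofReal
  refine Measure.ext_of_lintegral _ fun f hf => ?_
  rw [lintegral_map hf (by fun_prop), lintegral_withDensity_eq_lintegral_mul _ hdm hf]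
  unfold baseG
  rw [lintegral_prod (fun x => f (shiftM κ a x)) (by fun_prop),
    lintegral_prod ((fun x => ENNReal.ofReal (dens κ a x)) * f) (hdm.mul hf).aemeasurable]
  refine lintegral_congr fun p => ?_
  have h := map_affine κ hκ (matL a p.1)
  have hfp : Measurable (fun s => f (p, s)) := by fun_prop
  have hA := lintegral_map (μ := stdG (Fin N)) (f := fun s => f (p, s))
    (g := fun s k => Real.sqrt (1 - κ k) * s k + matL a p.1 k) hfp (by fun_prop)
  rw [h, lintegral_withDensity_eq_lintegral_mul _ (by unfold fd; fun_prop) hfp] at hA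
  simp only [Pi.mul_apply] at hA ⊢
  simp only [ofReal_dens]
  rw [hA]
  rfl

lemma chi_one {N M : ℕ} (κ t : Fin N → ℝ) (hκ0 : ∀ k, 0 ≤ κ k) (hκ : ∀ k, κ k < 1)
    (ht : ∀ k, |t k| ≤ 1) (a a' : Fin N → Fin M → ℝ)
    (haa : ∀ k k', ∑ l, a k l * a k' l = if k = k' then κ k else 0)
    (haa' : ∀ k k', ∑ l, a' k l * a' k' l = if k = k' then κ k else 0)
    (hcr : ∀ k k', ∑ l, a k l * a' k' l = if k = k' then κ k * t k else 0) :
    ∫⁻ x, ENNReal.ofReal (dens κ a x) * ENNReal.ofReal (dens κ a' x) ∂(baseG N M) =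
      ∏ k, ENNReal.ofReal (1 - κ k * t k)⁻¹ := by
  have hdm : ∀ a : Fin N → Fin M → ℝ, Measurable (fun x => ENNReal.ofReal (dens κ a x)) :=
    fun a => (measurable_dens κ a).ennreal_ofReal
  let b : Fin N ⊕ Fin N → Fin M → ℝ := Sum.elim (fun k l => (a k l + a' k l) / 2)
    (fun k l => (a k l - a' k l) / 2)
  let g : Fin N ⊕ Fin N → ℝ := Sum.elim (fun k => κ k * (1 + t k) / 2)
    (fun k => κ k * (1 - t k) / 2)
  have hg : ∀ k, 0 ≤ g k := by
    rintro (k | k)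
    · have := abs_le.1 (ht k)
      have := hκ0 k
      simp only [g, Sum.elim_inl]
      nlinarith
    · have := abs_le.1 (ht k)
      have := hκ0 k
      simp only [g, Sum.elim_inr]
      nlinarith
  have hcr' : ∀ k k', ∑ l, a' k l * a k' l = if k = k' then κ k * t k else 0 := by
    intro k k'
    have := hcr k' k
    simp only [mul_comm (a' k _)]
    rw [this]
    by_cases h : k = k'
    · subst h; rfl
    · simp [h, Ne.symm h]
  have hb : ∀ k k', ∑ l, b k l * b k' l = if k = k' then g k else 0 := by
    have exp1 : ∀ (σ τ : ℝ) (k k' : Fin N), ∑ l, ((a k l + σ * a' k l) / 2) *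
        ((a k' l + τ * a' k' l) / 2) = ((if k = k' then κ k else 0)
          + τ * (if k = k' then κ k * t k else 0) + σ * (if k = k' then κ k * t k else 0)
          + σ * τ * (if k = k' then κ k else 0)) / 4 := by
      intro σ τ k k'
      have : ∑ l, ((a k l + σ * a' k l) / 2) * ((a k' l + τ * a' k' l) / 2) =
          (∑ l, a k l * a k' l + τ * ∑ l, a k l * a' k' l + σ * ∑ l, a' k l * a k' l
            + σ * τ * ∑ l, a' k l * a' k' l) / 4 := by
        simp only [Finset.mul_sum, ← Finset.sum_add_distrib, Finset.sum_div]
        exact Finset.sum_congr rfl fun l _ => by ring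
      rw [this, haa, haa', hcr, hcr']
    rintro (k | k) (k' | k')
    · have := exp1 1 1 k k'
      simp only [one_mul] at this
      simp only [b, g, Sum.elim_inl, Sum.inl.injEq]
      rw [this]; split_ifs <;> ring
    · have := exp1 1 (-1) k k'
      simp only [one_mul, neg_mul, ← sub_eq_add_neg] at this
      simp only [b, g, Sum.elim_inl, Sum.elim_inr, reduceCtorEq, if_false]
      rw [this]; split_ifs <;> ring
    · have := exp1 (-1) 1 k k'
      simp only [one_mul, neg_mul, ← sub_eq_add_neg] at this
      simp only [b, g, Sum.elim_inl, Sum.elim_inr, reduceCtorEq, if_false]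
      rw [this]; split_ifs <;> ring
    · have := exp1 (-1) (-1) k k'
      simp only [one_mul, neg_mul, ← sub_eq_add_neg] at this
      simp only [b, g, Sum.elim_inr, Sum.inr.injEq]
      rw [this]; split_ifs <;> ring
  let φ : Fin N ⊕ Fin N → ℝ → ℝ≥0∞ := Sum.elim
    (fun k x => ENNReal.ofReal (Real.exp (x ^ 2 / (2 - (1 - κ k)))))
    (fun k x => ENNReal.ofReal (Real.exp (-x ^ 2 / (1 - κ k))))
  have hφ : ∀ k, Measurable (φ k) := by
    rintro (k | k) <;> simp only [φ, Sum.elim_inl, Sum.elim_inr] <;> fun_prop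
  let c : Fin N → ℝ≥0∞ := fun k =>
    ENNReal.ofReal ((1 - κ k)⁻¹ * (Real.sqrt ((2 - (1 - κ k)) / (1 - κ k)))⁻¹)
  have inner : ∀ p : (Fin M → ℝ) × (Fin N → ℝ),
      ∫⁻ s, ENNReal.ofReal (dens κ a (p, s)) * ENNReal.ofReal (dens κ a' (p, s)) ∂(stdG (Fin N))
        = (∏ k, c k) * ∏ j, φ j (matL b p.1 j) := by
    intro p
    simp only [ofReal_dens, ← Finset.prod_mul_distrib]
    unfold stdG
    rw [lintegral_pi_prod (fun _ : Fin N => gaussianReal 0 1)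
      (fun k s => ENNReal.ofReal (fd (1 - κ k) (matL a p.1 k) s) *
        ENNReal.ofReal (fd (1 - κ k) (matL a' p.1 k) s)) (by unfold fd; fun_prop)]
    rw [Fintype.prod_sum_type, ← Finset.prod_mul_distrib, ← Finset.prod_mul_distrib]
    refine Finset.prod_congr rfl fun k _ => ?_
    have hW : matL b p.1 (Sum.inl k) = (matL a p.1 k + matL a' p.1 k) / 2 := by
      simp only [matL_apply, b, Sum.elim_inl, ← Finset.sum_add_distrib, Finset.sum_div]
      exact Finset.sum_congr rfl fun l _ => by ring
    have hV : matL b p.1 (Sum.inr k) = (matL a p.1 k - matL a' p.1 k) / 2 := by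
      simp only [matL_apply, b, Sum.elim_inr, ← Finset.sum_sub_distrib, Finset.sum_div]
      exact Finset.sum_congr rfl fun l _ => by ring
    have h := lintegral_fd_fd (1 - κ k) (by linarith [hκ k]) (by linarith [hκ0 k])
      (matL b p.1 (Sum.inl k)) (matL b p.1 (Sum.inr k))
    rw [show matL b p.1 (Sum.inl k) + matL b p.1 (Sum.inr k) = matL a p.1 k by rw [hW, hV]; ring,
      show matL b p.1 (Sum.inl k) - matL b p.1 (Sum.inr k) = matL a' p.1 k by
        rw [hW, hV]; ring] at h
    exact h
  have hφm : Measurable fun y : Fin N ⊕ Fin N → ℝ => ∏ j, φ j (y j) :=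
    Finset.measurable_fun_prod _ fun j _ => (hφ j).comp (measurable_pi_apply j)
  have outer : ∫⁻ z, ∏ j, φ j (matL b z j) ∂(stdG (Fin M)) =
      ∏ j, ∫⁻ x, φ j (Real.sqrt (g j) * x) ∂(gaussianReal 0 1) := by
    have h1 := lintegral_map (μ := stdG (Fin M)) (g := matL b) hφm (by fun_prop)
    rw [← h1, map_matL b g hg hb, lintegral_map hφm (by fun_prop)]
    simp only [diagL_apply]
    unfold stdG
    rw [lintegral_pi_prod (fun _ => gaussianReal 0 1) (fun j x => φ j (Real.sqrt (g j) * x))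
      fun j => (hφ j).comp (by fun_prop)]
  unfold baseG
  rw [lintegral_prod (fun x => ENNReal.ofReal (dens κ a x) * ENNReal.ofReal (dens κ a' x))
    ((hdm a).mul (hdm a')).aemeasurable]
  simp only [inner]
  have hm2 : Measurable fun p : (Fin M → ℝ) × (Fin N → ℝ) => ∏ j, φ j (matL b p.1 j) :=
    hφm.comp (by fun_prop)
  rw [lintegral_const_mul _ hm2,
    lintegral_prod (fun p : (Fin M → ℝ) × (Fin N → ℝ) => ∏ j, φ j (matL b p.1 j)) hm2.aemeasurable]
  simp only [lintegral_const, measure_univ, mul_one]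
  rw [outer, Fintype.prod_sum_type, ← Finset.prod_mul_distrib, ← Finset.prod_mul_distrib]
  refine Finset.prod_congr rfl fun k _ => ?_
  exact chi_const (κ k) (t k) (hκ0 k) (hκ k) (ht k)

lemma condExp_base {A B C E : Type*} [MeasurableSpace A] [MeasurableSpace B] [MeasurableSpace C]
    [MeasurableSpace E] (μ : Measure C) (ν : Measure A) (η : Measure B)
    [IsProbabilityMeasure μ] [IsProbabilityMeasure ν] [IsProbabilityMeasure η]
    (T : (C × A) × B → E) (hT : Measurable T) (Z : E → C) (hZ : Measurable Z)
    (hZT : ∀ x, Z (T x) = x.1.1) (h : E → ℝ) (hh : Measurable h) (K : ℝ) (hK : ∀ x, |h x| ≤ K) :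
    (((μ.prod ν).prod η).map T)[h | MeasurableSpace.comap Z inferInstance]
      =ᵐ[((μ.prod ν).prod η).map T]
      fun ω => ∫ a, ∫ b, h (T ((Z ω, a), b)) ∂η ∂ν := by
  set P := ((μ.prod ν).prod η).map T with hP
  have : IsProbabilityMeasure P := Measure.isProbabilityMeasure_map hT.aemeasurable
  have hm : MeasurableSpace.comap Z inferInstance ≤ (inferInstance : MeasurableSpace E) :=
    hZ.comap_le
  let H : C → ℝ := fun z => ∫ a, ∫ b, h (T ((z, a), b)) ∂η ∂ν
  have hhT : StronglyMeasurable fun x => h (T x) := (hh.comp hT).stronglyMeasurable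
  have hH1 : StronglyMeasurable fun p : C × A => ∫ b, h (T (p, b)) ∂η :=
    hhT.integral_prod_right'
  have hHm : StronglyMeasurable H := hH1.integral_prod_right'
  have hHb : ∀ z, |H z| ≤ K := by
    intro z
    have := norm_integral_le_of_norm_le_const (μ := ν) (C := K)
      (f := fun a => ∫ b, h (T ((z, a), b)) ∂η) (ae_of_all _ fun a => by
        have := norm_integral_le_of_norm_le_const (μ := η) (C := K)
          (f := fun b => h (T ((z, a), b))) (ae_of_all _ fun b => hK _)
        simpa using this)
    simpa using this
  have hIntg : Integrable h P :=
    Integrable.of_bound hh.aestronglyMeasurable K (ae_of_all _ hK)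
  have hHZ : StronglyMeasurable fun ω => H (Z ω) := hHm.comp_measurable hZ
  have hIntgH : Integrable (fun ω => H (Z ω)) P :=
    Integrable.of_bound hHZ.aestronglyMeasurable K (ae_of_all _ fun ω => hHb _)
  symm
  refine ae_eq_condExp_of_forall_setIntegral_eq hm hIntg (fun s _ _ => hIntgH.integrableOn) ?_ ?_
  · rintro s ⟨S, hS, rfl⟩ _
    have hZS := hZ hS
    rw [← integral_indicator hZS, ← integral_indicator hZS, hP,
      integral_map hT.aemeasurable (hHZ.indicator hZS).aestronglyMeasurable,
      integral_map hT.aemeasurable (hh.indicator hZS).aestronglyMeasurable]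
    have e1 : ∀ x, (Z ⁻¹' S).indicator (fun ω => H (Z ω)) (T x) =
        S.indicator (fun _ => 1) x.1.1 * H x.1.1 := by
      intro x
      by_cases hx : x.1.1 ∈ S
      · simp [Set.indicator, hZT, hx]
      · simp [Set.indicator, hZT, hx]
    have e2 : ∀ x, (Z ⁻¹' S).indicator h (T x) =
        S.indicator (fun _ => 1) x.1.1 * h (T x) := by
      intro x
      by_cases hx : x.1.1 ∈ S
      · simp [Set.indicator, hZT, hx]
      · simp [Set.indicator, hZT, hx]
    have hind : Measurable (S.indicator (fun _ => (1:ℝ))) := measurable_const.indicator hS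
    have hindb : ∀ z, ‖S.indicator (fun _ => (1:ℝ)) z‖ ≤ 1 := by
      intro z; by_cases hz : z ∈ S <;> simp [hz]
    have hK0 : ∀ z : C, 0 ≤ K := fun z => (abs_nonneg _).trans (hHb z)
    have bd : ∀ (z : C) (y : ℝ), |y| ≤ K → ‖S.indicator (fun _ => (1:ℝ)) z * y‖ ≤ K := by
      intro z y hy
      rw [norm_mul]
      calc _ ≤ 1 * K := mul_le_mul (hindb z) hy (abs_nonneg _) zero_le_one
        _ = K := one_mul K
    have i1 : Integrable (fun x : (C × A) × B => S.indicator (fun _ => (1:ℝ)) x.1.1 * H x.1.1)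
        ((μ.prod ν).prod η) :=
      Integrable.of_bound (((hind.comp (by fun_prop)).mul
        (hHm.measurable.comp (by fun_prop))).aestronglyMeasurable) K
        (ae_of_all _ fun x => bd _ _ (hHb _))
    have i2 : Integrable (fun x : (C × A) × B => S.indicator (fun _ => (1:ℝ)) x.1.1 * h (T x))
        ((μ.prod ν).prod η) :=
      Integrable.of_bound (((hind.comp (by fun_prop)).mul
        hhT.measurable).aestronglyMeasurable) K
        (ae_of_all _ fun x => bd _ _ (hK _))
    simp only [e1, e2]
    rw [integral_prod _ i1, integral_prod _ i2]
    rw [integral_prod _ i1.integral_prod_left, integral_prod _ i2.integral_prod_left]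
    refine integral_congr_ae (ae_of_all _ fun z => ?_)
    simp only [integral_const_mul, integral_const, smul_eq_mul]
    simp [H]
  · exact (hHm.comp_measurable (comap_measurable Z)).aestronglyMeasurable

lemma condIndep_base {A B C X Y : Type*} [MeasurableSpace A] [MeasurableSpace B]
    [MeasurableSpace C] [MeasurableSpace X] [MeasurableSpace Y]
    (μ : Measure C) (ν : Measure A) (η : Measure B)
    [IsProbabilityMeasure μ] [IsProbabilityMeasure ν] [IsProbabilityMeasure η]
    (T : (C × A) × B → X × Y × C) (hT : Measurable T)
    (F : C → A → X) (G : C → B → Y)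
    (hTF : ∀ z a b, T ((z, a), b) = (F z a, G z b, z)) :
    CondIndepGiven (((μ.prod ν).prod η).map T) (fun ω => ω.1) (fun ω => ω.2.1)
      (fun ω => ω.2.2) := by
  rintro f g hf hg ⟨K, hK⟩ ⟨K', hK'⟩
  have hZT : ∀ x, (T x).2.2 = x.1.1 := by
    rintro ⟨⟨z, a⟩, b⟩; rw [hTF]
  have h1 := condExp_base μ ν η T hT (fun ω => ω.2.2) (by fun_prop) hZT
    (fun ω => f ω.1) (by fun_prop) K (fun ω => hK _)
  have h2 := condExp_base μ ν η T hT (fun ω => ω.2.2) (by fun_prop) hZT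
    (fun ω => g ω.2.1) (by fun_prop) K' (fun ω => hK' _)
  have h3 := condExp_base μ ν η T hT (fun ω => ω.2.2) (by fun_prop) hZT
    (fun ω => f ω.1 * g ω.2.1) (by fun_prop) (K * K') (fun ω => by
      rw [abs_mul]
      exact mul_le_mul (hK _) (hK' _) (abs_nonneg _) ((abs_nonneg _).trans (hK ω.1)))
  filter_upwards [h1, h2, h3] with ω e1 e2 e3
  rw [e1, e2, e3]
  simp only [hTF, integral_const_mul, integral_mul_const, integral_const, smul_eq_mul]
  simp

/-- the map producing the alternative -/
def altT {N M dX dY : ℕ} (hX : dX ≤ N) (hY : dY ≤ N) (al be : Fin N → ℝ) :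
    (((Fin M → ℝ) × (Fin N → ℝ)) × (Fin N → ℝ)) →L[ℝ]
      ((Fin dX → ℝ) × (Fin dY → ℝ) × (Fin M → ℝ)) :=
  LinearMap.toContinuousLinearMap
    { toFun := fun x =>
        (fun i => al (Fin.castLE hX i) * x.2 (Fin.castLE hX i)
            + be (Fin.castLE hX i) * x.1.2 (Fin.castLE hX i),
         fun j => al (Fin.castLE hY j) * x.2 (Fin.castLE hY j)
            - be (Fin.castLE hY j) * x.1.2 (Fin.castLE hY j),
         x.1.1)
      map_add' := by
        intro x y
        refine Prod.ext ?_ (Prod.ext ?_ rfl) <;>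
        · ext k; simp; ring
      map_smul' := by
        intro c x
        refine Prod.ext ?_ (Prod.ext ?_ rfl) <;>
        · ext k; simp; ring }

/-- the map producing the null -/
def nullT {N M dX dY : ℕ} (hX : dX ≤ N) (hY : dY ≤ N) (al be : Fin N → ℝ)
    (a : Fin N → Fin M → ℝ) :
    (((Fin M → ℝ) × (Fin N → ℝ)) × (Fin N → ℝ)) →L[ℝ]
      ((Fin dX → ℝ) × (Fin dY → ℝ) × (Fin M → ℝ)) :=
  LinearMap.toContinuousLinearMap
    { toFun := fun x =>
        (fun i => Real.sqrt 2 * be (Fin.castLE hX i) * x.1.2 (Fin.castLE hX i)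
            + al (Fin.castLE hX i) * matL a x.1.1 (Fin.castLE hX i),
         fun j => Real.sqrt 2 * be (Fin.castLE hY j) * x.2 (Fin.castLE hY j)
            + al (Fin.castLE hY j) * matL a x.1.1 (Fin.castLE hY j),
         x.1.1)
      map_add' := by
        intro x y
        refine Prod.ext ?_ (Prod.ext ?_ rfl) <;>
        · ext k; simp; ring
      map_smul' := by
        intro c x
        refine Prod.ext ?_ (Prod.ext ?_ rfl) <;>
        · ext k; simp; ring }

/-- indicator vector -/
def eInd {N d : ℕ} (h : d ≤ N) (k : Fin N) : Fin d → ℝ :=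
  fun i => if Fin.castLE h i = k then 1 else 0

section maps
variable {N M dX dY : ℕ} (hX : dX ≤ N) (hY : dY ≤ N) (al be : Fin N → ℝ)

lemma altT_apply (x : ((Fin M → ℝ) × (Fin N → ℝ)) × (Fin N → ℝ)) :
    altT hX hY al be x = (fun i => al (Fin.castLE hX i) * x.2 (Fin.castLE hX i)
            + be (Fin.castLE hX i) * x.1.2 (Fin.castLE hX i),
         fun j => al (Fin.castLE hY j) * x.2 (Fin.castLE hY j)
            - be (Fin.castLE hY j) * x.1.2 (Fin.castLE hY j),
         x.1.1) := rfl

lemma nullT_apply (a : Fin N → Fin M → ℝ) (x : ((Fin M → ℝ) × (Fin N → ℝ)) × (Fin N → ℝ)) :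
    nullT hX hY al be a x =
        (fun i => Real.sqrt 2 * be (Fin.castLE hX i) * x.1.2 (Fin.castLE hX i)
            + al (Fin.castLE hX i) * matL a x.1.1 (Fin.castLE hX i),
         fun j => Real.sqrt 2 * be (Fin.castLE hY j) * x.2 (Fin.castLE hY j)
            + al (Fin.castLE hY j) * matL a x.1.1 (Fin.castLE hY j),
         x.1.1) := rfl

lemma shiftM_apply (κ : Fin N → ℝ) (a : Fin N → Fin M → ℝ)
    (x : ((Fin M → ℝ) × (Fin N → ℝ)) × (Fin N → ℝ)) :
    shiftM κ a x = (x.1, fun k => Real.sqrt (1 - κ k) * x.2 k + matL a x.1.1 k) := rfl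

lemma altT_s (c : ℝ) (k : Fin N) :
    altT (M := M) hX hY al be ((0, 0), c • Pi.single k 1) =
      (c * al k) • ((eInd hX k, 0, 0) + (0, eInd hY k, 0)) := by
  rw [altT_apply]
  refine Prod.ext ?_ (Prod.ext ?_ ?_)
  · ext i
    by_cases h : Fin.castLE hX i = k
    · subst h; simp [eInd]; ring
    · simp [eInd, h]
  · ext i
    by_cases h : Fin.castLE hY i = k
    · subst h; simp [eInd]; ring
    · simp [eInd, h]
  · simp

lemma altT_d (k : Fin N) :
    altT (M := M) hX hY al be ((0, Pi.single k 1), 0) =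
      (be k) • ((eInd hX k, 0, 0) - (0, eInd hY k, 0)) := by
  rw [altT_apply]
  refine Prod.ext ?_ (Prod.ext ?_ ?_)
  · ext i
    by_cases h : Fin.castLE hX i = k
    · subst h; simp [eInd]
    · simp [eInd, h]
  · ext i
    by_cases h : Fin.castLE hY i = k
    · subst h; simp [eInd]
    · simp [eInd, h]
  · simp

lemma map_nullT_eq (κ : Fin N → ℝ) (a : Fin N → Fin M → ℝ)
    (hκ : ∀ k, κ k < 1) (hab : ∀ k, al k ^ 2 * (1 - κ k) = be k ^ 2) :
    (baseG N M).map (nullT hX hY al be a) =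
      ((baseG N M).map (shiftM κ a)).map (altT hX hY al be) := by
  rw [Measure.map_map (by fun_prop) (by fun_prop), ← ContinuousLinearMap.coe_comp]
  refine HasCF.ext ((hasCF_baseG _ _).map _) ((hasCF_baseG _ _).map _) fun L => ?_
  simp only [ContinuousLinearMap.comp_apply]
  have z0 : matL a 0 = 0 := map_zero _
  have s1 : ∀ k, shiftM κ a ((0, Pi.single k 1), 0) = ((0, Pi.single k 1), 0) := by
    intro k; rw [shiftM_apply]; simp [z0]; rfl
  have s2 : ∀ k, shiftM κ a ((0, 0), Pi.single k 1) =
      ((0, 0), Real.sqrt (1 - κ k) • Pi.single k 1) := by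
    intro k; rw [shiftM_apply]
    refine Prod.ext rfl ?_
    ext j
    by_cases h : j = k
    · subst h; simp
    · simp [h]
  have s3 : ∀ l, altT hX hY al be (shiftM κ a ((Pi.single l 1, 0), 0)) =
      nullT hX hY al be a ((Pi.single l 1, 0), 0) := by
    intro l; rw [shiftM_apply, altT_apply, nullT_apply]; simp
  have n1 : ∀ k, nullT hX hY al be a ((0, Pi.single k 1), 0) =
      (Real.sqrt 2 * be k) • (eInd hX k, 0, 0) := by
    intro k
    rw [nullT_apply]
    refine Prod.ext ?_ (Prod.ext ?_ ?_)
    · ext i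
      by_cases h : Fin.castLE hX i = k
      · subst h; simp [eInd]
      · simp [eInd, h]
    · ext i
      simp
    · simp
  have n2 : ∀ k, nullT hX hY al be a ((0, 0), Pi.single k 1) =
      (Real.sqrt 2 * be k) • (0, eInd hY k, 0) := by
    intro k
    rw [nullT_apply]
    refine Prod.ext ?_ (Prod.ext ?_ ?_)
    · ext i
      simp
    · ext i
      by_cases h : Fin.castLE hY i = k
      · subst h; simp [eInd]
      · simp [eInd, h]
    · simp
  simp only [s1, s2, s3, n1, n2, altT_s, altT_d]
  simp only [map_smul, map_add, map_sub, smul_eq_mul]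
  rw [add_assoc, add_assoc, ← Finset.sum_add_distrib, ← Finset.sum_add_distrib]
  congr 1
  refine Finset.sum_congr rfl fun k _ => ?_
  simp only [mul_pow]
  rw [Real.sq_sqrt (by norm_num), Real.sq_sqrt (by linarith [hκ k]), ← hab k]
  ring

lemma nullT_inj (a : Fin N → Fin M → ℝ) (hbe : ∀ k, be k ≠ 0) :
    HasInjectiveCovariance ((baseG N M).map (nullT hX hY al be a)) := by
  intro L hL
  have h := hL L
  rw [covForm_self, ((hasCF_baseG _ _).map _).variance] at h
  simp only [ContinuousLinearMap.comp_apply] at h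
  set P := nullT (M := M) hX hY al be a
  have hn1 : 0 ≤ ∑ l, (L (P ((Pi.single l 1, 0), 0))) ^ 2 := Finset.sum_nonneg fun _ _ => sq_nonneg _
  have hn2 : 0 ≤ ∑ k, (L (P ((0, Pi.single k 1), 0))) ^ 2 := Finset.sum_nonneg fun _ _ => sq_nonneg _
  have hn3 : 0 ≤ ∑ k, (L (P ((0, 0), Pi.single k 1))) ^ 2 := Finset.sum_nonneg fun _ _ => sq_nonneg _
  have h1 : ∑ l, (L (P ((Pi.single l 1, 0), 0))) ^ 2 = 0 := by linarith
  have h2 : ∑ k, (L (P ((0, Pi.single k 1), 0))) ^ 2 = 0 := by linarith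
  have h3 : ∑ k, (L (P ((0, 0), Pi.single k 1))) ^ 2 = 0 := by linarith
  rw [Finset.sum_eq_zero_iff_of_nonneg fun _ _ => sq_nonneg _] at h1 h2 h3
  have h1' : ∀ l, L (P ((Pi.single l 1, 0), 0)) = 0 := fun l => by
    simpa using h1 l (Finset.mem_univ _)
  have h2' : ∀ k, L (P ((0, Pi.single k 1), 0)) = 0 := fun l => by
    simpa using h2 l (Finset.mem_univ _)
  have h3' : ∀ k, L (P ((0, 0), Pi.single k 1)) = 0 := fun l => by
    simpa using h3 l (Finset.mem_univ _)
  have hc : ∀ x, L (P x) = 0 := by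
    rintro ⟨⟨z, D⟩, s⟩
    have d1 := dual_pi_apply ((L.comp P).comp ((ContinuousLinearMap.inl ℝ _ _).comp
      (ContinuousLinearMap.inl ℝ _ _))) z
    have d2 := dual_pi_apply ((L.comp P).comp ((ContinuousLinearMap.inl ℝ _ _).comp
      (ContinuousLinearMap.inr ℝ _ _))) D
    have d3 := dual_pi_apply ((L.comp P).comp (ContinuousLinearMap.inr ℝ _ _)) s
    simp only [ContinuousLinearMap.comp_apply, ContinuousLinearMap.inl_apply,
      ContinuousLinearMap.inr_apply] at d1 d2 d3
    have e : (((z, D), s) : ((Fin M → ℝ) × (Fin N → ℝ)) × (Fin N → ℝ)) =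
        ((z, 0), 0) + ((0, D), 0) + (0, s) := by simp
    have h3'' : ∀ k, L (P (0, Pi.single k 1)) = 0 := h3'
    rw [e, map_add, map_add, map_add, map_add, d1, d2, d3]
    simp [h1', h2', h3'']
  have s2 : Real.sqrt 2 ≠ 0 := by positivity
  refine ContinuousLinearMap.ext fun ω => ?_
  obtain ⟨x, y, z⟩ := ω
  let D : Fin N → ℝ := fun k => if h : (k : ℕ) < dX then
    (x ⟨k, h⟩ - al k * matL a z k) / (Real.sqrt 2 * be k) else 0
  let s : Fin N → ℝ := fun k => if h : (k : ℕ) < dY then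
    (y ⟨k, h⟩ - al k * matL a z k) / (Real.sqrt 2 * be k) else 0
  have : P ((z, D), s) = (x, y, z) := by
    simp only [P, nullT_apply]
    refine Prod.ext ?_ (Prod.ext ?_ rfl)
    · ext i
      have := hbe (Fin.castLE hX i)
      simp [D]
      field_simp
      ring
    · ext i
      have := hbe (Fin.castLE hY i)
      simp [s]
      field_simp
      ring
  rw [← this, hc]
  simp

lemma nullT_condIndep (a : Fin N → Fin M → ℝ) :
    CondIndepGiven ((baseG N M).map (nullT hX hY al be a)) (fun ω => ω.1) (fun ω => ω.2.1)
      (fun ω => ω.2.2) :=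
  condIndep_base (stdG (Fin M)) (stdG (Fin N)) (stdG (Fin N)) (nullT hX hY al be a)
    (by fun_prop)
    (fun z D i => Real.sqrt 2 * be (Fin.castLE hX i) * D (Fin.castLE hX i)
            + al (Fin.castLE hX i) * matL a z (Fin.castLE hX i))
    (fun z s j => Real.sqrt 2 * be (Fin.castLE hY j) * s (Fin.castLE hY j)
            + al (Fin.castLE hY j) * matL a z (Fin.castLE hY j)) (fun _ _ _ => rfl)

lemma nullT_Z (a : Fin N → Fin M → ℝ) :
    ((baseG N M).map (nullT hX hY al be a)).map (fun ω => ω.2.2) =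
      Measure.pi (fun _ : Fin M => gaussianReal 0 1) := by
  rw [Measure.map_map (by fun_prop) (by fun_prop)]
  have : ((fun ω : (Fin dX → ℝ) × (Fin dY → ℝ) × (Fin M → ℝ) => ω.2.2) ∘ nullT hX hY al be a)
    = Prod.fst ∘ Prod.fst := rfl
  rw [this, ← Measure.map_map (by fun_prop) (by fun_prop)]
  unfold baseG
  have h1 : Measure.map Prod.fst (((stdG (Fin M)).prod (stdG (Fin N))).prod (stdG (Fin N))) =
      (stdG (Fin M)).prod (stdG (Fin N)) := Measure.fst_prod
  have h2 : Measure.map Prod.fst ((stdG (Fin M)).prod (stdG (Fin N))) = stdG (Fin M) :=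
    Measure.fst_prod
  rw [h1, h2]
  rfl

end maps

lemma eInd_sum {N d1 d2 : ℕ} (h1 : d1 ≤ N) (h2 : d2 ≤ N) (l : Fin d1 → ℝ) (m : Fin d2 → ℝ)
    (w : Fin N → ℝ) :
    ∑ k, w k * (∑ i, eInd h1 k i * l i) * (∑ j, eInd h2 k j * m j) =
      ∑ i, ∑ j, l i * m j *
        (if Fin.castLE h1 i = Fin.castLE h2 j then w (Fin.castLE h1 i) else 0) := by
  have e : ∀ k, w k * (∑ i, eInd h1 k i * l i) * (∑ j, eInd h2 k j * m j) =
      ∑ i, ∑ j, w k * (eInd h1 k i * l i) * (eInd h2 k j * m j) := by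
    intro k
    rw [mul_assoc, Finset.sum_mul_sum, Finset.mul_sum]
    refine Finset.sum_congr rfl fun i _ => ?_
    rw [Finset.mul_sum]
    refine Finset.sum_congr rfl fun j _ => ?_
    ring
  simp only [e]
  rw [Finset.sum_comm]
  refine Finset.sum_congr rfl fun i _ => ?_
  rw [Finset.sum_comm]
  refine Finset.sum_congr rfl fun j _ => ?_
  rw [Finset.sum_eq_single (Fin.castLE h1 i)]
  · by_cases h : Fin.castLE h1 i = Fin.castLE h2 j
    · simp [eInd, h]; ring
    · simp [eInd, h, Ne.symm h]
  · intro k _ hk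
    simp [eInd, Ne.symm hk]
  · simp

lemma hasCF_of_centered {E : Type*} [NormedAddCommGroup E] [NormedSpace ℝ E] [MeasurableSpace E]
    [BorelSpace E] (q : Measure E) [IsGaussian q]
    (h0 : ∀ L : StrongDual ℝ E, ∫ ω, L ω ∂q = 0) :
    HasCF q (fun L => ∫ ω, L ω * L ω ∂q) := by
  intro L
  have hc : ∫ ω, ((L ω : ℝ) : ℂ) ∂q = 0 := by rw [integral_complex_ofReal, h0]; simp
  rw [IsGaussian.charFunDual_eq, hc, variance_eq_integral (by fun_prop), h0]
  simp only [sub_zero, pow_two]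
  congr 1
  push_cast
  ring

/-- coordinate functionals -/
def coordF (dX dY dZ : ℕ) : (Fin dX ⊕ Fin dY ⊕ Fin dZ) →
    StrongDual ℝ ((Fin dX → ℝ) × (Fin dY → ℝ) × (Fin dZ → ℝ))
  | .inl i => (ContinuousLinearMap.proj i).comp (ContinuousLinearMap.fst ℝ _ _)
  | .inr (.inl j) => (ContinuousLinearMap.proj j).comp
      ((ContinuousLinearMap.fst ℝ _ _).comp (ContinuousLinearMap.snd ℝ _ _))
  | .inr (.inr l) => (ContinuousLinearMap.proj l).comp
      ((ContinuousLinearMap.snd ℝ _ _).comp (ContinuousLinearMap.snd ℝ _ _))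

/-- coefficients -/
def coefF {dX dY dZ : ℕ} (L : StrongDual ℝ ((Fin dX → ℝ) × (Fin dY → ℝ) × (Fin dZ → ℝ))) :
    (Fin dX ⊕ Fin dY ⊕ Fin dZ) → ℝ
  | .inl i => L (Pi.single i 1, 0, 0)
  | .inr (.inl j) => L (0, Pi.single j 1, 0)
  | .inr (.inr l) => L (0, 0, Pi.single l 1)

lemma dual_X {dX dY dZ : ℕ} (L : StrongDual ℝ ((Fin dX → ℝ) × (Fin dY → ℝ) × (Fin dZ → ℝ)))
    (x : Fin dX → ℝ) : L (x, 0, 0) = ∑ i, x i * L (Pi.single i 1, 0, 0) := by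
  exact dual_pi_apply (L.comp (ContinuousLinearMap.inl ℝ _ _)) x

lemma dual_Y {dX dY dZ : ℕ} (L : StrongDual ℝ ((Fin dX → ℝ) × (Fin dY → ℝ) × (Fin dZ → ℝ)))
    (x : Fin dY → ℝ) : L (0, x, 0) = ∑ i, x i * L (0, Pi.single i 1, 0) := by
  have d := dual_pi_apply (L.comp ((ContinuousLinearMap.inr ℝ _ _).comp
    (ContinuousLinearMap.inl ℝ _ _))) x
  simpa only [ContinuousLinearMap.comp_apply, ContinuousLinearMap.inl_apply,
      ContinuousLinearMap.inr_apply] using d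

lemma dual_Z {dX dY dZ : ℕ} (L : StrongDual ℝ ((Fin dX → ℝ) × (Fin dY → ℝ) × (Fin dZ → ℝ)))
    (x : Fin dZ → ℝ) : L (0, 0, x) = ∑ i, x i * L (0, 0, Pi.single i 1) := by
  have d := dual_pi_apply (L.comp ((ContinuousLinearMap.inr ℝ _ _).comp
    (ContinuousLinearMap.inr ℝ _ _))) x
  simpa only [ContinuousLinearMap.comp_apply, ContinuousLinearMap.inl_apply,
      ContinuousLinearMap.inr_apply] using d

lemma dual_expand {dX dY dZ : ℕ} (L : StrongDual ℝ ((Fin dX → ℝ) × (Fin dY → ℝ) × (Fin dZ → ℝ)))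
    (ω) : L ω = ∑ s, coefF L s * coordF dX dY dZ s ω := by
  obtain ⟨x, y, z⟩ := ω
  have e : ((x, y, z) : (Fin dX → ℝ) × (Fin dY → ℝ) × (Fin dZ → ℝ)) =
      (x, 0, 0) + (0, y, 0) + (0, 0, z) := by simp
  rw [e, map_add, map_add, dual_X, dual_Y, dual_Z, ← e]
  simp [Fintype.sum_sum_type, coefF, coordF, mul_comm, add_assoc]

lemma q_eq {N dX dY dZ : ℕ} (hX : dX ≤ N) (hY : dY ≤ N) (al be ρ' : Fin N → ℝ)
    (h1 : ∀ k, al k ^ 2 + be k ^ 2 = 1) (h2 : ∀ k, al k ^ 2 - be k ^ 2 = ρ' k)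
    (q : Measure ((Fin dX → ℝ) × (Fin dY → ℝ) × (Fin dZ → ℝ)))
    (hqgauss : IsGaussianMeasure q)
    (hmX : ∀ i, ∫ ω, ω.1 i ∂q = 0) (hmY : ∀ j, ∫ ω, ω.2.1 j ∂q = 0)
    (hmZ : ∀ l, ∫ ω, ω.2.2 l ∂q = 0)
    (hXX : ∀ i i', ∫ ω, ω.1 i * ω.1 i' ∂q = if i = i' then 1 else 0)
    (hYY : ∀ j j', ∫ ω, ω.2.1 j * ω.2.1 j' ∂q = if j = j' then 1 else 0)
    (hZZ : ∀ l l', ∫ ω, ω.2.2 l * ω.2.2 l' ∂q = if l = l' then 1 else 0)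
    (hXZ : ∀ i l, ∫ ω, ω.1 i * ω.2.2 l ∂q = 0)
    (hYZ : ∀ j l, ∫ ω, ω.2.1 j * ω.2.2 l ∂q = 0)
    (hXY : ∀ (i : Fin dX) (j : Fin dY), ∫ ω, ω.1 i * ω.2.1 j ∂q =
      if Fin.castLE hX i = Fin.castLE hY j then ρ' (Fin.castLE hX i) else 0) :
    q = (baseG N dZ).map (altT hX hY al be) := by
  have hG : IsGaussian q := isGaussian_of_map_eq_gaussianReal hqgauss
  have hIntg1 : ∀ L : StrongDual ℝ ((Fin dX → ℝ) × (Fin dY → ℝ) × (Fin dZ → ℝ)),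
      Integrable L q := fun L => (IsGaussian.memLp_dual q L 1 (by simp)).integrable le_rfl
  have hIntg2 : ∀ L L' : StrongDual ℝ ((Fin dX → ℝ) × (Fin dY → ℝ) × (Fin dZ → ℝ)),
      Integrable (fun ω => L ω * L' ω) q := fun L L' =>
    (IsGaussian.memLp_dual q L 2 (by simp)).integrable_mul
      (IsGaussian.memLp_dual q L' 2 (by simp))
  have h0 : ∀ L : StrongDual ℝ ((Fin dX → ℝ) × (Fin dY → ℝ) × (Fin dZ → ℝ)),
      ∫ ω, L ω ∂q = 0 := by
    intro L
    simp only [dual_expand L]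
    rw [integral_finsetSum _ fun s _ => (hIntg1 _).const_mul _]
    refine Finset.sum_eq_zero fun s _ => ?_
    rw [integral_const_mul]
    rcases s with i | j | l
    · simp [coordF, hmX]
    · simp [coordF, hmY]
    · simp [coordF, hmZ]
  refine HasCF.ext (hasCF_of_centered q h0) ((hasCF_baseG _ _).map _) fun L => ?_
  have hL : ∫ ω, L ω * L ω ∂q = ∑ s, ∑ s', coefF L s * coefF L s' *
      ∫ ω, coordF dX dY dZ s ω * coordF dX dY dZ s' ω ∂q := by
    have e : ∀ ω, L ω * L ω = ∑ s, ∑ s', coefF L s * coefF L s' *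
        (coordF dX dY dZ s ω * coordF dX dY dZ s' ω) := by
      intro ω
      rw [dual_expand L ω, Finset.sum_mul_sum]
      refine Finset.sum_congr rfl fun k _ => Finset.sum_congr rfl fun k' _ => by ring
    simp only [e]
    rw [integral_finsetSum _ fun s _ => integrable_finsetSum _ fun s' _ =>
      (hIntg2 _ _).const_mul _]
    refine Finset.sum_congr rfl fun s _ => ?_
    rw [integral_finsetSum _ fun s' _ => (hIntg2 _ _).const_mul _]
    refine Finset.sum_congr rfl fun s' _ => ?_
    rw [integral_const_mul]
  have hYX : ∀ (j : Fin dY) (i : Fin dX), ∫ ω, ω.2.1 j * ω.1 i ∂q =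
      if Fin.castLE hX i = Fin.castLE hY j then ρ' (Fin.castLE hX i) else 0 := by
    intro j i; rw [← hXY]; simp only [mul_comm]
  have hZX : ∀ l i, ∫ ω, ω.2.2 l * ω.1 i ∂q = 0 := by
    intro l i; rw [← hXZ i l]; simp only [mul_comm]
  have hZY : ∀ l i, ∫ ω, ω.2.2 l * ω.2.1 i ∂q = 0 := by
    intro l i; rw [← hYZ i l]; simp only [mul_comm]
  rw [hL]
  simp only [Fintype.sum_sum_type, coefF, coordF, ContinuousLinearMap.comp_apply,
    ContinuousLinearMap.proj_apply, ContinuousLinearMap.coe_fst', ContinuousLinearMap.coe_snd',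
    hXX, hYY, hZZ, hXZ, hYZ, hXY, hYX, hZX, hZY, mul_zero, Finset.sum_const_zero, add_zero,
    zero_add]
  have a1 : ∀ k, altT (M := dZ) hX hY al be ((0, 0), Pi.single k 1) =
      (al k) • ((eInd hX k, 0, 0) + (0, eInd hY k, 0)) := by
    intro k
    have := altT_s (M := dZ) hX hY al be 1 k
    simpa using this
  have a2 : ∀ l : Fin dZ, altT hX hY al be ((Pi.single l 1, 0), 0) = (0, 0, Pi.single l 1) := by
    intro l
    rw [altT_apply]
    refine Prod.ext ?_ (Prod.ext ?_ rfl) <;>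
    · ext; simp
  simp only [a1, a2, altT_d, map_smul, map_add, map_sub, smul_eq_mul]
  have sX := eInd_sum hX hX (fun i => L (Pi.single i 1, 0, 0)) (fun i => L (Pi.single i 1, 0, 0))
    (fun _ => 1)
  have sY := eInd_sum hY hY (fun i => L (0, Pi.single i 1, 0)) (fun i => L (0, Pi.single i 1, 0))
    (fun _ => 1)
  have sXY := eInd_sum hX hY (fun i => L (Pi.single i 1, 0, 0)) (fun i => L (0, Pi.single i 1, 0))
    ρ'
  have sYX := eInd_sum hX hY (fun i => L (Pi.single i 1, 0, 0)) (fun i => L (0, Pi.single i 1, 0))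
    ρ'
  rw [Finset.sum_comm] at sYX
  simp only [← dual_X, ← dual_Y, Fin.castLE_inj] at sX sY sXY sYX
  have key : ∑ k, (be k * (L (eInd hX k, 0, 0) - L (0, eInd hY k, 0))) ^ 2 +
      ∑ k, (al k * (L (eInd hX k, 0, 0) + L (0, eInd hY k, 0))) ^ 2 =
      ∑ k, 1 * L (eInd hX k, 0, 0) * L (eInd hX k, 0, 0)
      + ∑ k, 1 * L (0, eInd hY k, 0) * L (0, eInd hY k, 0)
      + ∑ k, ρ' k * L (eInd hX k, 0, 0) * L (0, eInd hY k, 0)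
      + ∑ k, ρ' k * L (eInd hX k, 0, 0) * L (0, eInd hY k, 0) := by
    simp only [← Finset.sum_add_distrib]
    refine Finset.sum_congr rfl fun k _ => ?_
    rw [← h2 k, ← h1 k]
    ring
  rw [add_assoc, key]
  rw [sX, sY]
  nth_rewrite 1 [sXY]
  rw [sYX]
  simp only [Finset.sum_add_distrib]
  have c1 : ∑ y, ∑ x, L (Pi.single x 1, 0, 0) * L (0, Pi.single y 1, 0) *
        (if Fin.castLE hX x = Fin.castLE hY y then ρ' (Fin.castLE hX x) else 0) =
      ∑ y, ∑ x, L (0, Pi.single y 1, 0) * L (Pi.single x 1, 0, 0) *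
        (if Fin.castLE hX x = Fin.castLE hY y then ρ' (Fin.castLE hX x) else 0) :=
    Finset.sum_congr rfl fun k _ => Finset.sum_congr rfl fun k' _ => by ring
  have c2 : ∑ x : Fin dZ, ∑ y : Fin dZ, L (0, 0, Pi.single x 1) * L (0, 0, Pi.single y 1) *
      (if x = y then (1:ℝ) else 0) = ∑ l, L (0, 0, Pi.single l 1) ^ 2 := by
    refine Finset.sum_congr rfl fun k _ => ?_
    simp [pow_two]
  rw [c1, c2]
  ring
lemma test_bound {X : Type*} [MeasurableSpace X] (G : Measure X) [IsProbabilityMeasure G]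
    {Ω : Type*} [Fintype Ω] [Nonempty Ω] (f : Ω → X → ℝ) (hf : ∀ ω, Measurable (f ω))
    (hf0 : ∀ ω x, 0 ≤ f ω x) (c : Ω → Ω → ℝ) (hc : ∀ ω ω', 0 ≤ c ω ω')
    (hone : ∀ ω, ∫⁻ x, ENNReal.ofReal (f ω x) ∂G = 1)
    (hchi : ∀ ω ω', ∫⁻ x, ENNReal.ofReal (f ω x) * ENNReal.ofReal (f ω' x) ∂G =
      ENNReal.ofReal (c ω ω'))
    (A : Set X) (hA : MeasurableSet A) (α : ℝ)
    (hα : ∀ ω, ((G.withDensity (fun x => ENNReal.ofReal (f ω x))) A).toReal ≤ α) :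
    (G A).toReal ≤ α + (1 / 2) * Real.sqrt (-1 +
      ((Fintype.card Ω : ℝ) ^ 2)⁻¹ * ∑ ω, ∑ ω', c ω ω') := by
  have hi1 : ∀ ω, Integrable (f ω) G := fun ω => by
    refine ⟨(hf ω).aestronglyMeasurable, ?_⟩
    rw [hasFiniteIntegral_iff_ofReal (Eventually.of_forall (hf0 ω)), hone]
    simp
  have hI1 : ∀ ω, ∫ x, f ω x ∂G = 1 := fun ω => by
    rw [integral_eq_lintegral_of_nonneg_ae (Eventually.of_forall (hf0 ω))
      (hf ω).aestronglyMeasurable, hone]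
    simp
  have hchi' : ∀ ω ω', ∫⁻ x, ENNReal.ofReal (f ω x * f ω' x) ∂G = ENNReal.ofReal (c ω ω') := by
    intro ω ω'
    rw [← hchi]
    simp only [ENNReal.ofReal_mul (hf0 ω _)]
  have hi2 : ∀ ω ω', Integrable (fun x => f ω x * f ω' x) G := fun ω ω' => by
    refine ⟨((hf ω).mul (hf ω')).aestronglyMeasurable, ?_⟩
    rw [hasFiniteIntegral_iff_ofReal
      (Eventually.of_forall fun x => mul_nonneg (hf0 ω x) (hf0 ω' x)), hchi']
    simp
  have hI2 : ∀ ω ω', ∫ x, f ω x * f ω' x ∂G = c ω ω' := fun ω ω' => by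
    rw [integral_eq_lintegral_of_nonneg_ae
      (Eventually.of_forall fun x => mul_nonneg (hf0 ω x) (hf0 ω' x))
      ((hf ω).mul (hf ω')).aestronglyMeasurable, hchi', ENNReal.toReal_ofReal (hc _ _)]
  have hα' : ∀ ω, ∫ x in A, f ω x ∂G ≤ α := by
    intro ω
    refine le_trans (le_of_eq ?_) (hα ω)
    rw [withDensity_apply _ hA, integral_eq_lintegral_of_nonneg_ae
      (Eventually.of_forall (hf0 ω)) (hf ω).aestronglyMeasurable]
  set K : ℝ := (Fintype.card Ω : ℝ) with hK
  have hKpos : 0 < K := by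
    rw [hK]; exact_mod_cast Fintype.card_pos
  set S := (K ^ 2)⁻¹ * ∑ ω, ∑ ω', c ω ω' with hS
  let Lb : X → ℝ := fun x => K⁻¹ * ∑ ω, f ω x
  have hLi : Integrable Lb G := (integrable_finsetSum _ fun ω _ => hi1 ω).const_mul _
  have hL1 : ∫ x, Lb x ∂G = 1 := by
    simp only [Lb]
    rw [integral_const_mul, integral_finsetSum _ fun ω _ => hi1 ω]
    simp only [hI1]
    simp [← hK, hKpos.ne']
  have hLA : ∫ x in A, Lb x ∂G ≤ α := by
    simp only [Lb]
    rw [integral_const_mul, integral_finsetSum _ fun ω _ => (hi1 ω).integrableOn]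
    have : ∑ ω, ∫ x in A, f ω x ∂G ≤ ∑ _ω : Ω, α := Finset.sum_le_sum fun ω _ => hα' ω
    rw [Finset.sum_const, nsmul_eq_mul, Finset.card_univ, ← hK] at this
    rw [inv_mul_le_iff₀ hKpos]
    exact this
  have hsq : ∀ x, Lb x * Lb x = (K ^ 2)⁻¹ * ∑ ω, ∑ ω', f ω x * f ω' x := by
    intro x
    simp only [Lb]
    rw [← Finset.sum_mul_sum]
    field_simp
  have hL2i : Integrable (fun x => Lb x * Lb x) G := by
    simp only [hsq]
    exact (integrable_finsetSum _ fun ω _ => integrable_finsetSum _ fun ω' _ =>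
      hi2 ω ω').const_mul _
  have hL2 : ∫ x, Lb x * Lb x ∂G = S := by
    simp only [hsq]
    rw [integral_const_mul, integral_finsetSum _ fun ω _ => integrable_finsetSum _ fun ω' _ =>
      hi2 ω ω']
    congr 1
    refine Finset.sum_congr rfl fun ω _ => ?_
    rw [integral_finsetSum _ fun ω' _ => hi2 ω ω']
    simp only [hI2]
  let g : X → ℝ := fun x => 1 - Lb x
  have hgi : Integrable g G := (integrable_const _).sub hLi
  have hg0 : ∫ x, g x ∂G = 0 := by
    simp only [g]
    rw [integral_sub (integrable_const _) hLi, hL1]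
    simp
  have hgsq : ∀ x, g x * g x = 1 - 2 * Lb x + Lb x * Lb x := by
    intro x; simp only [g]; ring
  have hi12 : Integrable (fun x => 1 - 2 * Lb x) G := (integrable_const _).sub (hLi.const_mul 2)
  have hg2i : Integrable (fun x => g x * g x) G := by
    simp only [hgsq]
    exact hi12.add hL2i
  have hg2 : ∫ x, g x * g x ∂G = -1 + S := by
    simp only [hgsq]
    rw [integral_add hi12 hL2i, integral_sub (integrable_const _) (hLi.const_mul 2),
      integral_const_mul, hL1, hL2]
    simp
    ring
  set m := ∫ x, |g x| ∂G with hm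
  have hm2 : m ^ 2 ≤ -1 + S := by
    have h0 : 0 ≤ ∫ x, (|g x| - m) ^ 2 ∂G := integral_nonneg fun x => sq_nonneg _
    have e : ∀ x, (|g x| - m) ^ 2 = (g x * g x - (2 * m) * |g x|) + m ^ 2 := by
      intro x
      have := abs_mul_abs_self (g x)
      rw [← this]; ring
    simp only [e] at h0
    have hi3 : Integrable (fun x => g x * g x - (2 * m) * |g x|) G :=
      hg2i.sub (hgi.abs.const_mul _)
    rw [integral_add hi3 (integrable_const _),
      integral_sub hg2i (hgi.abs.const_mul _), integral_const_mul, ← hm, hg2] at h0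
    simp at h0
    nlinarith
  have hms : m ≤ Real.sqrt (-1 + S) := Real.le_sqrt_of_sq_le hm2
  have hGA : (G A).toReal = ∫ x in A, (1 : ℝ) ∂G := by simp [Measure.real]
  have hAg : ∫ x in A, g x ∂G ≤ (1 / 2) * m := by
    have h1 : ∫ x in A, g x ∂G = ∫ x, A.indicator g x - (1 / 2) * g x ∂G := by
      rw [integral_sub (hgi.indicator hA) (hgi.const_mul _), integral_const_mul, hg0,
        integral_indicator hA]
      simp
    rw [h1, hm, ← integral_const_mul]
    refine integral_mono ((hgi.indicator hA).sub (hgi.const_mul _)) (hgi.abs.const_mul _)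
      fun x => ?_
    by_cases hx : x ∈ A
    · simp only [Set.indicator_of_mem hx]
      linarith [le_abs_self (g x)]
    · simp only [Set.indicator_of_notMem hx]
      linarith [neg_abs_le (g x)]
  have hsplit : ∫ x in A, g x ∂G = (G A).toReal - ∫ x in A, Lb x ∂G := by
    rw [hGA]
    exact integral_sub (integrable_const _) hLi.integrableOn
  linarith
lemma test_bound_n {N M dX dY : ℕ} (n : ℕ) (hX : dX ≤ N) (hY : dY ≤ N) (al be κ : Fin N → ℝ)
    (hκ0 : ∀ k, 0 ≤ κ k) (hκ : ∀ k, κ k < 1) (hab : ∀ k, al k ^ 2 * (1 - κ k) = be k ^ 2)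
    {Ω : Type*} [Fintype Ω] [Nonempty Ω] (a : Ω → Fin N → Fin M → ℝ) (t : Ω → Ω → Fin N → ℝ)
    (ht : ∀ ω ω' k, |t ω ω' k| ≤ 1)
    (haa : ∀ ω k k', ∑ l, a ω k l * a ω k' l = if k = k' then κ k else 0)
    (hcr : ∀ ω ω' k k', ∑ l, a ω k l * a ω' k' l = if k = k' then κ k * t ω ω' k else 0)
    (B : Set (Fin n → (Fin dX → ℝ) × (Fin dY → ℝ) × (Fin M → ℝ))) (hB : MeasurableSet B) (α : ℝ)
    (hα : ∀ ω, ((Measure.pi fun _ : Fin n => (baseG N M).map (nullT hX hY al be (a ω))) B).toReal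
      ≤ α) :
    ((Measure.pi fun _ : Fin n => (baseG N M).map (altT hX hY al be)) B).toReal ≤
      α + (1 / 2) * Real.sqrt (-1 + ((Fintype.card Ω : ℝ) ^ 2)⁻¹ *
        ∑ ω, ∑ ω', (∏ k, (1 - κ k * t ω ω' k)⁻¹) ^ n) := by
  have hTm : Measurable (altT (M := M) hX hY al be) := by fun_prop
  set T : (Fin n → ((Fin M → ℝ) × (Fin N → ℝ)) × (Fin N → ℝ)) →
    (Fin n → (Fin dX → ℝ) × (Fin dY → ℝ) × (Fin M → ℝ)) :=
    fun x i => altT hX hY al be (x i) with hT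
  have hTTm : Measurable T := by
    refine measurable_pi_lambda _ fun i => hTm.comp (measurable_pi_apply i)
  have hdm : ∀ ω, Measurable (fun x => ENNReal.ofReal (dens κ (a ω) x)) :=
    fun ω => (measurable_dens κ (a ω)).ennreal_ofReal
  have hprob : ∀ ω, IsProbabilityMeasure
      ((baseG N M).withDensity (fun x => ENNReal.ofReal (dens κ (a ω) x))) := by
    intro ω
    rw [← map_shiftM κ hκ (a ω)]
    exact Measure.isProbabilityMeasure_map (by fun_prop)
  have hpos : ∀ ω ω' k, 0 < 1 - κ k * t ω ω' k := by
    intro ω ω' k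
    have h1 := (abs_le.mp (ht ω ω' k)).2
    nlinarith [hκ0 k, hκ k]
  have halt : ∀ ν : Measure (((Fin M → ℝ) × (Fin N → ℝ)) × (Fin N → ℝ)),
      IsProbabilityMeasure ν → (Measure.pi fun _ : Fin n => ν.map (altT hX hY al be)) =
        (Measure.pi fun _ : Fin n => ν).map T := by
    intro ν hν
    rw [hT, ← Measure.pi_map_pi fun _ => hTm.aemeasurable]
  rw [halt _ inferInstance, Measure.map_apply hTTm hB]
  have hofprod : ∀ ω (x : Fin n → ((Fin M → ℝ) × (Fin N → ℝ)) × (Fin N → ℝ)),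
      ENNReal.ofReal (∏ i, dens κ (a ω) (x i)) = ∏ i, ENNReal.ofReal (dens κ (a ω) (x i)) :=
    fun ω x => ENNReal.ofReal_prod_of_nonneg fun _ _ => dens_nonneg _ _ _
  refine test_bound (Measure.pi fun _ : Fin n => baseG N M)
    (fun ω x => ∏ i, dens κ (a ω) (x i)) (fun ω => ?_) (fun ω x => ?_)
    (fun ω ω' => (∏ k, (1 - κ k * t ω ω' k)⁻¹) ^ n) (fun ω ω' => ?_) (fun ω => ?_)
    (fun ω ω' => ?_) (T ⁻¹' B) (hTTm hB) α (fun ω => ?_)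
  · exact Finset.measurable_fun_prod _ fun i _ =>
      (measurable_dens κ (a ω)).comp (measurable_pi_apply i)
  · exact Finset.prod_nonneg fun _ _ => dens_nonneg _ _ _
  · exact pow_nonneg (Finset.prod_nonneg fun k _ => (inv_pos.mpr (hpos ω ω' k)).le) _
  · simp only [hofprod]
    rw [lintegral_pi_prod (fun _ : Fin n => baseG N M) _ fun _ => hdm ω]
    refine Finset.prod_eq_one fun i _ => ?_
    have := (hprob ω).measure_univ
    rwa [withDensity_apply _ .univ, Measure.restrict_univ] at this
  · simp only [hofprod, ← Finset.prod_mul_distrib]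
    rw [lintegral_pi_prod (fun _ : Fin n => baseG N M)
      (fun _ x => ENNReal.ofReal (dens κ (a ω) x) * ENNReal.ofReal (dens κ (a ω') x))
      fun _ => (hdm ω).mul (hdm ω')]
    rw [chi_one κ (t ω ω') hκ0 hκ (ht ω ω') (a ω) (a ω') (haa ω) (haa ω') (hcr ω ω')]
    rw [Finset.prod_const, Finset.card_univ, Fintype.card_fin, ← ENNReal.ofReal_prod_of_nonneg
      fun k _ => (inv_pos.mpr (hpos ω ω' k)).le, ENNReal.ofReal_pow
      (Finset.prod_nonneg fun k _ => (inv_pos.mpr (hpos ω ω' k)).le)]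
  · have h := hα ω
    rw [map_nullT_eq hX hY al be κ (a ω) hκ hab, map_shiftM κ hκ (a ω), halt _ (hprob ω),
      Measure.map_apply hTTm hB] at h
    have h2 := hprob ω
    rw [pi_withDensity' (fun _ : Fin n => baseG N M)
      (fun _ x => ENNReal.ofReal (dens κ (a ω) x)) fun _ => hdm ω] at h
    simp only [hofprod]
    exact h
/-- sign of a boolean -/
def sg (b : Bool) : ℝ := if b then 1 else -1

/-- extension by zero -/
def ext0 {r N : ℕ} (u : Fin r → ℝ) : Fin N → ℝ :=
  fun k => if h : (k : ℕ) < r then u ⟨k, h⟩ else 0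

lemma ext0_castLE {r N : ℕ} (h : r ≤ N) (u : Fin r → ℝ) (i : Fin r) :
    ext0 u (Fin.castLE h i) = u i := by
  simp [ext0]

lemma ext0_of_notMem {r N : ℕ} (h : r ≤ N) (u : Fin r → ℝ) (k : Fin N)
    (hk : k ∉ Set.range (Fin.castLE h)) : ext0 u k = 0 := by
  unfold ext0
  split_ifs with h'
  · exact absurd ⟨⟨k, h'⟩, by ext; simp⟩ hk
  · rfl

lemma sum_castLE {r N : ℕ} (h : r ≤ N) (u : Fin r → ℝ) (k : Fin N) :
    ∑ i, (if Fin.castLE h i = k then u i else 0) = ext0 u k := by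
  by_cases hk : k ∈ Set.range (Fin.castLE h)
  · obtain ⟨i, rfl⟩ := hk
    rw [ext0_castLE]
    simp [Fin.castLE_inj]
  · rw [ext0_of_notMem h u k hk]
    refine Finset.sum_eq_zero fun i _ => ?_
    rw [if_neg]
    intro h'
    exact hk ⟨i, h'⟩

/-- agreement count -/
def agr {d : ℕ} (u v : Fin d → Bool) : ℕ := (Finset.univ.filter fun j => u j = v j).card

/-- normalized correlation -/
def corr {d : ℕ} (u v : Fin d → Bool) : ℝ := 2 * (agr u v : ℝ) / d - 1

lemma agr_le {d : ℕ} (u v : Fin d → Bool) : agr u v ≤ d := by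
  have := Finset.card_filter_le (Finset.univ : Finset (Fin d)) (fun j => u j = v j)
  simpa [agr] using this

lemma sum_sg {d : ℕ} (hd : d ≠ 0) (u v : Fin d → Bool) :
    ∑ j, sg (u j) * sg (v j) = d * corr u v := by
  have e : ∀ j, sg (u j) * sg (v j) = 2 * (if u j = v j then (1:ℝ) else 0) - 1 := by
    intro j
    cases u j <;> cases v j <;> simp [sg] <;> norm_num
  simp only [e]
  rw [Finset.sum_sub_distrib, ← Finset.mul_sum, Finset.sum_boole]
  have : (d : ℝ) ≠ 0 := by exact_mod_cast hd
  simp only [corr, agr, Finset.sum_const, Finset.card_univ, Fintype.card_fin, nsmul_eq_mul, mul_one]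
  field_simp

lemma corr_self {d : ℕ} (hd : d ≠ 0) (u : Fin d → Bool) : corr u u = 1 := by
  have : (d : ℝ) ≠ 0 := by exact_mod_cast hd
  simp [corr, agr]
  field_simp
  norm_num

lemma abs_corr_le {d : ℕ} (hd : d ≠ 0) (u v : Fin d → Bool) : |corr u v| ≤ 1 := by
  have h : (0 : ℝ) < d := by exact_mod_cast Nat.pos_of_ne_zero hd
  have h1 : (agr u v : ℝ) ≤ d := by exact_mod_cast agr_le u v
  have h2 : (0 : ℝ) ≤ agr u v := by positivity
  have h3 : 2 * (agr u v : ℝ) / d ≤ 2 := by rw [div_le_iff₀ h]; linarith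
  have h4 : 0 ≤ 2 * (agr u v : ℝ) / d := by positivity
  rw [abs_le, corr]
  constructor <;> linarith

/-- the sign vectors -/
def sgnVec {r N M d : ℕ} (hN : r ≤ N) (hM : r * d ≤ M) (κ : Fin r → ℝ)
    (ω : Fin r → Fin d → Bool) (k : Fin N) (l : Fin M) : ℝ :=
  ∑ p : Fin r × Fin d, if Fin.castLE hM (finProdFinEquiv p) = l then
    (if Fin.castLE hN p.1 = k then Real.sqrt (κ p.1 / d) * sg (ω p.1 p.2) else 0) else 0

lemma sgnVec_gram {r N M d : ℕ} (hN : r ≤ N) (hM : r * d ≤ M) (κ : Fin r → ℝ)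
    (hκ : ∀ i, 0 ≤ κ i) (hd : Fin r → d ≠ 0) (ω ω' : Fin r → Fin d → Bool) (k k' : Fin N) :
    ∑ l, sgnVec hN hM κ ω k l * sgnVec hN hM κ ω' k' l =
      if k = k' then ext0 κ k * ext0 (fun i => corr (ω i) (ω' i)) k else 0 := by
  have h1 : ∀ l : Fin M, sgnVec hN hM κ ω k l * sgnVec hN hM κ ω' k' l =
      ∑ p : Fin r × Fin d, ∑ p' : Fin r × Fin d,
        if Fin.castLE hM (finProdFinEquiv p) = l then
          (if Fin.castLE hM (finProdFinEquiv p') = l then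
            (if Fin.castLE hN p.1 = k then Real.sqrt (κ p.1 / d) * sg (ω p.1 p.2) else 0) *
            (if Fin.castLE hN p'.1 = k' then Real.sqrt (κ p'.1 / d) * sg (ω' p'.1 p'.2) else 0)
            else 0) else 0 := by
    intro l
    unfold sgnVec
    rw [Finset.sum_mul_sum]
    refine Finset.sum_congr rfl fun p _ => Finset.sum_congr rfl fun p' _ => ?_
    split_ifs <;> simp
  simp only [h1]
  rw [Finset.sum_comm]
  have h2 : ∀ p : Fin r × Fin d, (∑ l : Fin M, ∑ p' : Fin r × Fin d,
        if Fin.castLE hM (finProdFinEquiv p) = l then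
          (if Fin.castLE hM (finProdFinEquiv p') = l then
            (if Fin.castLE hN p.1 = k then Real.sqrt (κ p.1 / d) * sg (ω p.1 p.2) else 0) *
            (if Fin.castLE hN p'.1 = k' then Real.sqrt (κ p'.1 / d) * sg (ω' p'.1 p'.2) else 0)
            else 0) else 0) =
      (if Fin.castLE hN p.1 = k then Real.sqrt (κ p.1 / d) * sg (ω p.1 p.2) else 0) *
            (if Fin.castLE hN p.1 = k' then Real.sqrt (κ p.1 / d) * sg (ω' p.1 p.2) else 0) := by
    intro p
    rw [Finset.sum_comm, Finset.sum_eq_single p]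
    · simp
    · intro p' _ hp
      simp only [Finset.sum_ite_eq, Finset.mem_univ, if_true]
      rw [if_neg]
      rw [Fin.castLE_inj]
      simpa using hp
    · simp
  simp only [h2]
  by_cases hk : k = k'
  · subst hk
    rw [if_pos rfl, Fintype.sum_prod_type]
    have h3 : ∀ i : Fin r, ∑ j : Fin d,
        (if Fin.castLE hN i = k then Real.sqrt (κ i / d) * sg (ω i j) else 0) *
            (if Fin.castLE hN i = k then Real.sqrt (κ i / d) * sg (ω' i j) else 0) =
        if Fin.castLE hN i = k then κ i * corr (ω i) (ω' i) else 0 := by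
      intro i
      by_cases h : Fin.castLE hN i = k
      · simp only [if_pos h]
        have hd0 : (0:ℝ) < d := by exact_mod_cast Nat.pos_of_ne_zero (hd i)
        have : ∀ j, Real.sqrt (κ i / d) * sg (ω i j) * (Real.sqrt (κ i / d) * sg (ω' i j)) =
            κ i / d * (sg (ω i j) * sg (ω' i j)) := by
          intro j
          have := Real.mul_self_sqrt (div_nonneg (hκ i) hd0.le)
          calc _ = (Real.sqrt (κ i / d) * Real.sqrt (κ i / d)) * (sg (ω i j) * sg (ω' i j)) := by
                ring
            _ = _ := by rw [this]
        simp only [this]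
        rw [← Finset.mul_sum, sum_sg (hd i)]
        field_simp
      · simp [h]
    simp only [h3]
    rw [sum_castLE hN (fun i => κ i * corr (ω i) (ω' i)) k]
    unfold ext0
    split_ifs <;> simp
  · rw [if_neg hk]
    refine Finset.sum_eq_zero fun p _ => ?_
    by_cases h : Fin.castLE hN p.1 = k
    · rw [if_neg (show ¬ Fin.castLE hN p.1 = k' from fun h' => hk (h.symm.trans h')), mul_zero]
    · rw [if_neg h, zero_mul]

lemma sum_agr {d : ℕ} (u : Fin d → Bool) (F : ℕ → ℝ) :
    ∑ v, F (agr u v) = ∑ k ∈ Finset.range (d + 1), (d.choose k : ℝ) * F k := by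
  have h := Finset.sum_powerset_apply_card F (x := (Finset.univ : Finset (Fin d)))
  rw [Finset.card_univ, Fintype.card_fin, Finset.powerset_univ] at h
  simp only [nsmul_eq_mul] at h
  rw [← h]
  refine Finset.sum_bij' (fun v _ => Finset.univ.filter fun j => u j = v j)
    (fun s _ => fun j => if j ∈ s then u j else !(u j)) ?_ ?_ ?_ ?_ ?_
  · simp
  · simp
  · intro v _
    ext j
    by_cases hj : u j = v j
    · simp [hj]
    · simp [hj]
      cases hu : u j <;> cases hv : v j <;> simp_all
  · intro s _
    ext j
    by_cases hj : j ∈ s <;> simp [hj]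
  · intro v _
    rfl

lemma sum_sum_pi {r : ℕ} {A : Type*} [Fintype A] [DecidableEq A] (g : Fin r → A → A → ℝ) :
    ∑ ω : Fin r → A, ∑ ω' : Fin r → A, ∏ i, g i (ω i) (ω' i) = ∏ i, ∑ u, ∑ v, g i u v := by
  rw [Finset.prod_univ_sum, Fintype.piFinset_univ]
  refine Finset.sum_congr rfl fun ω _ => ?_
  rw [Finset.prod_univ_sum, Fintype.piFinset_univ]

lemma chi_sum {r N d n : ℕ} (hN : r ≤ N) (hd : Fin r → d ≠ 0) (ρ : Fin r → ℝ)
    (hρ : ∀ i, ρ i ∈ Set.Ioo (0 : ℝ) 1) :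
    ((Fintype.card (Fin r → Fin d → Bool) : ℝ) ^ 2)⁻¹ *
      ∑ ω : Fin r → Fin d → Bool, ∑ ω' : Fin r → Fin d → Bool,
        (∏ k : Fin N, (1 - ext0 (fun i => 2 * ρ i / (1 + ρ i)) k *
          ext0 (fun i => corr (ω i) (ω' i)) k)⁻¹) ^ n =
      ∏ i : Fin r, ((1 + ρ i) ^ n *
        ∑ k ∈ Finset.range (d + 1),
          (d.choose k : ℝ) / ((2 : ℝ) ^ d * (1 + (3 - 4 * (k : ℝ) / (d : ℝ)) * ρ i) ^ n)) := by
  have h1 : ∀ ω ω' : Fin r → Fin d → Bool,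
      (∏ k : Fin N, (1 - ext0 (fun i => 2 * ρ i / (1 + ρ i)) k *
          ext0 (fun i => corr (ω i) (ω' i)) k)⁻¹) ^ n =
      ∏ i : Fin r, ((1 - 2 * ρ i / (1 + ρ i) * corr (ω i) (ω' i))⁻¹) ^ n := by
    intro ω ω'
    rw [Finset.prod_pow]
    congr 1
    symm
    refine Fintype.prod_of_injective (Fin.castLE hN) (Fin.castLE_injective hN) _ _ ?_ ?_
    · intro k hk
      rw [ext0_of_notMem hN _ k hk]
      simp
    · intro i
      rw [ext0_castLE, ext0_castLE]
  simp only [h1]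
  rw [sum_sum_pi (fun i u v => ((1 - 2 * ρ i / (1 + ρ i) * corr u v)⁻¹) ^ n)]
  have hcard : (Fintype.card (Fin r → Fin d → Bool) : ℝ) = ((2:ℝ) ^ d) ^ r := by simp
  rw [hcard, ← pow_mul, mul_comm r 2, pow_mul, ← inv_pow]
  have hc : ((((2:ℝ) ^ d) ^ 2)⁻¹) ^ r = ∏ _i : Fin r, (((2:ℝ) ^ d) ^ 2)⁻¹ := by simp
  rw [hc, ← Finset.prod_mul_distrib]
  refine Finset.prod_congr rfl fun i _ => ?_
  obtain ⟨h0, _⟩ := hρ i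
  have h2 : ∀ u : Fin d → Bool, ∑ v, ((1 - 2 * ρ i / (1 + ρ i) * corr u v)⁻¹) ^ n =
      ∑ k ∈ Finset.range (d + 1), (d.choose k : ℝ) *
        ((1 - 2 * ρ i / (1 + ρ i) * (2 * (k : ℝ) / d - 1))⁻¹) ^ n := by
    intro u
    exact sum_agr u (fun k => ((1 - 2 * ρ i / (1 + ρ i) * (2 * (k : ℝ) / d - 1))⁻¹) ^ n)
  simp only [h2]
  rw [Finset.sum_const, Finset.card_univ, nsmul_eq_mul]
  have hcard' : ((Fintype.card (Fin d → Bool) : ℕ) : ℝ) = (2:ℝ) ^ d := by simp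
  rw [hcard', Finset.mul_sum, Finset.mul_sum, Finset.mul_sum]
  refine Finset.sum_congr rfl fun k _ => ?_
  have h3 : (1 - 2 * ρ i / (1 + ρ i) * (2 * (k : ℝ) / d - 1))⁻¹ =
      (1 + ρ i) / (1 + (3 - 4 * (k : ℝ) / (d : ℝ)) * ρ i) := by
    have : 1 + ρ i ≠ 0 := by positivity
    have hdd : (d : ℝ) ≠ 0 := by exact_mod_cast hd i
    have e : 1 - 2 * ρ i / (1 + ρ i) * (2 * (k : ℝ) / d - 1) =
        (1 + (3 - 4 * (k : ℝ) / (d : ℝ)) * ρ i) / (1 + ρ i) := by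
      field_simp
      ring
    rw [e, inv_div]
  rw [h3, div_pow]
  have h4 : (2:ℝ) ^ d ≠ 0 := by positivity
  rw [← div_div, pow_two, mul_inv]
  field_simp
/-- Multivariate power bound for Gaussian conditional independence testing against a simple
alternative `q` on `ℝ^{d_X} × ℝ^{d_Y} × ℝ^{d_Z}` whose cross-covariance of `X` and `Y` is the
rectangular diagonal matrix with entries `ρ_1, …, ρ_r`, `r = min(d_X, d_Y)`. -/
theorem gaussian_ci_multivariate_power_bound
    (n dX dY dZ r d : ℕ) (hr : r = min dX dY) (hdZ : r ≤ dZ) (hd : d = dZ / r)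
    (ρ : Fin r → ℝ) (hρ : ∀ i, ρ i ∈ Set.Ioo (0 : ℝ) 1) (α : ℝ)
    (q : Measure ((Fin dX → ℝ) × (Fin dY → ℝ) × (Fin dZ → ℝ)))
    (hqprob : IsProbabilityMeasure q) (hqgauss : IsGaussianMeasure q)
    (hmX : ∀ i, ∫ ω, ω.1 i ∂q = 0) (hmY : ∀ j, ∫ ω, ω.2.1 j ∂q = 0)
    (hmZ : ∀ l, ∫ ω, ω.2.2 l ∂q = 0)
    (hXX : ∀ i i', ∫ ω, ω.1 i * ω.1 i' ∂q = if i = i' then 1 else 0)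
    (hYY : ∀ j j', ∫ ω, ω.2.1 j * ω.2.1 j' ∂q = if j = j' then 1 else 0)
    (hZZ : ∀ l l', ∫ ω, ω.2.2 l * ω.2.2 l' ∂q = if l = l' then 1 else 0)
    (hXZ : ∀ i l, ∫ ω, ω.1 i * ω.2.2 l ∂q = 0)
    (hYZ : ∀ j l, ∫ ω, ω.2.1 j * ω.2.2 l ∂q = 0)
    (hXY : ∀ (i : Fin dX) (j : Fin dY), ∫ ω, ω.1 i * ω.2.1 j ∂q =
      if h : (i : ℕ) = (j : ℕ) then ρ ⟨(i : ℕ), hr ▸ lt_min i.isLt (h.trans_lt j.isLt)⟩ else 0)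
    (ψ : (Fin n → (Fin dX → ℝ) × (Fin dY → ℝ) × (Fin dZ → ℝ)) → Bool) (hψ : Measurable ψ)
    (hsize : ∀ p : Measure ((Fin dX → ℝ) × (Fin dY → ℝ) × (Fin dZ → ℝ)),
      IsProbabilityMeasure p → IsGaussianMeasure p → HasInjectiveCovariance p →
      CondIndepGiven p (fun ω => ω.1) (fun ω => ω.2.1) (fun ω => ω.2.2) →
      p.map (fun ω => ω.2.2) = Measure.pi (fun _ : Fin dZ => gaussianReal 0 1) →
      ((Measure.pi fun _ : Fin n => p) {x | ψ x = true}).toReal ≤ α) :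
    ((Measure.pi fun _ : Fin n => q) {x | ψ x = true}).toReal ≤
      α + (1 / 2) * Real.sqrt (-1 + ∏ i : Fin r, ((1 + ρ i) ^ n *
        ∑ k ∈ Finset.range (d + 1),
          (d.choose k : ℝ) / ((2 : ℝ) ^ d * (1 + (3 - 4 * (k : ℝ) / (d : ℝ)) * ρ i) ^ n))) := by
  set N := max dX dY with hNdef
  have hX : dX ≤ N := le_max_left _ _
  have hY : dY ≤ N := le_max_right _ _
  have hrX : r ≤ dX := by rw [hr]; exact min_le_left _ _
  have hrN : r ≤ N := hrX.trans hX
  have hM : r * d ≤ dZ := by rw [hd]; exact Nat.mul_div_le dZ r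
  have hd0 : Fin r → d ≠ 0 := by
    intro i
    have hrpos : 0 < r := lt_of_le_of_lt (Nat.zero_le _) i.isLt
    rw [hd]
    exact (Nat.div_pos hdZ hrpos).ne'
  let ρ' : Fin N → ℝ := ext0 ρ
  have hρ' : ∀ k, 0 ≤ ρ' k ∧ ρ' k < 1 := by
    intro k
    simp only [ρ', ext0]
    split_ifs with h
    · exact ⟨(hρ _).1.le, (hρ _).2⟩
    · exact ⟨le_rfl, one_pos⟩
  let al : Fin N → ℝ := fun k => Real.sqrt ((1 + ρ' k) / 2)
  let be : Fin N → ℝ := fun k => Real.sqrt ((1 - ρ' k) / 2)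
  let κ₀ : Fin r → ℝ := fun i => 2 * ρ i / (1 + ρ i)
  let κ : Fin N → ℝ := ext0 κ₀
  have hal : ∀ k, al k ^ 2 = (1 + ρ' k) / 2 := fun k =>
    Real.sq_sqrt (by linarith [(hρ' k).1])
  have hbe : ∀ k, be k ^ 2 = (1 - ρ' k) / 2 := fun k =>
    Real.sq_sqrt (by linarith [(hρ' k).2])
  have hbe0 : ∀ k, be k ≠ 0 := fun k =>
    (Real.sqrt_pos.mpr (by linarith [(hρ' k).2])).ne'
  have hκeq : ∀ k, κ k = 2 * ρ' k / (1 + ρ' k) := by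
    intro k
    simp only [κ, κ₀, ρ', ext0]
    split_ifs <;> simp
  have hκ₀ : ∀ i, 0 ≤ κ₀ i := fun i => by
    have := (hρ i).1
    simp only [κ₀]; positivity
  have hκ0 : ∀ k, 0 ≤ κ k := fun k => by
    have := (hρ' k).1
    rw [hκeq]; positivity
  have hκ1 : ∀ k, κ k < 1 := fun k => by
    have h1 := (hρ' k).1
    have h2 := (hρ' k).2
    rw [hκeq, div_lt_one (by linarith)]
    linarith
  have hab : ∀ k, al k ^ 2 * (1 - κ k) = be k ^ 2 := by
    intro k
    have h1 := (hρ' k).1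
    have h3 : 1 + ρ' k ≠ 0 := by positivity
    rw [hal, hbe, hκeq]
    field_simp
    ring
  have hq : q = (baseG N dZ).map (altT hX hY al be) := by
    refine q_eq hX hY al be ρ' (fun k => ?_) (fun k => ?_) q hqgauss hmX hmY hmZ hXX hYY hZZ hXZ hYZ
      (fun i j => ?_)
    · rw [hal, hbe]; ring
    · rw [hal, hbe]; ring
    · rw [hXY i j]
      by_cases h : (i : ℕ) = (j : ℕ)
      · have hc : Fin.castLE hX i = Fin.castLE hY j := by
          ext; simpa using h
        rw [dif_pos h, if_pos hc]
        have hir : (i : ℕ) < r := hr ▸ lt_min i.isLt (h.trans_lt j.isLt)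
        simp [ρ', ext0, hir]
      · have hc : ¬ Fin.castLE hX i = Fin.castLE hY j := by
          intro hc
          apply h
          simpa using congrArg Fin.val hc
        rw [dif_neg h, if_neg hc]
  have hB : MeasurableSet {x | ψ x = true} := hψ (measurableSet_singleton true)
  have hgram := sgnVec_gram hrN hM κ₀ hκ₀ hd0
  have main := test_bound_n (M := dZ) n hX hY al be κ hκ0 hκ1 hab
    (Ω := Fin r → Fin d → Bool) (sgnVec hrN hM κ₀)
    (fun ω ω' => ext0 (fun i => corr (ω i) (ω' i)))
    (fun ω ω' k => by
      simp only [ext0]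
      split_ifs with h
      · exact abs_corr_le (hd0 ⟨k, h⟩) _ _
      · simp)
    (fun ω k k' => by
      rw [hgram]
      by_cases hk : k = k'
      · simp only [if_pos hk, κ, ext0]
        split_ifs with h
        · rw [corr_self (hd0 ⟨k, h⟩), mul_one]
        · simp
      · simp only [if_neg hk])
    (fun ω ω' k k' => hgram ω ω' k k')
    {x | ψ x = true} hB α
    (fun ω => by
      refine hsize _ (Measure.isProbabilityMeasure_map (by fun_prop))
        (gaussianMeasure_of_isGaussian _) (nullT_inj hX hY al be _ hbe0)
        (nullT_condIndep hX hY al be _) (nullT_Z hX hY al be _))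
  rw [hq]
  rw [chi_sum hrN hd0 ρ hρ] at main
  exact main
end
end

section
/- Let d_X, d_Y ∈ ℕ and let H_Z be an infinite-dimensional separable Hilbert space. Let 𝒫 be the family of distributions of triples (X, Y, Z) with values in ℝ^{d_X} × ℝ^{d_Y} × H_Z that are jointly Gaussian with injective covariance operator, let 𝒫₀ ⊆ 𝒫 be the subset under which X ⊥⊥ Y | Z, let 𝒬 = 𝒫 \ 𝒫₀, fix Q ∈ 𝒬, and let 𝒫₀^Q = {P ∈ 𝒫₀ : the marginal distribution of Z under P equals that under Q}. Then for every n ∈ ℕ, every α ∈ [0, 1] and every measurable test ψ : (ℝ^{d_X} × ℝ^{d_Y} × H_Z)^n → {0, 1} with sup_{P ∈ 𝒫₀^Q} P^{⊗n}(ψ = 1) ≤ α, one has Q^{⊗n}(ψ = 1) ≤ α. -/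
open MeasureTheory ProbabilityTheory Filter
open scoped ENNReal NNReal RealInnerProductSpace

noncomputable section

open scoped Matrix.Norms.L2Operator MatrixOrder in
lemma tendsto_sqrt_one {I : Type*} [Fintype I] [DecidableEq I] (S : ℕ → Matrix I I ℝ)
    (hS : ∀ N, (S N).PosSemidef) (hlim : Tendsto S atTop (nhds 1)) :
    Tendsto (fun N => CFC.sqrt (S N)) atTop (nhds 1) := by
  have h1 := (CFC.continuousOn_sqrt (A := Matrix I I ℝ)) 1 (by
    show (0 : Matrix I I ℝ) ≤ 1
    exact Matrix.nonneg_iff_posSemidef.2 Matrix.PosSemidef.one)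
  have h2 : Tendsto S atTop (nhdsWithin 1 {a | 0 ≤ a}) :=
    tendsto_nhdsWithin_iff.2 ⟨hlim, Eventually.of_forall fun N =>
      Matrix.nonneg_iff_posSemidef.2 (hS N)⟩
  have h3 := h1.tendsto.comp h2
  rw [CFC.sqrt_one] at h3
  exact h3

/-- density of the standard Gaussian -/
def stdDens {I : Type*} [Fintype I] (x : I → ℝ) : ℝ≥0∞ := ∏ i, gaussianPDF 0 1 (x i)

lemma stdDens_continuous {I : Type*} [Fintype I] : Continuous (stdDens (I := I)) := by
  have : (stdDens (I := I)) = fun x => ENNReal.ofReal (∏ i, gaussianPDFReal 0 1 (x i)) := by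
    ext x
    rw [stdDens, ENNReal.ofReal_prod_of_nonneg (fun i _ => gaussianPDFReal_nonneg _ _ _)]
    rfl
  rw [this]
  have h : Continuous (gaussianPDFReal 0 1) := by
    unfold gaussianPDFReal
    fun_prop
  exact ENNReal.continuous_ofReal.comp (by fun_prop)

lemma pi_gaussian_withDensity {I : Type*} [Fintype I] :
    Measure.pi (fun _ : I => gaussianReal 0 1) = (volume : Measure (I → ℝ)).withDensity stdDens := by
  refine Measure.pi_eq (μ := fun _ : I => gaussianReal 0 1) fun s hs => ?_
  rw [withDensity_apply _ (MeasurableSet.univ_pi hs), ← lintegral_indicator (MeasurableSet.univ_pi hs)]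
  have h1 : ∀ x : I → ℝ, (Set.univ.pi s).indicator stdDens x
      = ENNReal.ofReal (∏ i, (s i).indicator (gaussianPDFReal 0 1) (x i)) := by
    intro x
    rw [ENNReal.ofReal_prod_of_nonneg
      (fun i _ => Set.indicator_nonneg (fun _ _ => gaussianPDFReal_nonneg _ _ _) _)]
    by_cases hx : x ∈ Set.univ.pi s
    · rw [Set.indicator_of_mem hx, stdDens]
      refine Finset.prod_congr rfl fun i _ => ?_
      rw [Set.indicator_of_mem (hx i (Set.mem_univ i))]
      rfl
    · rw [Set.indicator_of_notMem hx]
      simp only [Set.mem_pi, Set.mem_univ, true_implies, not_forall] at hx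
      obtain ⟨i, hi⟩ := hx
      symm
      apply Finset.prod_eq_zero (Finset.mem_univ i)
      simp [hi]
  have hIntg : ∀ i, Integrable ((s i).indicator (gaussianPDFReal 0 1)) volume :=
    fun i => (integrable_gaussianPDFReal 0 1).indicator (hs i)
  simp_rw [h1]
  rw [volume_pi, ← ofReal_integral_eq_lintegral_ofReal (Integrable.fintype_prod hIntg)
    (Eventually.of_forall fun x => Finset.prod_nonneg fun i _ =>
      Set.indicator_nonneg (fun _ _ => gaussianPDFReal_nonneg _ _ _) _),
    integral_fintype_prod_eq_prod, ENNReal.ofReal_prod_of_nonneg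
      (fun i _ => integral_nonneg fun x => Set.indicator_nonneg (fun _ _ => gaussianPDFReal_nonneg _ _ _) _)]
  refine Finset.prod_congr rfl fun i _ => ?_
  rw [gaussianReal_apply_eq_integral _ one_ne_zero, integral_indicator (hs i)]

lemma stdGaussian_lintegral {I : Type*} [Fintype I] (f : EuclideanSpace ℝ I → ℝ≥0∞)
    (hf : Measurable f) :
    ∫⁻ x, f x ∂(stdGaussian (EuclideanSpace ℝ I))
      = ∫⁻ x : EuclideanSpace ℝ I, stdDens x.ofLp * f x := by
  have hm : Measurable (stdDens (I := I)) := stdDens_continuous.measurable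
  rw [← map_pi_eq_stdGaussian, lintegral_map hf (by fun_prop), pi_gaussian_withDensity,
    lintegral_withDensity_eq_lintegral_mul _ hm (by fun_prop),
    ← (PiLp.volume_preserving_toLp I).lintegral_comp (by fun_prop)]
  rfl

open scoped MatrixOrder in
lemma mvGaussian_lintegral {I : Type*} [Fintype I] [DecidableEq I] (m : EuclideanSpace ℝ I)
    (S : Matrix I I ℝ) (hdet : (CFC.sqrt S).det ≠ 0) (f : EuclideanSpace ℝ I → ℝ≥0∞)
    (hf : Measurable f) :
    ∫⁻ x, f x ∂(multivariateGaussian m S)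
      = ∫⁻ y : EuclideanSpace ℝ I, ENNReal.ofReal |((CFC.sqrt S).det)⁻¹| *
        stdDens ((CFC.sqrt S)⁻¹.mulVec (y - m).ofLp) * f y := by
  have hm : Measurable (stdDens (I := I)) := stdDens_continuous.measurable
  set T := CFC.sqrt S with hT
  have hTu : IsUnit T.det := isUnit_iff_ne_zero.2 hdet
  rw [multivariateGaussian, lintegral_map hf (by fun_prop), ← hT,
    stdGaussian_lintegral _ (by fun_prop)]
  let L : EuclideanSpace ℝ I →ₗ[ℝ] EuclideanSpace ℝ I := (Matrix.toEuclideanCLM (𝕜 := ℝ) T).toLinearMap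
  have hLdet : LinearMap.det L = T.det := by
    simp only [L]
    have : ((Matrix.toEuclideanCLM (𝕜 := ℝ) T : EuclideanSpace ℝ I →L[ℝ] EuclideanSpace ℝ I)).toLinearMap = Matrix.toLpLin 2 2 T := rfl
    rw [this]
    simp
  have key := Measure.map_linearMap_addHaar_eq_smul_addHaar (volume : Measure (EuclideanSpace ℝ I))
    (f := L) (by rw [hLdet]; exact hdet)
  rw [hLdet] at key
  have e1 : ∀ g : EuclideanSpace ℝ I → ℝ≥0∞, Measurable g →
      ∫⁻ x, g (L x) = ENNReal.ofReal |T.det⁻¹| * ∫⁻ y, g y := by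
    intro g hg
    rw [← lintegral_map hg L.continuous_of_finiteDimensional.measurable, key, lintegral_smul_measure]
    rfl
  let g : EuclideanSpace ℝ I → ℝ≥0∞ := fun y => stdDens (T⁻¹.mulVec y.ofLp) * f (m + y)
  have hg : Measurable g := by
    have : Measurable fun y : EuclideanSpace ℝ I => T⁻¹.mulVec y.ofLp := by
      apply Continuous.measurable
      fun_prop
    fun_prop
  have e2 := e1 g hg
  have e3 : ∀ x, g (L x) = stdDens x.ofLp * f (m + (Matrix.toEuclideanCLM (𝕜 := ℝ) T) x) := by
    intro x
    simp only [g, L]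
    congr 2
    show T⁻¹.mulVec (T.mulVec x.ofLp) = x.ofLp
    rw [Matrix.mulVec_mulVec, Matrix.nonsing_inv_mul _ hTu, Matrix.one_mulVec]
  simp_rw [e3] at e2
  rw [e2, ← lintegral_sub_right_eq_self _ m, ← lintegral_const_mul _ (by fun_prop)]
  refine lintegral_congr fun y => ?_
  simp only [g]
  rw [mul_assoc]
  simp

open scoped MatrixOrder in
lemma fatou_gaussian {I : Type*} [Fintype I] [DecidableEq I] (m : ℕ → EuclideanSpace ℝ I)
    (S : ℕ → Matrix I I ℝ) (hS : ∀ N, (S N).PosSemidef) (hlim : Tendsto S atTop (nhds 1))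
    (hm : Tendsto m atTop (nhds 0)) (f : EuclideanSpace ℝ I → ℝ≥0∞)
    (hf : Measurable f) :
    ∫⁻ x, f x ∂(stdGaussian (EuclideanSpace ℝ I))
      ≤ liminf (fun N => ∫⁻ x, f x ∂(multivariateGaussian (m N) (S N))) atTop := by
  have hT := tendsto_sqrt_one S hS hlim
  have hdet : Tendsto (fun N => (CFC.sqrt (S N)).det) atTop (nhds 1) := by
    have : Continuous fun A : Matrix I I ℝ => A.det := by fun_prop
    have := (this.tendsto 1).comp hT
    simpa [Function.comp_def] using this
  have hne : ∀ᶠ N in atTop, (CFC.sqrt (S N)).det ≠ 0 := hdet.eventually_ne one_ne_zero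
  have hinv : Tendsto (fun N => (CFC.sqrt (S N))⁻¹) atTop (nhds 1) := by
    have h1 : Tendsto (fun N => ((CFC.sqrt (S N)).det)⁻¹ • (CFC.sqrt (S N)).adjugate) atTop
        (nhds ((1:ℝ)⁻¹ • (1 : Matrix I I ℝ).adjugate)) := by
      refine (hdet.inv₀ one_ne_zero).smul ?_
      have : Continuous fun A : Matrix I I ℝ => A.adjugate := by fun_prop
      exact (this.tendsto 1).comp hT
    simpa [Matrix.inv_def] using h1
  rw [stdGaussian_lintegral f hf]
  have hsd : Measurable (stdDens (I := I)) := stdDens_continuous.measurable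
  let F : ℕ → EuclideanSpace ℝ I → ℝ≥0∞ := fun N y =>
    ENNReal.ofReal |((CFC.sqrt (S N)).det)⁻¹| *
        stdDens ((CFC.sqrt (S N))⁻¹.mulVec (y - m N).ofLp) * f y
  have hF : ∀ N, Measurable (F N) := by
    intro N
    have : Measurable fun y : EuclideanSpace ℝ I => (CFC.sqrt (S N))⁻¹.mulVec (y - m N).ofLp := by
      apply Continuous.measurable
      fun_prop
    fun_prop
  have hFl : ∀ y, stdDens y.ofLp * f y ≤ liminf (fun N => F N y) atTop := by
    intro y
    have h0 : Tendsto (fun N => (CFC.sqrt (S N))⁻¹.mulVec (y - m N).ofLp) atTop (nhds y.ofLp) := by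
      have hc : Continuous fun p : Matrix I I ℝ × EuclideanSpace ℝ I => p.1.mulVec p.2.ofLp := by
        fun_prop
      have := (hc.tendsto (1, y - 0)).comp (hinv.prodMk_nhds (tendsto_const_nhds.sub hm))
      simpa [Function.comp_def] using this
    have h1 : Tendsto (fun N => ENNReal.ofReal |((CFC.sqrt (S N)).det)⁻¹| *
        stdDens ((CFC.sqrt (S N))⁻¹.mulVec (y - m N).ofLp)) atTop (nhds (1 * stdDens y.ofLp)) := by
      refine ENNReal.Tendsto.mul ?_ (by simp) ((stdDens_continuous.tendsto _).comp h0) (by simp)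
      have := ENNReal.tendsto_ofReal (hdet.inv₀ one_ne_zero).abs
      simpa using this
    rw [one_mul] at h1
    have hy : ∀ᶠ N in atTop, F N y = F N y := Eventually.of_forall fun _ => rfl
    by_cases hft : stdDens y.ofLp = 0
    · simp [hft]
    · exact (ENNReal.Tendsto.mul_const h1 (Or.inl hft)).liminf_eq.ge
  calc ∫⁻ x : EuclideanSpace ℝ I, stdDens x.ofLp * f x
      ≤ ∫⁻ y, liminf (fun N => F N y) atTop := lintegral_mono hFl
    _ ≤ liminf (fun N => ∫⁻ y, F N y) atTop := lintegral_liminf_le hF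
    _ = liminf (fun N => ∫⁻ x, f x ∂(multivariateGaussian (m N) (S N))) atTop := by
      apply liminf_congr
      filter_upwards [hne] with N hN
      rw [mvGaussian_lintegral _ _ hN f hf]


/-- Block covariance matrix. -/
def blockCov {n κ ν : Type*} [Fintype ν] [DecidableEq κ] (x : n → ν → ℝ) :
    Matrix (n × κ) (n × κ) ℝ :=
  Matrix.of fun p q => if p.2 = q.2 then ∑ k, x p.1 k * x q.1 k else 0

lemma blockCov_quad {n κ ν : Type*} [Fintype n] [Fintype κ] [Fintype ν] [DecidableEq κ]
    (x : n → ν → ℝ) (t : n × κ → ℝ) :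
    t ⬝ᵥ (blockCov x).mulVec t = ∑ p : ν × κ, (∑ i, x i p.1 * t (i, p.2)) ^ 2 := by
  have h : ∀ i j, (blockCov x).mulVec t (i, j) = ∑ k, x i k * ∑ i', x i' k * t (i', j) := by
    intro i j
    simp only [Matrix.mulVec, dotProduct, blockCov, Matrix.of_apply, Fintype.sum_prod_type,
      ite_mul, zero_mul, Finset.sum_ite_eq, Finset.mem_univ, if_true, Finset.mul_sum,
      Finset.sum_mul]
    rw [Finset.sum_comm]
    simp only [mul_assoc]
  simp only [dotProduct, Fintype.sum_prod_type, h]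
  calc ∑ i, ∑ j, t (i, j) * ∑ k, x i k * ∑ i', x i' k * t (i', j)
      = ∑ i, ∑ j, ∑ k, (x i k * t (i, j)) * ∑ i', x i' k * t (i', j) := by
        refine Finset.sum_congr rfl fun i _ => Finset.sum_congr rfl fun j _ => ?_
        rw [Finset.mul_sum]
        exact Finset.sum_congr rfl fun k _ => by ring
    _ = ∑ k, ∑ j, ∑ i, (x i k * t (i, j)) * ∑ i', x i' k * t (i', j) := by
        rw [Finset.sum_comm]
        rw [Finset.sum_comm (s := (Finset.univ : Finset ν))]
        refine Finset.sum_congr rfl fun j _ => ?_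
        rw [Finset.sum_comm]
    _ = _ := by
        refine Finset.sum_congr rfl fun i _ => Finset.sum_congr rfl fun j _ => ?_
        rw [← Finset.sum_mul, sq]

lemma blockCov_posSemidef {n κ ν : Type*} [Fintype n] [Fintype κ] [Fintype ν] [DecidableEq κ]
    (x : n → ν → ℝ) : (blockCov (κ := κ) x).PosSemidef := by
  refine Matrix.PosSemidef.of_dotProduct_mulVec_nonneg ?_ fun t => ?_
  · ext p q
    simp only [Matrix.conjTranspose_apply, blockCov, Matrix.of_apply, star_trivial, eq_comm, mul_comm]
  · have := blockCov_quad (κ := κ) x t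
    simp only [star_trivial]
    rw [this]
    positivity

lemma law_linear {n κ ν : Type*} [Fintype n] [DecidableEq n] [Fintype κ] [Fintype ν] [DecidableEq κ]
    (x : n → ν → ℝ) (m : EuclideanSpace ℝ (n × κ)) :
    (stdGaussian (EuclideanSpace ℝ (ν × κ))).map
      (fun u => m + WithLp.toLp 2 (fun p : n × κ => ∑ k, x p.1 k * u (k, p.2)))
      = multivariateGaussian m (blockCov x) := by
  have : IsProbabilityMeasure ((stdGaussian (EuclideanSpace ℝ (ν × κ))).map
      (fun u => m + WithLp.toLp 2 (fun p : n × κ => ∑ k, x p.1 k * u (k, p.2)))) :=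
    Measure.isProbabilityMeasure_map (by fun_prop)
  apply Measure.ext_of_charFun
  ext t
  rw [charFun_multivariateGaussian (blockCov_posSemidef x), blockCov_quad, charFun_apply,
    integral_map (by fun_prop) (by fun_prop)]
  let s : EuclideanSpace ℝ (ν × κ) := WithLp.toLp 2 fun q => ∑ i, x i q.1 * t (i, q.2)
  have h1 : ∀ u : EuclideanSpace ℝ (ν × κ),
      ⟪m + WithLp.toLp 2 (fun p : n × κ => ∑ k, x p.1 k * u (k, p.2)), t⟫ = ⟪m, t⟫ + ⟪u, s⟫ := by
    intro u
    rw [inner_add_left]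
    congr 1
    simp only [PiLp.inner_apply, s, RCLike.inner_apply, conj_trivial, Fintype.sum_prod_type,
      Finset.mul_sum, Finset.sum_mul]
    rw [Finset.sum_comm]
    rw [Finset.sum_comm (s := (Finset.univ : Finset ν))]
    refine Finset.sum_congr rfl fun j _ => ?_
    rw [Finset.sum_comm]
    exact Finset.sum_congr rfl fun k _ => Finset.sum_congr rfl fun i _ => by ring
  simp_rw [h1]
  have h2 := charFun_stdGaussian s
  rw [charFun_apply] at h2
  simp only [Complex.ofReal_add, add_mul, Complex.exp_add, integral_const_mul, h2]
  rw [real_inner_comm, sub_eq_add_neg, Complex.exp_add, ← Complex.ofReal_pow, EuclideanSpace.norm_sq_eq]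
  simp [s, neg_div]


lemma lln_gram {Ω : Type*} [MeasurableSpace Ω] (μ : Measure Ω) [IsProbabilityMeasure μ]
    (ξ : ℕ → Ω → ℝ) (hξ : ∀ k, Measurable (ξ k)) (hind : iIndepFun ξ μ)
    (hlaw : ∀ k, μ.map (ξ k) = gaussianReal 0 1) (n : ℕ) :
    ∀ᵐ z ∂(Measure.pi fun _ : Fin n => μ), ∀ i j,
      Tendsto (fun N : ℕ => (∑ k ∈ Finset.range N, ξ k (z i) * ξ k (z j)) / N) atTop
        (nhds (if i = j then 1 else 0)) := by
  set M := Measure.pi fun _ : Fin n => μ with hM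
  have hX : iIndepFun (fun (p : Fin n × ℕ) (z : Fin n → Ω) => ξ p.2 (z p.1)) M := by
    refine iIndepFun_uncurry' (X := fun i k (z : Fin n → Ω) => ξ k (z i))
      (fun i k => (hξ k).comp (measurable_pi_apply i)) ?_ ?_
    · exact iIndepFun_pi (X := fun _ w k => ξ k w)
        (fun i => (measurable_pi_iff.2 hξ).aemeasurable)
    · intro i
      have hp := measurePreserving_eval (fun _ : Fin n => μ) i
      have hmm : ∀ k, Measurable (fun z : Fin n → Ω => ξ k (z i)) :=
        fun k => (hξ k).comp (measurable_pi_apply i)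
      rw [iIndepFun_iff_map_fun_eq_infinitePi_map hmm]
      have h1 := hind.map_fun_eq_infinitePi_map hξ
      have h2 : ∀ k, M.map (fun z => ξ k (z i)) = μ.map (ξ k) := by
        intro k
        rw [← hp.map_eq, Measure.map_map (hξ k) hp.measurable]; rfl
      simp only [h2]
      rw [← h1, ← hp.map_eq, Measure.map_map (measurable_pi_iff.2 hξ) hp.measurable]; rfl
  have hvec : ∀ k, M.map (fun z i => ξ k (z i)) = Measure.pi fun _ : Fin n => gaussianReal 0 1 := by
    intro k
    rw [hM, Measure.pi_map_pi (fun i => (hξ k).aemeasurable)]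
    simp [hlaw k]
  have hvm : ∀ k, Measurable (fun (z : Fin n → Ω) i => ξ k (z i)) := fun k =>
    measurable_pi_iff.2 fun i => (hξ k).comp (measurable_pi_apply i)
  rw [ae_all_iff]; intro i
  rw [ae_all_iff]; intro j
  let Y : ℕ → (Fin n → Ω) → ℝ := fun k z => ξ k (z i) * ξ k (z j)
  have hYid : ∀ k, IdentDistrib (Y k) (Y 0) M M := by
    intro k
    have : IdentDistrib (fun (z : Fin n → Ω) i => ξ k (z i)) (fun (z : Fin n → Ω) i => ξ 0 (z i)) M M :=
      ⟨(hvm k).aemeasurable, (hvm 0).aemeasurable, by rw [hvec, hvec]⟩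
    exact this.comp (u := fun v => v i * v j) (by fun_prop)
  have hmem : ∀ i, MemLp (fun v : Fin n → ℝ => v i) 2 (Measure.pi fun _ : Fin n => gaussianReal 0 1) := by
    intro i
    exact (memLp_id_gaussianReal 2).comp_measurePreserving
      (measurePreserving_eval (fun _ : Fin n => gaussianReal 0 1) i)
  have hYint : Integrable (Y 0) M := by
    have : Integrable (fun v : Fin n → ℝ => v i * v j) (M.map (fun z i => ξ 0 (z i))) := by
      rw [hvec]
      exact (hmem i).integrable_mul (hmem j)
    exact this.comp_measurable (hvm 0)
  have hYE : ∫ z, Y 0 z ∂M = if i = j then 1 else 0 := by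
    have h1 : ∫ z, Y 0 z ∂M = ∫ v : Fin n → ℝ, v i * v j ∂(M.map (fun z i => ξ 0 (z i))) := by
      rw [integral_map (hvm 0).aemeasurable (by fun_prop)]
    rw [h1, hvec]
    have hE : ∀ i : Fin n, ∫ v : Fin n → ℝ, v i ∂(Measure.pi fun _ : Fin n => gaussianReal 0 1) = 0 := by
      intro i
      have := (measurePreserving_eval (fun _ : Fin n => gaussianReal 0 1) i)
      have h2 := integral_map (μ := (Measure.pi fun _ : Fin n => gaussianReal 0 1))
        this.aemeasurable (f := fun x : ℝ => x) (by fun_prop)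
      rw [this.map_eq] at h2
      simp at h2
      exact h2.symm
    split_ifs with hij
    · subst hij
      have := (measurePreserving_eval (fun _ : Fin n => gaussianReal 0 1) i)
      have h2 := integral_map (μ := (Measure.pi fun _ : Fin n => gaussianReal 0 1))
        this.aemeasurable (f := fun x : ℝ => x * x) (by fun_prop)
      rw [this.map_eq] at h2
      simp only [Function.eval] at h2
      rw [← h2]
      have h3 := variance_id_gaussianReal (μ := 0) (v := 1)
      rw [variance_eq_integral (by fun_prop)] at h3
      simpa [sq] using h3
    · have hi := (iIndepFun_pi (μ := fun _ : Fin n => gaussianReal 0 1) (X := fun _ x => x)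
        (fun i => by fun_prop)).indepFun hij
      rw [hi.integral_fun_mul_eq_mul_integral (measurable_pi_apply i).aestronglyMeasurable
        (measurable_pi_apply j).aestronglyMeasurable, hE]
      simp
  have hYind : Pairwise (Function.onFun (fun f g => IndepFun f g M) Y) := by
    intro k l hkl
    exact hX.indepFun_mul_mul (fun p => (hξ p.2).comp (measurable_pi_apply p.1))
      (i, k) (j, k) (i, l) (j, l) (by simp [hkl]) (by simp [hkl]) (by simp [hkl]) (by simp [hkl])
  have := strong_law_ae_real Y hYint hYind hYid
  rw [hYE] at this
  exact this


lemma pi_uncurry {I κ : Type*} [Fintype I] [Fintype κ] (γ : Measure ℝ) [IsProbabilityMeasure γ] :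
    (Measure.pi fun _ : I => Measure.pi fun _ : κ => γ).map (fun g (p : I × κ) => g p.1 p.2)
      = Measure.pi fun _ : I × κ => γ := by
  have hm : Measurable (fun (g : I → κ → ℝ) (p : I × κ) => g p.1 p.2) := by
    refine measurable_pi_iff.2 fun p => ?_
    exact (measurable_pi_apply p.2).comp (measurable_pi_apply p.1)
  refine (Measure.pi_eq (μ := fun _ : I × κ => γ) fun s hs => ?_).symm
  rw [Measure.map_apply hm (MeasurableSet.univ_pi hs)]
  have : (fun (g : I → κ → ℝ) (p : I × κ) => g p.1 p.2) ⁻¹' Set.univ.pi s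
      = Set.univ.pi fun i => Set.univ.pi fun j => s (i, j) := by
    ext g
    simp [Set.mem_pi]
  rw [this, Measure.pi_pi]
  simp_rw [Measure.pi_pi]
  rw [Fintype.prod_prod_type]

lemma pi_lintegral_std {I κ : Type*} [Fintype I] [Fintype κ] (f : (I → κ → ℝ) → ℝ≥0∞)
    (hf : Measurable f) :
    ∫⁻ g, f g ∂(Measure.pi fun _ : I => Measure.pi fun _ : κ => gaussianReal 0 1)
      = ∫⁻ w, f (fun i j => w (i, j)) ∂(stdGaussian (EuclideanSpace ℝ (I × κ))) := by
  have hm : Measurable (fun (g : I → κ → ℝ) (p : I × κ) => g p.1 p.2) := by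
    refine measurable_pi_iff.2 fun p => ?_
    exact (measurable_pi_apply p.2).comp (measurable_pi_apply p.1)
  have hm2 : Measurable (fun (w : I × κ → ℝ) (i : I) (j : κ) => w (i, j)) := by fun_prop
  have hm3 : Measurable (fun (w : EuclideanSpace ℝ (I × κ)) (i : I) (j : κ) => w (i, j)) := by
    fun_prop
  rw [← map_pi_eq_stdGaussian, ← pi_uncurry, Measure.map_map (by fun_prop) hm,
    lintegral_map (f := fun w : EuclideanSpace ℝ (I × κ) => f (fun i j => w (i, j)))
      (hf.comp hm3) ((WithLp.measurable_toLp 2 _).comp hm)]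
  rfl

/-- The random (deterministic given `u`) replacement for the noise. -/
def Vu {Ω κ : Type*} (ξ : ℕ → Ω → ℝ) (v : κ → Ω → ℝ) (N : ℕ)
    (u : EuclideanSpace ℝ (Fin N × κ)) (z : Ω) (j : κ) : ℝ :=
  (1 / ((N : ℝ) + 1)) * v j z + ∑ k : Fin N, (ξ k z / √N) * u (k, j)

lemma transfer {Ω E κ : Type*} [MeasurableSpace Ω] [MeasurableSpace E] [Fintype κ]
    (μ : Measure Ω) [IsProbabilityMeasure μ]
    (ξ : ℕ → Ω → ℝ) (hξ : ∀ k, Measurable (ξ k)) (hind : iIndepFun ξ μ)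
    (hlaw : ∀ k, μ.map (ξ k) = gaussianReal 0 1)
    (v : κ → Ω → ℝ) (hv : ∀ j, Measurable (v j))
    (G : Ω × (κ → ℝ) → E) (hG : Measurable G) (n : ℕ) (B : Set (Fin n → E)) (hB : MeasurableSet B)
    (α : ℝ≥0∞)
    (h : ∀ N (u : EuclideanSpace ℝ (Fin N × κ)),
      (Measure.pi fun _ : Fin n => μ.map (fun z => G (z, Vu ξ v N u z))) B ≤ α) :
    (Measure.pi fun _ : Fin n => (μ.prod (Measure.pi fun _ : κ => gaussianReal 0 1)).map G) B ≤ α := by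
  classical
  let M := Measure.pi fun _ : Fin n => μ
  let F : (Fin n → Ω) → (Fin n → κ → ℝ) → ℝ≥0∞ := fun z g => B.indicator 1 (fun i => G (z i, g i))
  have hF : Measurable (fun p : (Fin n → Ω) × (Fin n → κ → ℝ) => F p.1 p.2) := by
    refine (measurable_one.indicator hB).comp (measurable_pi_iff.2 fun i => hG.comp ?_)
    fun_prop
  have hVm : ∀ N, Measurable (fun p : Ω × EuclideanSpace ℝ (Fin N × κ) => Vu ξ v N p.2 p.1) := by
    intro N
    refine measurable_pi_iff.2 fun j => ?_
    unfold Vu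
    fun_prop
  have hQ : (Measure.pi fun _ : Fin n =>
      (μ.prod (Measure.pi fun _ : κ => gaussianReal 0 1)).map G) B
      = ∫⁻ z, ∫⁻ w : EuclideanSpace ℝ (Fin n × κ), F z (fun i j => w (i, j))
          ∂(stdGaussian (EuclideanSpace ℝ (Fin n × κ))) ∂M := by
    have hGm : Measurable (fun (y : Fin n → Ω × (κ → ℝ)) i => G (y i)) := by fun_prop
    have : ∀ i : Fin n, IsProbabilityMeasure
        ((μ.prod (Measure.pi fun _ : κ => gaussianReal 0 1)).map G) :=
      fun _ => Measure.isProbabilityMeasure_map hG.aemeasurable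
    rw [← Measure.pi_map_pi (fun i => hG.aemeasurable), Measure.map_apply hGm hB,
      ← lintegral_indicator_one (hGm hB)]
    have hp := measurePreserving_arrowProdEquivProdArrow Ω (κ → ℝ) (Fin n) (fun _ => μ)
      (fun _ => Measure.pi fun _ : κ => gaussianReal 0 1)
    have e1 : ∀ y : Fin n → Ω × (κ → ℝ),
        ((fun (y : Fin n → Ω × (κ → ℝ)) i => G (y i)) ⁻¹' B).indicator (1 : (Fin n → Ω × (κ → ℝ)) → ℝ≥0∞) y
        = (fun p : (Fin n → Ω) × (Fin n → κ → ℝ) => F p.1 p.2)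
          (MeasurableEquiv.arrowProdEquivProdArrow Ω (κ → ℝ) (Fin n) y) := by
      intro y; rfl
    simp_rw [e1]
    rw [hp.lintegral_comp hF, lintegral_prod _ hF.aemeasurable]
    refine lintegral_congr fun z => ?_
    exact pi_lintegral_std _ (hF.comp measurable_prodMk_left)
  have hP : ∀ N (u : EuclideanSpace ℝ (Fin N × κ)),
      ∫⁻ z, F z (fun i => Vu ξ v N u (z i)) ∂M ≤ α := by
    intro N u
    refine le_trans (le_of_eq ?_) (h N u)
    have hVu : Measurable (fun z => Vu ξ v N u z) := (hVm N).comp measurable_prodMk_right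
    have hGu : Measurable (fun z => G (z, Vu ξ v N u z)) := hG.comp (measurable_id.prodMk hVu)
    have : ∀ i : Fin n, IsProbabilityMeasure (μ.map (fun z => G (z, Vu ξ v N u z))) :=
      fun _ => Measure.isProbabilityMeasure_map hGu.aemeasurable
    have hm : Measurable (fun (z : Fin n → Ω) i => G (z i, Vu ξ v N u (z i))) :=
      measurable_pi_iff.2 fun i => hGu.comp (measurable_pi_apply i)
    rw [← Measure.pi_map_pi (fun i => hGu.aemeasurable), Measure.map_apply hm hB,
      ← lintegral_indicator_one (hm hB)]
    rfl
  let x : ∀ N, (Fin n → Ω) → Fin n → Fin N → ℝ := fun N z i k => ξ k (z i) / √N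
  let mm : ℕ → (Fin n → Ω) → EuclideanSpace ℝ (Fin n × κ) :=
    fun N z => WithLp.toLp 2 fun p => (1 / ((N : ℝ) + 1)) * v p.2 (z p.1)
  have hmix : ∀ N z, ∫⁻ u, F z (fun i => Vu ξ v N u (z i)) ∂(stdGaussian (EuclideanSpace ℝ (Fin N × κ)))
      = ∫⁻ w : EuclideanSpace ℝ (Fin n × κ), F z (fun i j => w (i, j))
        ∂(multivariateGaussian (mm N z) (blockCov (x N z))) := by
    intro N z
    rw [← law_linear, lintegral_map]
    · rfl
    · exact hF.comp (measurable_const.prodMk (by fun_prop))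
    · fun_prop
  have hle : ∀ N, ∫⁻ z, ∫⁻ w : EuclideanSpace ℝ (Fin n × κ), F z (fun i j => w (i, j))
        ∂(multivariateGaussian (mm N z) (blockCov (x N z))) ∂M ≤ α := by
    intro N
    simp_rw [← hmix]
    have hmeas : Measurable (fun p : (Fin n → Ω) × EuclideanSpace ℝ (Fin N × κ) =>
        F p.1 (fun i => Vu ξ v N p.2 (p.1 i))) := by
      refine hF.comp (measurable_fst.prodMk (measurable_pi_iff.2 fun i => ?_))
      have hh : Measurable (fun p : (Fin n → Ω) × EuclideanSpace ℝ (Fin N × κ) => (p.1 i, p.2)) := by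
        fun_prop
      exact (hVm N).comp hh
    rw [lintegral_lintegral_swap hmeas.aemeasurable]
    refine (lintegral_mono (g := fun _ => α) fun u => hP N u).trans ?_
    simp
  have hmm : ∀ N, Measurable (fun z => ∫⁻ w : EuclideanSpace ℝ (Fin n × κ), F z (fun i j => w (i, j))
        ∂(multivariateGaussian (mm N z) (blockCov (x N z)))) := by
    intro N
    simp_rw [← hmix]
    have hmeas : Measurable (fun p : (Fin n → Ω) × EuclideanSpace ℝ (Fin N × κ) =>
        F p.1 (fun i => Vu ξ v N p.2 (p.1 i))) := by
      refine hF.comp (measurable_fst.prodMk (measurable_pi_iff.2 fun i => ?_))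
      have hh : Measurable (fun p : (Fin n → Ω) × EuclideanSpace ℝ (Fin N × κ) => (p.1 i, p.2)) := by
        fun_prop
      exact (hVm N).comp hh
    exact hmeas.lintegral_prod_right'
  rw [hQ]
  calc _ ≤ ∫⁻ z, liminf (fun N => ∫⁻ w : EuclideanSpace ℝ (Fin n × κ), F z (fun i j => w (i, j))
        ∂(multivariateGaussian (mm N z) (blockCov (x N z)))) atTop ∂M := by
        refine lintegral_mono_ae ?_
        filter_upwards [lln_gram μ ξ hξ hind hlaw n] with z hz
        refine fatou_gaussian _ _ (fun N => blockCov_posSemidef _) ?_ ?_ _ ?_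
        · refine tendsto_pi_nhds.2 fun p => tendsto_pi_nhds.2 fun q => ?_
          simp only [blockCov, Matrix.of_apply]
          by_cases hpq : p.2 = q.2
          · simp only [hpq, if_true]
            have h1 := hz p.1 q.1
            have h2 : (if p.1 = q.1 then (1 : ℝ) else 0) = (1 : Matrix (Fin n × κ) (Fin n × κ) ℝ) p q := by
              rw [Matrix.one_apply]
              congr 1
              simp [Prod.ext_iff, hpq]
            rw [← h2]
            refine h1.congr fun N => ?_
            rw [← Fin.sum_univ_eq_sum_range (fun k => ξ k (z p.1) * ξ k (z q.1)), Finset.sum_div]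
            refine Finset.sum_congr rfl fun k _ => ?_
            simp only [x]
            rw [div_mul_div_comm, Real.mul_self_sqrt (Nat.cast_nonneg _)]
          · simp only [hpq, if_false]
            rw [Matrix.one_apply, if_neg (by rintro rfl; exact hpq rfl)]
            exact tendsto_const_nhds
        · have : Tendsto (fun N : ℕ => (fun p : Fin n × κ => (1 / ((N : ℝ) + 1)) * v p.2 (z p.1)))
              atTop (nhds 0) := by
            refine tendsto_pi_nhds.2 fun p => ?_
            have := (tendsto_one_div_add_atTop_nhds_zero_nat (𝕜 := ℝ)).mul_const (v p.2 (z p.1))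
            simpa using this
          have h2 := ((PiLp.continuous_toLp 2 (fun _ : Fin n × κ => ℝ)).tendsto 0).comp this
          rw [WithLp.toLp_zero] at h2
          exact h2
        · exact hF.comp (measurable_const.prodMk (by fun_prop))
    _ ≤ liminf (fun N => ∫⁻ z, ∫⁻ w : EuclideanSpace ℝ (Fin n × κ), F z (fun i j => w (i, j))
        ∂(multivariateGaussian (mm N z) (blockCov (x N z))) ∂M) atTop := lintegral_liminf_le hmm
    _ ≤ α := by
        refine liminf_le_of_frequently_le' ?_
        exact Frequently.of_forall hle


section GaussianSpace

variable {E : Type*} [NormedAddCommGroup E] [NormedSpace ℝ E] [CompleteSpace E]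
  [SecondCountableTopology E] [MeasurableSpace E] [BorelSpace E]

/-- The centered embedding of the dual in `L²`. -/
def Jmap (ρ : Measure E) [IsGaussian ρ] : StrongDual ℝ E →L[ℝ] Lp ℝ 2 ρ :=
  StrongDual.toLp ρ 2 - (Lp.constL 2 ρ ℝ) ∘L (ContinuousLinearMap.apply ℝ ℝ (∫ x, x ∂ρ))

lemma Jmap_ae (ρ : Measure E) [IsGaussian ρ] (L : StrongDual ℝ E) :
    Jmap ρ L =ᵐ[ρ] fun x => L x - L (∫ x, x ∂ρ) := by
  have h1 : StrongDual.toLp ρ 2 L =ᵐ[ρ] L := by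
    rw [StrongDual.toLp_apply IsGaussian.memLp_two_id]
    exact MemLp.coeFn_toLp _
  have h2 := Lp.coeFn_const 2 ρ (L (∫ x, x ∂ρ))
  have h3 := Lp.coeFn_sub (StrongDual.toLp ρ 2 L) (Lp.const 2 ρ (L (∫ x, x ∂ρ)))
  have h4 : Jmap ρ L = StrongDual.toLp ρ 2 L - Lp.const 2 ρ (L (∫ x, x ∂ρ)) := rfl
  rw [h4]
  filter_upwards [h1, h2, h3] with x h1 h2 h3
  rw [h3, Pi.sub_apply, h1, h2]; rfl

lemma inner_Jmap (ρ : Measure E) [IsGaussian ρ] (L₁ L₂ : StrongDual ℝ E) :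
    ⟪Jmap ρ L₁, Jmap ρ L₂⟫ = covForm ρ L₁ L₂ := by
  rw [L2.inner_def, covForm]
  refine integral_congr_ae ?_
  filter_upwards [Jmap_ae ρ L₁, Jmap_ae ρ L₂] with x h1 h2
  have e1 := IsGaussian.integral_dual (μ := ρ) L₁
  have e2 := IsGaussian.integral_dual (μ := ρ) L₂
  rw [h1, h2, e1, e2]
  simp [mul_comm]

lemma Jmap_injective (ρ : Measure E) [IsGaussian ρ] (h : HasInjectiveCovariance ρ)
    (L : StrongDual ℝ E) (hL : Jmap ρ L = 0) : L = 0 := by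
  refine h L fun L₂ => ?_
  rw [← inner_Jmap, hL, inner_zero_left]

/-- The characteristic function at `1`. -/
def cf1 {Ω : Type*} [MeasurableSpace Ω] (ρ : Measure Ω) (f : Lp ℝ 2 ρ) : ℂ :=
  ∫ x, Complex.exp (Complex.I * (f x : ℝ)) ∂ρ

lemma cf1_integrable {Ω : Type*} [MeasurableSpace Ω] (ρ : Measure Ω) [IsProbabilityMeasure ρ]
    (f : Lp ℝ 2 ρ) : Integrable (fun x => Complex.exp (Complex.I * (f x : ℝ))) ρ := by
  refine Integrable.of_bound (C := 1) ?_ ?_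
  · have := Lp.aestronglyMeasurable f
    fun_prop
  · refine ae_of_all _ fun x => ?_
    rw [mul_comm, Complex.norm_exp_ofReal_mul_I]

lemma cf1_lipschitz {Ω : Type*} [MeasurableSpace Ω] (ρ : Measure Ω) [IsProbabilityMeasure ρ] :
    LipschitzWith 1 (cf1 ρ) := by
  refine LipschitzWith.of_dist_le_mul fun f g => ?_
  rw [dist_eq_norm, dist_eq_norm, NNReal.coe_one, one_mul, cf1, cf1,
    ← integral_sub (cf1_integrable ρ f) (cf1_integrable ρ g)]
  have h2 : MemLp (f - g : Lp ℝ 2 ρ) 2 ρ := Lp.memLp _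
  have h1 : MemLp (f - g : Lp ℝ 2 ρ) 1 ρ := h2.mono_exponent (by norm_num)
  calc _ ≤ ∫ x, ‖(f - g : Lp ℝ 2 ρ) x‖ ∂ρ := by
        refine norm_integral_le_of_norm_le (h1.integrable le_rfl).norm ?_
        filter_upwards [Lp.coeFn_sub f g] with x hx
        rw [hx, Pi.sub_apply]
        have e : Complex.exp (Complex.I * (f x : ℝ)) - Complex.exp (Complex.I * (g x : ℝ))
            = Complex.exp ((g x : ℝ) * Complex.I) *
              (Complex.exp (Complex.I * ((f x - g x : ℝ) : ℂ)) - 1) := by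
          rw [mul_sub, ← Complex.exp_add, mul_one]
          push_cast
          congr 1 <;> congr 1 <;> ring
        rw [e, norm_mul, Complex.norm_exp_ofReal_mul_I, one_mul]
        exact Real.norm_exp_I_mul_ofReal_sub_one_le
    _ = (eLpNorm (f - g : Lp ℝ 2 ρ) 1 ρ).toReal := by
        rw [eLpNorm_one_eq_lintegral_enorm, integral_norm_eq_lintegral_enorm h1.1]
    _ ≤ (eLpNorm (f - g : Lp ℝ 2 ρ) 2 ρ).toReal := by
        refine ENNReal.toReal_mono h2.2.ne ?_
        exact eLpNorm_le_eLpNorm_of_exponent_le (by norm_num) h2.1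
    _ = ‖f - g‖ := by rw [Lp.norm_def]

/-- The Gaussian space of `ρ`. -/
def Gsp (ρ : Measure E) [IsGaussian ρ] : Submodule ℝ (Lp ℝ 2 ρ) :=
  (LinearMap.range (Jmap ρ).toLinearMap).topologicalClosure

lemma Jmap_mem (ρ : Measure E) [IsGaussian ρ] (L : StrongDual ℝ E) : Jmap ρ L ∈ Gsp ρ :=
  Submodule.le_topologicalClosure _ ⟨L, rfl⟩

lemma cf1_Jmap (ρ : Measure E) [IsGaussian ρ] (L : StrongDual ℝ E) :
    cf1 ρ (Jmap ρ L) = Complex.exp (-(‖Jmap ρ L‖ ^ 2 : ℝ) / 2) := by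
  have hc := IsGaussian.charFunDual_eq (μ := ρ) L
  rw [charFunDual_apply] at hc
  have e1 := IsGaussian.integral_dual (μ := ρ) L
  rw [integral_complex_ofReal, e1] at hc
  have hv : Var[L; ρ] = ‖Jmap ρ L‖ ^ 2 := by
    rw [← real_inner_self_eq_norm_sq, inner_Jmap, variance_eq_integral (by fun_prop), covForm]
    simp [sq]
  rw [hv] at hc
  have : cf1 ρ (Jmap ρ L) = ∫ x, Complex.exp (-(L (∫ x, x ∂ρ) : ℝ) * Complex.I) *
      Complex.exp ((L x : ℝ) * Complex.I) ∂ρ := by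
    refine integral_congr_ae ?_
    filter_upwards [Jmap_ae ρ L] with x hx
    rw [hx, ← Complex.exp_add]
    congr 1; push_cast; ring
  rw [this, integral_const_mul, hc, ← Complex.exp_add]
  congr 1; push_cast; ring

lemma cf1_Gsp (ρ : Measure E) [IsGaussian ρ] (f : Lp ℝ 2 ρ) (hf : f ∈ Gsp ρ) :
    cf1 ρ f = Complex.exp (-(‖f‖ ^ 2 : ℝ) / 2) := by
  have hcl : IsClosed {f : Lp ℝ 2 ρ | cf1 ρ f = Complex.exp (-(‖f‖ ^ 2 : ℝ) / 2)} := by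
    refine isClosed_eq (cf1_lipschitz ρ).continuous ?_
    fun_prop
  have hf' : f ∈ closure (Set.range (Jmap ρ)) := hf
  refine closure_minimal ?_ hcl hf'
  rintro _ ⟨L, rfl⟩
  exact cf1_Jmap ρ L

lemma Gsp_law (ρ : Measure E) [IsGaussian ρ] (f : Lp ℝ 2 ρ) (hf : f ∈ Gsp ρ) :
    ρ.map f = gaussianReal 0 (‖f‖ ^ 2).toNNReal := by
  have hm : AEMeasurable f ρ := (Lp.aestronglyMeasurable f).aemeasurable
  have : IsProbabilityMeasure (ρ.map f) := Measure.isProbabilityMeasure_map hm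
  refine Measure.ext_of_charFun ?_
  ext t
  rw [charFun_gaussianReal, charFun_apply_real, integral_map hm (by fun_prop)]
  have h := cf1_Gsp ρ (t • f) (Submodule.smul_mem _ t hf)
  have h2 : cf1 ρ (t • f) = ∫ x, Complex.exp (t * (f x : ℝ) * Complex.I) ∂ρ := by
    refine integral_congr_ae ?_
    filter_upwards [Lp.coeFn_smul t f] with x hx
    rw [hx]
    congr 1
    simp only [Pi.smul_apply, smul_eq_mul]; push_cast; ring
  rw [← h2, h, norm_smul]
  congr 1
  rw [Real.coe_toNNReal _ (by positivity)]
  simp only [mul_pow, Real.norm_eq_abs, sq_abs]; push_cast; ring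

lemma Gsp_integral (ρ : Measure E) [IsGaussian ρ] (f : Lp ℝ 2 ρ) (hf : f ∈ Gsp ρ) :
    ∫ x, f x ∂ρ = 0 := by
  have hm : AEMeasurable f ρ := (Lp.aestronglyMeasurable f).aemeasurable
  have h := integral_map hm (f := fun x : ℝ => x) (by fun_prop)
  rw [← h, Gsp_law ρ f hf]
  simp

lemma pushforward_gaussian {F : Type*} [NormedAddCommGroup F] [NormedSpace ℝ F]
    [MeasurableSpace F] [BorelSpace F] (ρ : Measure E) [IsGaussian ρ] (φ : E → F)
    (hφ : Measurable φ)
    (h : ∀ L : F →L[ℝ] ℝ, ∃ c : ℝ, ∃ q ∈ Gsp ρ, (∀ᵐ x ∂ρ, L (φ x) = c + q x) ∧ (q = 0 → L = 0)) :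
    IsGaussianMeasure (ρ.map φ) ∧ HasInjectiveCovariance (ρ.map φ) := by
  constructor
  · intro L
    obtain ⟨c, q, hq, hae, -⟩ := h L
    have hm : AEMeasurable q ρ := (Lp.aestronglyMeasurable q).aemeasurable
    refine ⟨0 + c, (‖q‖ ^ 2).toNNReal, ?_⟩
    rw [← gaussianReal_map_const_add, ← Gsp_law ρ q hq, Measure.map_map (by fun_prop) hφ,
      AEMeasurable.map_map_of_aemeasurable (by fun_prop) hm]
    exact Measure.map_congr hae
  · intro L hL
    obtain ⟨c, q, hq, hae, h0⟩ := h L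
    refine h0 ?_
    have hm : AEMeasurable q ρ := (Lp.aestronglyMeasurable q).aemeasurable
    have h1 := hL L
    have hLm : Measurable L := L.continuous.measurable
    have hqi : Integrable q ρ := (Lp.memLp q).integrable (by norm_num)
    have hIntg : ∫ y, L y ∂(ρ.map φ) = c := by
      rw [integral_map hφ.aemeasurable hLm.aestronglyMeasurable, integral_congr_ae hae,
        integral_add (integrable_const _) hqi, Gsp_integral ρ q hq]
      simp
    rw [covForm, hIntg, integral_map hφ.aemeasurable (by
      exact ((hLm.sub_const c).mul (hLm.sub_const c)).aestronglyMeasurable)] at h1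
    have h2 : ⟪q, q⟫ = 0 := by
      rw [L2.inner_def, ← h1]
      refine integral_congr_ae ?_
      filter_upwards [hae] with x hx
      rw [hx]; simp [sq]
    exact inner_self_eq_zero.1 h2

end GaussianSpace


section Structure

variable {H ι : Type*} [NormedAddCommGroup H] [InnerProductSpace ℝ H] [CompleteSpace H]
  [SecondCountableTopology H] [MeasurableSpace H] [BorelSpace H] [Fintype ι]

/-- The functional with given coordinates. -/
def mkL (c : ι → ℝ) (ℓ : StrongDual ℝ H) : StrongDual ℝ ((ι → ℝ) × H) :=
  ∑ i, c i • ((ContinuousLinearMap.proj i : (ι → ℝ) →L[ℝ] ℝ) ∘L ContinuousLinearMap.fst ℝ (ι → ℝ) H)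
    + ℓ ∘L ContinuousLinearMap.snd ℝ (ι → ℝ) H

lemma mkL_apply (c : ι → ℝ) (ℓ : StrongDual ℝ H) (p : (ι → ℝ) × H) :
    mkL c ℓ p = ∑ i, c i * p.1 i + ℓ p.2 := by
  simp [mkL]

lemma exists_mkL (L : StrongDual ℝ ((ι → ℝ) × H)) : ∃ c ℓ, L = mkL c ℓ := by
  classical
  refine ⟨fun i => L (Pi.single i 1, 0), L ∘L ContinuousLinearMap.inr ℝ (ι → ℝ) H, ?_⟩
  refine ContinuousLinearMap.ext fun p => ?_
  have h1 := LinearMap.pi_apply_eq_sum_univ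
    (L ∘L ContinuousLinearMap.inl ℝ (ι → ℝ) H).toLinearMap p.1
  have h2 : L p = L (p.1, 0) + L (0, p.2) := by
    rw [← map_add]; simp
  rw [mkL_apply, h2]
  congr 1
  refine Eq.trans h1 (Finset.sum_congr rfl fun i _ => ?_)
  rw [smul_eq_mul, mul_comm]
  congr 1
  change L _ = L _
  congr 1
  refine Prod.ext ?_ rfl
  ext j
  simp [Pi.single_apply, eq_comm]

lemma charFun_pi_gauss {κ : Type*} [Fintype κ] (t : κ → ℝ) :
    ∫ g : κ → ℝ, Complex.exp ((∑ j, t j * g j : ℝ) * Complex.I)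
      ∂(Measure.pi fun _ : κ => gaussianReal 0 1)
      = Complex.exp (-(∑ j, t j ^ 2 : ℝ) / 2) := by
  have h1 : ∀ g : κ → ℝ, Complex.exp ((∑ j, t j * g j : ℝ) * Complex.I)
      = ∏ j, Complex.exp (t j * g j * Complex.I) := by
    intro g
    rw [← Complex.exp_sum]
    congr 1
    push_cast
    rw [Finset.sum_mul]
  simp_rw [h1]
  rw [integral_fintype_prod_eq_prod (fun j (x : ℝ) => Complex.exp (t j * x * Complex.I))]
  have h2 : ∀ j, ∫ x : ℝ, Complex.exp (t j * x * Complex.I) ∂(gaussianReal 0 1)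
      = Complex.exp (-(t j ^ 2 : ℝ) / 2) := by
    intro j
    rw [← charFun_apply_real, charFun_gaussianReal]
    congr 1
    simp; ring
  simp_rw [h2]
  rw [← Complex.exp_sum]
  congr 1
  push_cast
  rw [← Finset.sum_div, Finset.sum_neg_distrib]

lemma lp_sum_ae {Ω : Type*} [MeasurableSpace Ω] {μ : Measure Ω} (c : ι → ℝ) (a : ι → Lp ℝ 2 μ) :
    (∑ i, c i • a i : Lp ℝ 2 μ) =ᵐ[μ] fun z => ∑ i, c i * a i z := by
  have h1 := Lp.coeFn_finsetSum Finset.univ (fun i => c i • a i)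
  have h2 : ∀ᵐ z ∂μ, ∀ i, (c i • a i : Lp ℝ 2 μ) z = c i * a i z := by
    rw [ae_all_iff]
    intro i
    filter_upwards [Lp.coeFn_smul (c i) (a i)] with z hz
    rw [hz]; rfl
  filter_upwards [h1, h2] with z h1 h2
  rw [h1, Finset.sum_apply]
  exact Finset.sum_congr rfl fun i _ => h2 i

lemma structure_Q (Q : Measure ((ι → ℝ) × H)) [IsGaussian Q] (hinj : HasInjectiveCovariance Q)
    (μ : Measure H) [IsGaussian μ] (hμ : Q.map Prod.snd = μ) :
    ∃ (r : ℕ) (m : ι → ℝ) (a : ι → Lp ℝ 2 μ) (S : ι → Fin r → ℝ), (∀ i, a i ∈ Gsp μ) ∧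
      Q = (μ.prod (Measure.pi fun _ : Fin r => gaussianReal 0 1)).map
        (fun p => ((fun i => m i + a i p.1 + ∑ j, S i j * p.2 j), p.1)) ∧
      ∀ (c : ι → ℝ) (ℓ : StrongDual ℝ H), (∀ j, ∑ i, c i * S i j = 0) →
        ∑ i, c i • a i + Jmap μ ℓ = 0 → mkL c ℓ = 0 := by
  classical
  have hmp : MeasurePreserving (Prod.snd : (ι → ℝ) × H → H) Q μ := ⟨measurable_snd, hμ⟩
  let iso : Lp ℝ 2 μ →ₗᵢ[ℝ] Lp ℝ 2 Q := Lp.compMeasurePreservingₗᵢ ℝ Prod.snd hmp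
  have hiso : ∀ f, iso f =ᵐ[Q] fun p => f p.2 := fun f => Lp.coeFn_compMeasurePreserving f hmp
  have hmean : ∫ z, z ∂μ = (∫ p, p ∂Q).2 := by
    have h1 : (∫ p, p ∂Q).2 = ∫ p : (ι → ℝ) × H, p.2 ∂Q :=
      ((ContinuousLinearMap.snd ℝ (ι → ℝ) H).integral_comp_comm
        (IsGaussian.integrable_id (μ := Q))).symm
    rw [h1, ← hμ, integral_map measurable_snd.aemeasurable (by fun_prop)]
  have hisoJ : ∀ ℓ : StrongDual ℝ H,
      iso (Jmap μ ℓ) = Jmap Q (ℓ ∘L ContinuousLinearMap.snd ℝ (ι → ℝ) H) := by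
    intro ℓ
    refine Lp.ext ?_
    filter_upwards [hiso (Jmap μ ℓ), Jmap_ae Q (ℓ ∘L ContinuousLinearMap.snd ℝ (ι → ℝ) H),
      hmp.quasiMeasurePreserving.ae (Jmap_ae μ ℓ)] with p h1 h2 h3
    rw [h1, h2, h3, hmean]; rfl
  have : CompleteSpace (Gsp μ) := Submodule.topologicalClosure.completeSpace _
  let R : Gsp μ →L[ℝ] Lp ℝ 2 Q := iso.toContinuousLinearMap ∘L (Gsp μ).subtypeL
  let pr : ι → StrongDual ℝ ((ι → ℝ) × H) := fun i =>
    (ContinuousLinearMap.proj i : (ι → ℝ) →L[ℝ] ℝ) ∘L ContinuousLinearMap.fst ℝ (ι → ℝ) H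
  let b : ι → Lp ℝ 2 Q := fun i => Jmap Q (pr i)
  let a : ι → Gsp μ := fun i => ContinuousLinearMap.adjoint R (b i)
  let d : ι → Lp ℝ 2 Q := fun i => b i - R (a i)
  have hd : ∀ k i, ⟪R k, d i⟫ = 0 := by
    intro k i
    have hRR : ⟪R k, R (a i)⟫ = ⟪k, a i⟫ := iso.inner_map_map _ _
    rw [inner_sub_right, hRR, ← ContinuousLinearMap.adjoint_inner_right, sub_self]
  let D : Submodule ℝ (Lp ℝ 2 Q) := Submodule.span ℝ (Set.range d)
  have hdD : ∀ i, d i ∈ D := fun i => Submodule.subset_span ⟨i, rfl⟩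
  have : FiniteDimensional ℝ D := FiniteDimensional.span_of_finite ℝ (Set.finite_range d)
  let ob := stdOrthonormalBasis ℝ D
  let S : ι → Fin (Module.finrank ℝ D) → ℝ := fun i j => ⟪ob j, (⟨d i, hdD i⟩ : D)⟫
  have hS : ∀ c : ι → ℝ, ‖∑ i, c i • d i‖ ^ 2 = ∑ j, (∑ i, c i * S i j) ^ 2 := by
    intro c
    have h1 : ∑ i, c i • d i = ((∑ i, c i • (⟨d i, hdD i⟩ : D) : D) : Lp ℝ 2 Q) := by
      simp
    rw [h1, Submodule.norm_coe, ← ob.sum_sq_norm_inner_right]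
    refine Finset.sum_congr rfl fun j _ => ?_
    rw [inner_sum, Real.norm_eq_abs, sq_abs]
    congr 1
    refine Finset.sum_congr rfl fun i _ => ?_
    exact real_inner_smul_right (ob j) (⟨d i, hdD i⟩ : D) (c i)
  have hdec : ∀ c ℓ, Jmap Q (mkL c ℓ)
      = R (∑ i, c i • a i + ⟨Jmap μ ℓ, Jmap_mem μ ℓ⟩) + ∑ i, c i • d i := by
    intro c ℓ
    have h1 : R ⟨Jmap μ ℓ, Jmap_mem μ ℓ⟩ = Jmap Q (ℓ ∘L ContinuousLinearMap.snd ℝ (ι → ℝ) H) :=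
      hisoJ ℓ
    rw [mkL, map_add, map_add, h1, map_sum, map_sum]
    simp only [map_smul, d, smul_sub, Finset.sum_sub_distrib]
    change ∑ i, c i • b i + _ = _
    abel
  have hnorm : ∀ c ℓ, ‖Jmap Q (mkL c ℓ)‖ ^ 2
      = ‖∑ i, c i • (a i : Lp ℝ 2 μ) + Jmap μ ℓ‖ ^ 2 + ∑ j, (∑ i, c i * S i j) ^ 2 := by
    intro c ℓ
    have h0 : ⟪R (∑ i, c i • a i + ⟨Jmap μ ℓ, Jmap_mem μ ℓ⟩), ∑ i, c i • d i⟫ = 0 := by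
      rw [inner_sum]
      refine Finset.sum_eq_zero fun i _ => ?_
      rw [inner_smul_right, hd, mul_zero]
    have h1 : ‖R (∑ i, c i • a i + ⟨Jmap μ ℓ, Jmap_mem μ ℓ⟩)‖
        = ‖∑ i, c i • (a i : Lp ℝ 2 μ) + Jmap μ ℓ‖ := by
      rw [show R (∑ i, c i • a i + ⟨Jmap μ ℓ, Jmap_mem μ ℓ⟩) =
        iso ((∑ i, c i • a i + ⟨Jmap μ ℓ, Jmap_mem μ ℓ⟩ : Gsp μ) : Lp ℝ 2 μ) from rfl,
        iso.norm_map]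
      simp
    rw [hdec, ← hS, ← h1, sq, sq, sq]
    exact norm_add_sq_eq_norm_sq_add_norm_sq_of_inner_eq_zero _ _ h0
  refine ⟨_, (∫ p, p ∂Q).1, fun i => (a i : Lp ℝ 2 μ), S, fun i => (a i).2, ?_, ?_⟩
  · have ham : ∀ i, Measurable ((a i : Lp ℝ 2 μ) : H → ℝ) :=
      fun i => (Lp.stronglyMeasurable _).measurable
    have hGm : Measurable (fun p : H × (Fin (Module.finrank ℝ D) → ℝ) =>
        ((fun i => (∫ p, p ∂Q).1 i + (a i : Lp ℝ 2 μ) p.1 + ∑ j, S i j * p.2 j), p.1)) := by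
      refine Measurable.prodMk (measurable_pi_iff.2 fun i => ?_) measurable_fst
      have := ham i
      fun_prop
    have : IsProbabilityMeasure ((μ.prod (Measure.pi fun _ : Fin (Module.finrank ℝ D) => gaussianReal 0 1)).map
        (fun p => ((fun i => (∫ p, p ∂Q).1 i + (a i : Lp ℝ 2 μ) p.1 + ∑ j, S i j * p.2 j), p.1))) :=
      Measure.isProbabilityMeasure_map hGm.aemeasurable
    refine Measure.ext_of_charFunDual ?_
    ext L
    obtain ⟨c, ℓ, rfl⟩ := exists_mkL L
    have hL : charFunDual Q (mkL c ℓ)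
        = Complex.exp ((mkL c ℓ (∫ p, p ∂Q) : ℝ) * Complex.I) * cf1 Q (Jmap Q (mkL c ℓ)) := by
      rw [charFunDual_apply, cf1, ← integral_const_mul]
      refine integral_congr_ae ?_
      filter_upwards [Jmap_ae Q (mkL c ℓ)] with p hp
      rw [hp, ← Complex.exp_add]
      congr 1; push_cast; ring
    rw [hL, cf1_Jmap, hnorm]
    set q : Lp ℝ 2 μ := ∑ i, c i • (a i : Lp ℝ 2 μ) + Jmap μ ℓ with hq
    have hqG : q ∈ Gsp μ :=
      add_mem (sum_mem fun i _ => Submodule.smul_mem _ _ (a i).2) (Jmap_mem μ ℓ)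
    have hqae : ∀ᵐ z ∂μ, q z = ∑ i, c i * (a i : Lp ℝ 2 μ) z + (ℓ z - ℓ (∫ p, p ∂Q).2) := by
      filter_upwards [Lp.coeFn_add (∑ i, c i • (a i : Lp ℝ 2 μ)) (Jmap μ ℓ), lp_sum_ae c (fun i => (a i : Lp ℝ 2 μ)),
        Jmap_ae μ ℓ] with z h1 h2 h3
      rw [hq, h1, Pi.add_apply, h2, h3, hmean]
    rw [charFunDual_apply, integral_map hGm.aemeasurable (by fun_prop)]
    have hae2 : ∀ᵐ p ∂(μ.prod (Measure.pi fun _ : Fin (Module.finrank ℝ D) => gaussianReal 0 1)),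
        Complex.exp ((mkL c ℓ ((fun i => (∫ p, p ∂Q).1 i + (a i : Lp ℝ 2 μ) p.1 + ∑ j, S i j * p.2 j), p.1) : ℝ)
          * Complex.I)
        = Complex.exp ((mkL c ℓ (∫ p, p ∂Q) : ℝ) * Complex.I) *
          (Complex.exp (Complex.I * (q p.1 : ℝ)) *
          Complex.exp ((∑ j, (∑ i, c i * S i j) * p.2 j : ℝ) * Complex.I)) := by
      have h1 := (Measure.quasiMeasurePreserving_fst (μ := μ)
        (ν := Measure.pi fun _ : Fin (Module.finrank ℝ D) => gaussianReal 0 1)).ae hqae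
      filter_upwards [h1] with p hp
      rw [hp, ← Complex.exp_add, ← Complex.exp_add, mkL_apply, mkL_apply]
      congr 1
      have e : ∑ i, c i * ((∫ p, p ∂Q).1 i + (a i : Lp ℝ 2 μ) p.1 + ∑ j, S i j * p.2 j)
          = ∑ i, c i * (∫ p, p ∂Q).1 i + ∑ i, c i * (a i : Lp ℝ 2 μ) p.1
            + ∑ j, (∑ i, c i * S i j) * p.2 j := by
        simp_rw [mul_add, Finset.sum_add_distrib, Finset.mul_sum, Finset.sum_mul]
        congr 1
        rw [Finset.sum_comm]
        simp_rw [mul_assoc]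
      simp only [e]
      push_cast; ring
    rw [integral_congr_ae hae2, integral_const_mul,
      integral_prod_mul (fun z => Complex.exp (Complex.I * (q z : ℝ)))
        (fun g : Fin (Module.finrank ℝ D) → ℝ => Complex.exp ((∑ j, (∑ i, c i * S i j) * g j : ℝ) * Complex.I)),
      charFun_pi_gauss]
    have hcf := cf1_Gsp μ q hqG
    rw [cf1] at hcf
    rw [hcf, ← Complex.exp_add, ← Complex.exp_add, ← Complex.exp_add]
    congr 1; push_cast; ring
  · intro c ℓ hc h0
    refine Jmap_injective Q hinj _ ?_
    have := hnorm c ℓ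
    rw [h0] at this
    simp only [hc] at this
    simpa using this

end Structure


section Infinite

variable {H : Type*} [NormedAddCommGroup H] [InnerProductSpace ℝ H] [CompleteSpace H]
  [SecondCountableTopology H] [MeasurableSpace H] [BorelSpace H]

lemma exists_linInd_seq {V : Type*} [AddCommGroup V] [Module ℝ V] (hinf : ¬ FiniteDimensional ℝ V) :
    ∃ x : ℕ → V, LinearIndependent ℝ x := by
  let b := Module.Basis.ofVectorSpace ℝ V
  have hI : Infinite (Module.Basis.ofVectorSpaceIndex ℝ V) := by
    by_contra h
    rw [not_infinite_iff_finite] at h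
    exact hinf (Module.Finite.of_basis b)
  exact ⟨_, b.linearIndependent.comp _ (Infinite.natEmbedding _).injective⟩

lemma exists_eta (hinf : ¬ FiniteDimensional ℝ H) (μ : Measure H) [IsGaussian μ]
    (hJ : ∀ L, Jmap μ L = 0 → L = 0) :
    ∃ η : ℕ → StrongDual ℝ H, Orthonormal ℝ (fun k => Jmap μ (η k)) := by
  obtain ⟨x, hx⟩ := exists_linInd_seq hinf
  have h1 : LinearIndependent ℝ (fun k => InnerProductSpace.toDual ℝ H (x k)) :=
    hx.map' (InnerProductSpace.toDual ℝ H).toLinearEquiv.toLinearMap (LinearEquiv.ker _)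
  have h2 : LinearIndependent ℝ (fun k => Jmap μ (InnerProductSpace.toDual ℝ H (x k))) := by
    refine h1.map' (Jmap μ).toLinearMap ?_
    rw [LinearMap.ker_eq_bot']
    exact hJ
  have h3 := InnerProductSpace.gramSchmidtNormed_orthonormal h2
  have h4 : ∀ k, ∃ η, Jmap μ η = InnerProductSpace.gramSchmidtNormed ℝ
      (fun k => Jmap μ (InnerProductSpace.toDual ℝ H (x k))) k := by
    intro k
    have h5 : InnerProductSpace.gramSchmidtNormed ℝ
      (fun k => Jmap μ (InnerProductSpace.toDual ℝ H (x k))) k ∈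
        LinearMap.range (Jmap μ).toLinearMap := by
      have h6 : Submodule.span ℝ (Set.range (fun k => Jmap μ (InnerProductSpace.toDual ℝ H (x k))))
          ≤ LinearMap.range (Jmap μ).toLinearMap := by
        rw [Submodule.span_le]
        rintro _ ⟨k, rfl⟩
        exact ⟨_, rfl⟩
      refine h6 ?_
      rw [← InnerProductSpace.span_gramSchmidt, ← InnerProductSpace.span_gramSchmidtNormed_range]
      exact Submodule.subset_span ⟨k, rfl⟩
    exact h5
  choose η hη using h4
  refine ⟨η, ?_⟩
  simp_rw [hη]
  exact h3

/-- The centered coordinates. -/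
def xiOf (μ : Measure H) (η : ℕ → StrongDual ℝ H) (k : ℕ) (z : H) : ℝ :=
  η k z - η k (∫ x, x ∂μ)

lemma xi_meas (μ : Measure H) (η : ℕ → StrongDual ℝ H) (k : ℕ) : Measurable (xiOf μ η k) := by
  unfold xiOf
  fun_prop

lemma xi_law (μ : Measure H) [IsGaussian μ] (η : ℕ → StrongDual ℝ H)
    (h : Orthonormal ℝ (fun k => Jmap μ (η k))) (k : ℕ) :
    μ.map (xiOf μ η k) = gaussianReal 0 1 := by
  have h1 := Gsp_law μ (Jmap μ (η k)) (Jmap_mem μ _)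
  rw [h.1 k] at h1
  have e : μ.map (xiOf μ η k) = μ.map (Jmap μ (η k)) :=
    (Measure.map_congr (Jmap_ae μ (η k))).symm
  rw [e]
  simpa using h1

lemma xi_indep (μ : Measure H) [IsGaussian μ] (η : ℕ → StrongDual ℝ H)
    (h : Orthonormal ℝ (fun k => Jmap μ (η k))) :
    iIndepFun (xiOf μ η) μ := by
  have hG : IsGaussianProcess (fun (p : (_ : ℕ) × Unit) (z : H) => η p.1 z) μ := by
    refine ⟨fun I => ⟨?_⟩⟩
    have := isGaussian_map (μ := μ)
      (ContinuousLinearMap.pi fun i : I => η i.1.1)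
    exact this
  have h1 := hG.iIndepFun_of_covariance_eq_zero (X := fun k _ z => η k z)
    (fun k _ => by fun_prop) (by
      intro k l hkl _ _
      have h2 : ⟪Jmap μ (η k), Jmap μ (η l)⟫ = 0 := h.2 hkl
      rw [inner_Jmap] at h2
      exact h2)
  exact h1.comp (fun k (f : Unit → ℝ) => f () - η k (∫ x, x ∂μ)) (fun k => by fun_prop)

lemma Jmap_not_bounded_below (hinf : ¬ FiniteDimensional ℝ H) (μ : Measure H) [IsGaussian μ]
    (C : ℝ) (hC : ∀ L, ‖L‖ ≤ C * ‖Jmap μ L‖) : False := by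
  obtain ⟨x, hx⟩ := exists_linInd_seq hinf
  let e := InnerProductSpace.gramSchmidtNormed ℝ x
  have he : Orthonormal ℝ e := InnerProductSpace.gramSchmidtNormed_orthonormal hx
  let L : ℕ → StrongDual ℝ H := fun k => InnerProductSpace.toDual ℝ H (e k)
  have hL : ∀ k, ‖L k‖ = 1 := fun k => by
    rw [LinearIsometryEquiv.norm_map, he.1 k]
  let m := ∫ x, x ∂μ
  have hm2 : MemLp (fun z : H => z - m) 2 μ := IsGaussian.memLp_two_id.sub (memLp_const m)
  have hsq : Integrable (fun z : H => ‖z - m‖ ^ 2) μ := hm2.integrable_norm_pow (by norm_num)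
  have hJ : ∀ k, ‖Jmap μ (L k)‖ ^ 2 = ∫ z, ‖⟪e k, z - m⟫‖ ^ 2 ∂μ := by
    intro k
    rw [← real_inner_self_eq_norm_sq, L2.inner_def]
    refine integral_congr_ae ?_
    filter_upwards [Jmap_ae μ (L k)] with z hz
    rw [hz]
    simp [L, inner_sub_right, m, sq]
  have hJi : ∀ k, Integrable (fun z => ‖⟪e k, z - m⟫‖ ^ 2) μ := by
    intro k
    refine hsq.mono' (by fun_prop) (ae_of_all _ fun z => ?_)
    rw [Real.norm_of_nonneg (by positivity)]
    have := norm_inner_le_norm (𝕜 := ℝ) (e k) (z - m)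
    rw [he.1 k, one_mul] at this
    gcongr
  have hsum : ∀ N : ℕ, ∑ k ∈ Finset.range N, ‖Jmap μ (L k)‖ ^ 2 ≤ ∫ z, ‖z - m‖ ^ 2 ∂μ := by
    intro N
    simp_rw [hJ]
    rw [← integral_finsetSum _ fun k _ => hJi k]
    refine integral_mono (integrable_finsetSum _ fun k _ => hJi k) hsq fun z => ?_
    exact he.sum_inner_products_le (z - m)
  have h1 : ∀ k, 1 ≤ C ^ 2 * ‖Jmap μ (L k)‖ ^ 2 := by
    intro k
    have := hC (L k)
    rw [hL] at this
    nlinarith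
  obtain ⟨N, hN⟩ := exists_nat_gt (C ^ 2 * ∫ z, ‖z - m‖ ^ 2 ∂μ)
  have h2 : (N : ℝ) ≤ C ^ 2 * ∑ k ∈ Finset.range N, ‖Jmap μ (L k)‖ ^ 2 := by
    rw [Finset.mul_sum]
    calc (N : ℝ) = ∑ k ∈ Finset.range N, (1 : ℝ) := by simp
      _ ≤ _ := Finset.sum_le_sum fun k _ => h1 k
  have h3 := mul_le_mul_of_nonneg_left (hsum N) (sq_nonneg C)
  linarith

lemma Jmap_not_cofinite (hinf : ¬ FiniteDimensional ℝ H) (μ : Measure H) [IsGaussian μ]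
    (hJ : ∀ L, Jmap μ L = 0 → L = 0) (F : Submodule ℝ (Lp ℝ 2 μ)) [FiniteDimensional ℝ F]
    (hF : F ≤ Gsp μ) : ∃ v ∈ Gsp μ, v ∉ LinearMap.range (Jmap μ).toLinearMap ⊔ F := by
  by_contra! hcon
  have : CompleteSpace (Gsp μ) := Submodule.topologicalClosure.completeSpace _
  let J' : StrongDual ℝ H →L[ℝ] Gsp μ := (Jmap μ).codRestrict (Gsp μ) (Jmap_mem μ)
  have hJ' : ∀ L, ((J' L : Gsp μ) : Lp ℝ 2 μ) = Jmap μ L := fun L => rfl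
  have hker : J'.ker = ⊥ := by
    rw [LinearMap.ker_eq_bot']
    intro L hL
    exact hJ L (congrArg Subtype.val hL)
  obtain ⟨G, hG⟩ := Submodule.exists_isCompl (LinearMap.range J'.toLinearMap)
  have hfin : FiniteDimensional ℝ (Gsp μ ⧸ (LinearMap.range J'.toLinearMap)) := by
    let f : F →ₗ[ℝ] Gsp μ ⧸ (LinearMap.range J'.toLinearMap) :=
      (Submodule.mkQ _) ∘ₗ (Submodule.inclusion hF)
    refine Module.Finite.of_surjective f ?_
    intro y
    obtain ⟨y, rfl⟩ := Submodule.mkQ_surjective _ y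
    obtain ⟨p, ⟨L, hp⟩, q, hq, hpq⟩ := Submodule.mem_sup.1 (hcon y y.2)
    refine ⟨⟨q, hq⟩, ?_⟩
    change Submodule.mkQ _ (Submodule.inclusion hF ⟨q, hq⟩) = _
    rw [← sub_eq_zero, ← map_sub, Submodule.mkQ_apply, Submodule.Quotient.mk_eq_zero]
    refine ⟨-L, ?_⟩
    apply Subtype.ext
    change Jmap μ (-L) = q - y
    rw [← hpq, ← hp, map_neg]
    simp
  have hGfin : FiniteDimensional ℝ G :=
    Module.Finite.equiv (Submodule.quotientEquivOfIsCompl _ G hG)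
  have hcl := ContinuousLinearMap.closed_complemented_range_of_isCompl_of_ker_eq_bot J' G hG
    (Submodule.closed_of_finiteDimensional G) hker
  have hdense : DenseRange J' := by
    intro y
    have hy : (y : Lp ℝ 2 μ) ∈ closure (Set.range (Jmap μ)) := y.2
    rw [closure_subtype]
    refine closure_mono ?_ hy
    rintro _ ⟨L, rfl⟩
    exact ⟨J' L, ⟨L, rfl⟩, rfl⟩
  have hsurj : Function.Surjective J' := by
    intro y
    have h1 : y ∈ closure (Set.range J') := hdense y
    have h2 : IsClosed (Set.range J') := hcl
    rw [h2.closure_eq] at h1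
    exact h1
  let eqv := ContinuousLinearEquiv.ofBijective J' hker (LinearMap.range_eq_top.2 hsurj)
  refine Jmap_not_bounded_below hinf μ ‖(eqv.symm : Gsp μ →L[ℝ] StrongDual ℝ H)‖ fun L => ?_
  have h1 := (eqv.symm : Gsp μ →L[ℝ] StrongDual ℝ H).le_opNorm (eqv L)
  have h2 : ‖eqv L‖ = ‖Jmap μ L‖ := rfl
  rw [h2] at h1
  simpa using h1

lemma exists_v (hinf : ¬ FiniteDimensional ℝ H) (μ : Measure H) [IsGaussian μ]
    (hJ : ∀ L, Jmap μ L = 0 → L = 0) (F : Submodule ℝ (Lp ℝ 2 μ)) [FiniteDimensional ℝ F]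
    (hF : F ≤ Gsp μ) (r : ℕ) : ∃ v : Fin r → Lp ℝ 2 μ, (∀ j, v j ∈ Gsp μ) ∧
      ∀ (d : Fin r → ℝ) (L : StrongDual ℝ H), ∀ f ∈ F, ∑ j, d j • v j + f + Jmap μ L = 0 → d = 0 := by
  induction r with
  | zero => exact ⟨fun j => 0, fun j => j.elim0, fun d _ _ _ _ => Subsingleton.elim _ _⟩
  | succ r ih =>
    obtain ⟨v, hv, hv0⟩ := ih
    let V := Submodule.span ℝ (Set.range v)
    have hVf : FiniteDimensional ℝ V := FiniteDimensional.span_of_finite ℝ (Set.finite_range v)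
    have hVG : V ≤ Gsp μ := by
      rw [Submodule.span_le]
      rintro _ ⟨j, rfl⟩
      exact hv j
    obtain ⟨w, hw, hwn⟩ := Jmap_not_cofinite hinf μ hJ (F ⊔ V) (sup_le hF hVG)
    refine ⟨Fin.cons w v, ?_, ?_⟩
    · intro j
      refine Fin.cases ?_ (fun j => ?_) j
      · exact hw
      · exact hv j
    · intro d L f hf h0
      rw [Fin.sum_univ_succ] at h0
      simp only [Fin.cons_zero, Fin.cons_succ] at h0
      have hV : ∑ j : Fin r, d j.succ • v j ∈ V :=
        sum_mem fun j _ => Submodule.smul_mem _ _ (Submodule.subset_span ⟨j, rfl⟩)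
      have hd0 : d 0 = 0 := by
        by_contra hne
        refine hwn ?_
        have hmem : d 0 • w ∈ LinearMap.range (Jmap μ).toLinearMap ⊔ (F ⊔ V) := by
          have : d 0 • w = Jmap μ (-L) + (-f + -(∑ j : Fin r, d j.succ • v j)) := by
            rw [map_neg, ← sub_eq_zero, ← h0]; abel
          rw [this]
          exact Submodule.add_mem_sup ⟨-L, rfl⟩
            (Submodule.add_mem_sup (neg_mem hf) (neg_mem hV))
        have := Submodule.smul_mem _ (d 0)⁻¹ hmem
        rwa [smul_smul, inv_mul_cancel₀ hne, one_smul] at this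
      rw [hd0, zero_smul, zero_add] at h0
      have h1 := hv0 (fun j => d j.succ) L f hf h0
      ext j
      refine Fin.cases ?_ (fun j => ?_) j
      · exact hd0
      · exact congrFun h1 j

end Infinite


section Assembly

variable {H ι : Type*} [NormedAddCommGroup H] [InnerProductSpace ℝ H] [CompleteSpace H]
  [SecondCountableTopology H] [MeasurableSpace H] [BorelSpace H] [Fintype ι]

lemma mkL_zero_left (ℓ : StrongDual ℝ H) (h : mkL (0 : ι → ℝ) ℓ = 0) : ℓ = 0 := by
  refine ContinuousLinearMap.ext fun z => ?_
  have := mkL_apply (0 : ι → ℝ) ℓ (0, z)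
  rw [h] at this
  simpa using this.symm

lemma graph_gaussian (μ : Measure H) [IsGaussian μ] (r : ℕ) (m : ι → ℝ) (a : ι → Lp ℝ 2 μ)
    (S : ι → Fin r → ℝ) (ha : ∀ i, a i ∈ Gsp μ)
    (hS : ∀ (c : ι → ℝ) (ℓ : StrongDual ℝ H), (∀ j, ∑ i, c i * S i j = 0) →
      ∑ i, c i • a i + Jmap μ ℓ = 0 → mkL c ℓ = 0)
    (v : Fin r → Lp ℝ 2 μ) (hv : ∀ j, v j ∈ Gsp μ)
    (hvF : ∀ (d : Fin r → ℝ) L, ∀ f ∈ Submodule.span ℝ (Set.range a),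
      ∑ j, d j • v j + f + Jmap μ L = 0 → d = 0)
    (η : ℕ → StrongDual ℝ H) (N : ℕ) (u : EuclideanSpace ℝ (Fin N × Fin r))
    (hm : Measurable (fun z => ((fun i => m i + a i z + ∑ j, S i j *
      Vu (xiOf μ η) (fun j => v j) N u z j), z) : H → (ι → ℝ) × H)) :
    IsGaussianMeasure (μ.map (fun z => ((fun i => m i + a i z + ∑ j, S i j *
      Vu (xiOf μ η) (fun j => v j) N u z j), z) : H → (ι → ℝ) × H)) ∧
    HasInjectiveCovariance (μ.map (fun z => ((fun i => m i + a i z + ∑ j, S i j *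
      Vu (xiOf μ η) (fun j => v j) N u z j), z) : H → (ι → ℝ) × H)) := by
  refine pushforward_gaussian μ _ hm fun L => ?_
  obtain ⟨c, ℓ, rfl⟩ := exists_mkL L
  let t : Fin r → ℝ := fun j => ∑ i, c i * S i j
  let d : Fin r → ℝ := fun j => t j * (1 / ((N : ℝ) + 1))
  let w : Fin N → ℝ := fun k => ∑ j, t j * u (k, j) / √N
  let ℓ' : StrongDual ℝ H := ℓ + ∑ k : Fin N, w k • η k
  refine ⟨∑ i, c i * m i + ℓ (∫ x, x ∂μ),
    ∑ j, d j • v j + ∑ i, c i • a i + Jmap μ ℓ', ?_, ?_, ?_⟩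
  · refine add_mem (add_mem (sum_mem fun j _ => Submodule.smul_mem _ _ (hv j))
      (sum_mem fun j _ => Submodule.smul_mem _ _ (ha j))) (Jmap_mem μ _)
  · filter_upwards [lp_sum_ae d v, lp_sum_ae c a, Jmap_ae μ ℓ',
      Lp.coeFn_add (∑ j, d j • v j + ∑ i, c i • a i) (Jmap μ ℓ'),
      Lp.coeFn_add (∑ j, d j • v j) (∑ i, c i • a i)] with z h1 h2 h3 h4 h5
    rw [h4, Pi.add_apply, h5, Pi.add_apply, h1, h2, h3, mkL_apply]
    have e1 : ∑ i, c i * (∑ j, S i j * Vu (xiOf μ η) (fun j => v j) N u z j)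
        = ∑ j, t j * Vu (xiOf μ η) (fun j => v j) N u z j := by
      simp only [t, Finset.mul_sum, Finset.sum_mul]
      rw [Finset.sum_comm]
      simp only [mul_assoc]
    have e2 : ∑ j, t j * Vu (xiOf μ η) (fun j => v j) N u z j
        = ∑ j, d j * v j z + ∑ k : Fin N, w k * xiOf μ η k z := by
      simp only [Vu, mul_add, Finset.sum_add_distrib]
      congr 1
      · refine Finset.sum_congr rfl fun j _ => ?_
        simp only [d]; ring
      · simp only [w, Finset.sum_mul, Finset.mul_sum]
        rw [Finset.sum_comm]
        refine Finset.sum_congr rfl fun k _ => Finset.sum_congr rfl fun j _ => ?_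
        ring
    have e3 : ∀ y, ℓ' y = ℓ y + ∑ k : Fin N, w k * η k y := by
      intro y
      simp [ℓ']
    simp only [mul_add, Finset.sum_add_distrib, e1, e2, e3]
    simp only [xiOf, mul_sub, Finset.sum_sub_distrib]
    ring
  · intro hq
    have hd := hvF d ℓ' (∑ i, c i • a i)
      (sum_mem fun i _ => Submodule.smul_mem _ _ (Submodule.subset_span ⟨i, rfl⟩)) hq
    have ht : ∀ j, t j = 0 := by
      intro j
      have := congrFun hd j
      simp only [d, Pi.zero_apply] at this
      have hN : (1 / ((N : ℝ) + 1)) ≠ 0 := by positivity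
      exact (mul_eq_zero.1 this).resolve_right hN
    have hw : ∀ k, w k = 0 := by
      intro k
      simp [w, ht]
    have hl : ℓ' = ℓ := by simp [ℓ', hw]
    rw [hd, hl] at hq
    exact hS c ℓ ht (by simpa using hq)

lemma core (hinf : ¬ FiniteDimensional ℝ H) (Q : Measure ((ι → ℝ) × H)) [IsGaussian Q]
    (hinj : HasInjectiveCovariance Q) (n : ℕ) (B : Set (Fin n → (ι → ℝ) × H))
    (hB : MeasurableSet B) (α : ℝ≥0∞)
    (h : ∀ f : H → (ι → ℝ), Measurable f →
      IsGaussianMeasure ((Q.map Prod.snd).map (fun z => (f z, z))) →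
      HasInjectiveCovariance ((Q.map Prod.snd).map (fun z => (f z, z))) →
      (Measure.pi fun _ : Fin n => (Q.map Prod.snd).map (fun z => (f z, z))) B ≤ α) :
    (Measure.pi fun _ : Fin n => Q) B ≤ α := by
  obtain ⟨μ, hμ⟩ : ∃ μ, Q.map Prod.snd = μ := ⟨_, rfl⟩
  have : IsGaussian μ := by
    rw [← hμ]
    exact isGaussian_map (ContinuousLinearMap.snd ℝ (ι → ℝ) H)
  obtain ⟨r, m, a, S, ha, hQ, hS⟩ := structure_Q Q hinj μ hμ
  rw [hμ] at h
  have hJ : ∀ L, Jmap μ L = 0 → L = 0 := fun L hL =>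
    mkL_zero_left (ι := ι) L (hS 0 L (by simp) (by simpa using hL))
  have hfd : FiniteDimensional ℝ (Submodule.span ℝ (Set.range a)) :=
    FiniteDimensional.span_of_finite ℝ (Set.finite_range a)
  obtain ⟨v, hv, hvF⟩ := exists_v hinf μ hJ (Submodule.span ℝ (Set.range a))
    (Submodule.span_le.2 (by rintro _ ⟨i, rfl⟩; exact ha i)) r
  obtain ⟨η, hη⟩ := exists_eta hinf μ hJ
  have hvm : ∀ j, Measurable (v j) := fun j => (Lp.stronglyMeasurable (v j)).measurable
  have ham : ∀ j, Measurable (a j) := fun j => (Lp.stronglyMeasurable (a j)).measurable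
  have hxm := xi_meas μ η
  rw [hQ]
  refine transfer μ (xiOf μ η) hxm (xi_indep μ η hη) (xi_law μ η hη)
    (fun j => v j) hvm _ ?_ n B hB α ?_
  · fun_prop
  · intro N u
    have hf : Measurable (fun z => (fun i => m i + a i z + ∑ j, S i j *
      Vu (xiOf μ η) (fun j => v j) N u z j) : H → (ι → ℝ)) := by
      unfold Vu
      fun_prop
    have hg := graph_gaussian μ r m a S ha hS v hv hvF η N u (hf.prodMk measurable_id)
    exact h _ hf hg.1 hg.2

lemma gauss_map_equiv {E F : Type*} [NormedAddCommGroup E] [NormedSpace ℝ E] [MeasurableSpace E]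
    [BorelSpace E] [NormedAddCommGroup F] [NormedSpace ℝ F] [MeasurableSpace F] [BorelSpace F]
    (e : E ≃L[ℝ] F) (μ : Measure E) (h : IsGaussianMeasure μ) : IsGaussianMeasure (μ.map e) := by
  intro L
  obtain ⟨m, v, hmv⟩ := h (L ∘L e.toContinuousLinearMap)
  refine ⟨m, v, ?_⟩
  rw [Measure.map_map L.continuous.measurable e.continuous.measurable, ← hmv]
  rfl

lemma inj_map_equiv {E F : Type*} [NormedAddCommGroup E] [NormedSpace ℝ E] [MeasurableSpace E]
    [BorelSpace E] [NormedAddCommGroup F] [NormedSpace ℝ F] [MeasurableSpace F] [BorelSpace F]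
    (e : E ≃L[ℝ] F) (μ : Measure E) (h : HasInjectiveCovariance μ) :
    HasInjectiveCovariance (μ.map e) := by
  have key : ∀ f : F → ℝ, ∫ y, f y ∂(μ.map e) = ∫ x, f (e x) ∂μ := fun f =>
    e.toHomeomorph.measurableEmbedding.integral_map f
  have hc : ∀ L₁ L₂ : F →L[ℝ] ℝ, covForm (μ.map e) L₁ L₂ =
      covForm μ (L₁ ∘L e.toContinuousLinearMap) (L₂ ∘L e.toContinuousLinearMap) := by
    intro L₁ L₂
    simp only [covForm, key]
    rfl
  intro L hL
  have h0 := h (L ∘L e.toContinuousLinearMap) (fun L₂ => by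
    have := hL (L₂ ∘L e.symm.toContinuousLinearMap)
    rw [hc] at this
    rw [← this]
    congr 1
    ext x
    simp)
  refine ContinuousLinearMap.ext fun y => ?_
  have := DFunLike.congr_fun h0 (e.symm y)
  simpa using this

lemma condIndep_graph {A B Z : Type*} [MeasurableSpace A] [MeasurableSpace B] [MeasurableSpace Z]
    (μ : Measure Z) [IsProbabilityMeasure μ] (fA : Z → A) (fB : Z → B) (hA : Measurable fA)
    (hB : Measurable fB) :
    CondIndepGiven (μ.map (fun z => (fA z, fB z, z))) (fun ω => ω.1) (fun ω => ω.2.1)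
      (fun ω => ω.2.2) := by
  intro f g hf hg hfb hgb
  have hφ : Measurable (fun z => (fA z, fB z, z)) := by fun_prop
  have hprob : IsProbabilityMeasure (μ.map (fun z => (fA z, fB z, z))) :=
    Measure.isProbabilityMeasure_map hφ.aemeasurable
  set P := μ.map (fun z => (fA z, fB z, z)) with hP
  have hZ : Measurable (fun ω : A × B × Z => ω.2.2) := by fun_prop
  have key : ∀ (F : A × B × Z → ℝ) , Measurable F → (∃ C, ∀ ω, |F ω| ≤ C) →
      P[F|MeasurableSpace.comap (fun ω : A × B × Z => ω.2.2) inferInstance] =ᵐ[P] F := by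
    rintro F hF ⟨C, hC⟩
    let F' : A × B × Z → ℝ := fun ω => F (fA ω.2.2, fB ω.2.2, ω.2.2)
    have hk : Measurable (fun z => F (fA z, fB z, z)) := hF.comp hφ
    have hF'm : Measurable F' := hk.comp hZ
    have hae : F =ᵐ[P] F' := by
      have : ∀ᵐ ω ∂P, F ω - F' ω = 0 := by
        refine (ae_map_iff hφ.aemeasurable
          (measurableSet_eq_fun (hF.sub hF'm) measurable_const)).2 ?_
        exact ae_of_all _ fun z => by simp [F']
      filter_upwards [this] with ω h
      linarith
    have hs : StronglyMeasurable[MeasurableSpace.comap (fun ω : A × B × Z => ω.2.2) inferInstance] F' :=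
      (hk.comp (comap_measurable (fun ω : A × B × Z => ω.2.2))).stronglyMeasurable
    have hi : Integrable F' P := Integrable.of_bound hF'm.aestronglyMeasurable C
      (ae_of_all _ fun ω => hC _)
    have h2 := condExp_of_stronglyMeasurable hZ.comap_le hs hi
    calc P[F|MeasurableSpace.comap (fun ω : A × B × Z => ω.2.2) inferInstance] =ᵐ[P] P[F'|MeasurableSpace.comap (fun ω : A × B × Z => ω.2.2) inferInstance] := condExp_congr_ae hae
      _ = F' := h2
      _ =ᵐ[P] F := hae.symm
  obtain ⟨C, hC⟩ := hfb
  obtain ⟨D, hD⟩ := hgb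
  have k1 := key (fun ω => f ω.1) (by fun_prop) ⟨C, fun ω => hC _⟩
  have k2 := key (fun ω => g ω.2.1) (by fun_prop) ⟨D, fun ω => hD _⟩
  have k3 := key (fun ω => f ω.1 * g ω.2.1) (by fun_prop) ⟨C * D, fun ω => by
    rw [abs_mul]
    exact mul_le_mul (hC _) (hD _) (abs_nonneg _) ((abs_nonneg _).trans (hC ω.1))⟩
  filter_upwards [k1, k2, k3] with ω h1 h2 h3
  rw [h3, h1, h2]

end Assembly

/-- Regrouping of the coordinates. -/
def regroup (H : Type*) [NormedAddCommGroup H] [InnerProductSpace ℝ H] (dX dY : ℕ) :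
    ((Fin dX → ℝ) × (Fin dY → ℝ) × H) ≃L[ℝ] ((Fin dX ⊕ Fin dY → ℝ) × H) where
  toFun p := (Sum.elim p.1 p.2.1, p.2.2)
  invFun q := (fun i => q.1 (Sum.inl i), fun i => q.1 (Sum.inr i), q.2)
  map_add' p q := by
    refine Prod.ext ?_ rfl
    funext i
    cases i <;> rfl
  map_smul' c p := by
    refine Prod.ext ?_ rfl
    funext i
    cases i <;> rfl
  left_inv p := rfl
  right_inv q := by
    refine Prod.ext ?_ rfl
    funext i
    cases i <;> rfl
  continuous_toFun := by
    refine Continuous.prodMk (continuous_pi fun i => ?_) (by fun_prop)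
    cases i
    · simp only [Sum.elim_inl]; fun_prop
    · simp only [Sum.elim_inr]; fun_prop
  continuous_invFun := by fun_prop


/-- Hardness of conditional independence testing with multivariate `X, Y` and
infinite-dimensional Hilbertian `Z`: any test of size at most `α` over the null `𝒫₀^Q` has
power at most `α` against the alternative `Q`. -/
theorem gaussian_ci_testing_hard_finite_XY
    {HZ : Type*}
    [NormedAddCommGroup HZ] [InnerProductSpace ℝ HZ] [CompleteSpace HZ]
    [TopologicalSpace.SeparableSpace HZ] [MeasurableSpace HZ] [BorelSpace HZ]
    (hinf : ¬ FiniteDimensional ℝ HZ)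
    (dX dY : ℕ)
    (Q : Measure ((Fin dX → ℝ) × (Fin dY → ℝ) × HZ))
    (hQprob : IsProbabilityMeasure Q)
    (hQgauss : IsGaussianMeasure Q)
    (hQinj : HasInjectiveCovariance Q)
    (hQalt : ¬ CondIndepGiven Q (fun ω => ω.1) (fun ω => ω.2.1) (fun ω => ω.2.2))
    (n : ℕ) (α : ℝ≥0∞) (hα : α ≤ 1)
    (ψ : (Fin n → (Fin dX → ℝ) × (Fin dY → ℝ) × HZ) → Bool)
    (hψ : Measurable ψ)
    (hsize : ∀ P : Measure ((Fin dX → ℝ) × (Fin dY → ℝ) × HZ),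
      IsProbabilityMeasure P → IsGaussianMeasure P → HasInjectiveCovariance P →
      CondIndepGiven P (fun ω => ω.1) (fun ω => ω.2.1) (fun ω => ω.2.2) →
      P.map (fun ω => ω.2.2) = Q.map (fun ω => ω.2.2) →
      (Measure.pi fun _ : Fin n => P) {x | ψ x = true} ≤ α) :
    (Measure.pi fun _ : Fin n => Q) {x | ψ x = true} ≤ α := by
  classical
  have hsc : SecondCountableTopology HZ := UniformSpace.secondCountable_of_separable HZ
  have hG : IsGaussian Q := isGaussian_of_map_eq_gaussianReal hQgauss
  let e := regroup HZ dX dY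
  have hem : Measurable e := e.continuous.measurable
  have hesm : Measurable e.symm := e.symm.continuous.measurable
  have hG' : IsGaussian (Q.map e) := isGaussian_map_equiv e
  have hsnd : (Q.map e).map Prod.snd = Q.map (fun ω => ω.2.2) := by
    rw [Measure.map_map measurable_snd hem]
    rfl
  have hpi : ∀ (P : Measure ((Fin dX ⊕ Fin dY → ℝ) × HZ)) [IsProbabilityMeasure P],
      (Measure.pi fun _ : Fin n => P.map e.symm) =
        (Measure.pi fun _ : Fin n => P).map (fun x i => e.symm (x i)) := by
    intro P _
    have : IsProbabilityMeasure (P.map e.symm) :=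
      Measure.isProbabilityMeasure_map hesm.aemeasurable
    exact (Measure.pi_map_pi (fun _ => hesm.aemeasurable)).symm
  have hA : MeasurableSet {x | ψ x = true} := hψ (measurableSet_singleton true)
  have hes : Measurable (fun (x : Fin n → (Fin dX ⊕ Fin dY → ℝ) × HZ) i => e.symm (x i)) := by
    fun_prop
  have hQe : (Q.map e).map e.symm = Q := by
    rw [Measure.map_map hesm hem]
    convert Measure.map_id
    ext x : 1
    simp
  have hB := hes hA
  have hfin := core hinf (Q.map e) (inj_map_equiv e Q hQinj) n _ hB α ?_
  · rw [← Measure.map_apply hes hA, ← hpi, hQe] at hfin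
    exact hfin
  · intro f hf h1 h2
    rw [hsnd] at h1 h2 ⊢
    have hμp : IsProbabilityMeasure (Q.map (fun ω => ω.2.2)) :=
      Measure.isProbabilityMeasure_map (by fun_prop)
    have hφ : Measurable (fun z => (f z, z)) := by fun_prop
    have hPp : IsProbabilityMeasure ((Q.map (fun ω => ω.2.2)).map (fun z => (f z, z))) :=
      Measure.isProbabilityMeasure_map hφ.aemeasurable
    rw [← Measure.map_apply hes hA, ← hpi]
    have hPe : ((Q.map (fun ω => ω.2.2)).map (fun z => (f z, z))).map e.symm =
        (Q.map (fun ω => ω.2.2)).map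
          (fun z => ((fun i => f z (Sum.inl i)), (fun i => f z (Sum.inr i)), z)) := by
      rw [Measure.map_map hesm hφ]
      rfl
    refine hsize _ (Measure.isProbabilityMeasure_map hesm.aemeasurable)
      (gauss_map_equiv e.symm _ h1) (inj_map_equiv e.symm _ h2) ?_ ?_
    · rw [hPe]
      exact condIndep_graph _ _ _ (by fun_prop) (by fun_prop)
    · rw [hPe, Measure.map_map (by fun_prop) (by fun_prop)]
      exact Measure.map_id
end
end

section
/- Let (X_{n,θ})_{n∈ℕ, θ∈Θ} and (X_θ)_{θ∈Θ} be random variables on (Ω, F) with values in a separable Banach space B. Assume that (X_{n,θ}) converges uniformly in probability over Θ to (X_θ) and that (X_θ)_{θ∈Θ} is uniformly tight. Then for any continuous function ψ : B → B̃, where B̃ is another separable Banach space, the family (ψ(X_{n,θ})) converges uniformly in probability over Θ to (ψ(X_θ)). -/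
open MeasureTheory ProbabilityTheory Filter
open scoped ENNReal NNReal RealInnerProductSpace

noncomputable section

/-- `(X_{n,θ})` converges uniformly in probability over `Θ` to `(Xlim_θ)`. -/
def TendstoUnifInProb {Ω Θ B : Type*} [MeasurableSpace Ω] [NormedAddCommGroup B]
    (P : Θ → Measure Ω) (X : ℕ → Θ → Ω → B) (Xlim : Θ → Ω → B) : Prop :=
  ∀ ε : ℝ, 0 < ε →
    Filter.Tendsto (fun n => ⨆ θ, P θ {ω | ε ≤ ‖X n θ ω - Xlim θ ω‖}) Filter.atTop (nhds 0)

/-- The family `(X_θ)` is uniformly tight over `Θ`. -/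
def UniformlyTight {Ω Θ B : Type*} [MeasurableSpace Ω] [TopologicalSpace B]
    (P : Θ → Measure Ω) (X : Θ → Ω → B) : Prop :=
  ∀ ε : ℝ, 0 < ε → ∃ K : Set B, IsCompact K ∧ (⨆ θ, P θ {ω | X θ ω ∉ K}) < ENNReal.ofReal ε

/-- Uniform convergence in probability is preserved by continuous mappings when the family of
limit variables is uniformly tight. -/
theorem tendstoUnifInProb_comp_continuous
    {Ω Θ B B' : Type*} [MeasurableSpace Ω]
    [NormedAddCommGroup B] [NormedSpace ℝ B] [CompleteSpace B]
    [TopologicalSpace.SeparableSpace B] [MeasurableSpace B] [BorelSpace B]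
    [NormedAddCommGroup B'] [NormedSpace ℝ B'] [CompleteSpace B']
    [TopologicalSpace.SeparableSpace B']
    (P : Θ → Measure Ω) (hP : ∀ θ, IsProbabilityMeasure (P θ))
    (X : ℕ → Θ → Ω → B) (Xlim : Θ → Ω → B)
    (hXmeas : ∀ n θ, Measurable (X n θ)) (hXlimmeas : ∀ θ, Measurable (Xlim θ))
    (hconv : TendstoUnifInProb P X Xlim)
    (htight : UniformlyTight P Xlim)
    (ψ : B → B') (hψ : Continuous ψ) :
    TendstoUnifInProb P (fun n θ ω => ψ (X n θ ω)) (fun θ ω => ψ (Xlim θ ω)) := by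
  intro ε hε
  rw [ENNReal.tendsto_atTop_zero]
  intro η hη
  have hη2 : 0 < η / 2 := ENNReal.half_pos hη.ne'
  obtain ⟨c, hc0, hc⟩ := ENNReal.lt_iff_exists_nnreal_btwn.1 hη2
  have hc0' : (0 : ℝ) < c := by exact_mod_cast hc0
  obtain ⟨K, hK, hKc⟩ := htight c hc0'
  rw [ENNReal.ofReal_coe_nnreal] at hKc
  have hu := hK.uniformContinuousAt_of_continuousAt ψ (fun a _ => hψ.continuousAt)
    (Metric.dist_mem_uniformity hε)
  obtain ⟨δ, hδ, hδK⟩ := Metric.mem_uniformity_dist.1 hu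
  obtain ⟨N, hN⟩ := (ENNReal.tendsto_atTop_zero.1 (hconv δ hδ)) (η / 2) hη2
  refine ⟨N, fun n hn => iSup_le fun θ => ?_⟩
  have hsub : {ω | ε ≤ ‖ψ (X n θ ω) - ψ (Xlim θ ω)‖} ⊆
      {ω | δ ≤ ‖X n θ ω - Xlim θ ω‖} ∪ {ω | Xlim θ ω ∉ K} := by
    intro ω hω
    by_contra hcon
    simp only [Set.mem_union, Set.mem_setOf_eq, not_or, not_le, not_not] at hcon hω
    have h1 : dist (Xlim θ ω) (X n θ ω) < δ := by
      rw [dist_comm, dist_eq_norm]; exact hcon.1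
    have h2 : dist (ψ (Xlim θ ω)) (ψ (X n θ ω)) < ε := hδK h1 hcon.2
    rw [dist_comm, dist_eq_norm] at h2
    exact absurd h2 (not_lt.2 hω)
  calc P θ {ω | ε ≤ ‖ψ (X n θ ω) - ψ (Xlim θ ω)‖}
      ≤ P θ {ω | δ ≤ ‖X n θ ω - Xlim θ ω‖} + P θ {ω | Xlim θ ω ∉ K} :=
        (measure_mono hsub).trans (measure_union_le _ _)
    _ ≤ η / 2 + η / 2 := by
        refine add_le_add ?_ ?_
        · exact (le_iSup (fun θ => P θ {ω | δ ≤ ‖X n θ ω - Xlim θ ω‖}) θ).trans (hN n hn)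
        · exact ((le_iSup (fun θ => P θ {ω | Xlim θ ω ∉ K}) θ).trans hKc.le).trans hc.le
    _ = η := ENNReal.add_halves η
end
end

section
/- Let (X_θ)_{θ∈Θ} be random variables on (Ω, F) with values in a separable Banach space B, and assume (X_θ)_{θ∈Θ} is uniformly tight and uniformly absolutely continuous with respect to a σ-finite Borel measure μ on B. Let ν be another σ-finite Borel measure on B dominating μ such that there exists a continuous Radon–Nikodym derivative g = dμ/dν. Then (X_θ)_{θ∈Θ} is uniformly absolutely continuous with respect to ν. -/
open MeasureTheory ProbabilityTheory Filter
open scoped ENNReal NNReal RealInnerProductSpace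

noncomputable section

/-- The family `(X_θ)` is uniformly absolutely continuous with respect to `μ`. -/
def UnifAbsCont {Ω Θ B : Type*} [MeasurableSpace Ω] [MeasurableSpace B]
    (P : Θ → Measure Ω) (X : Θ → Ω → B) (μ : Measure B) : Prop :=
  ∀ ε : ℝ, 0 < ε → ∃ δ : ℝ, 0 < δ ∧ ∀ s : Set B, MeasurableSet s →
    μ s < ENNReal.ofReal δ → (⨆ θ, P θ (X θ ⁻¹' s)) < ENNReal.ofReal ε

/-- Uniform absolute continuity is preserved under changing the dominating measure, provided
the Radon–Nikodym derivative is continuous and the family is uniformly tight. -/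
theorem unifAbsCont_of_withDensity
    {Ω Θ B : Type*} [MeasurableSpace Ω]
    [NormedAddCommGroup B] [NormedSpace ℝ B] [CompleteSpace B]
    [TopologicalSpace.SeparableSpace B] [MeasurableSpace B] [BorelSpace B]
    (P : Θ → Measure Ω) (hP : ∀ θ, IsProbabilityMeasure (P θ))
    (X : Θ → Ω → B) (hXmeas : ∀ θ, Measurable (X θ))
    (htight : UniformlyTight P X)
    (μ ν : Measure B) (hμ : SigmaFinite μ) (hν : SigmaFinite ν)
    (g : B → ℝ) (hg : Continuous g) (hg0 : ∀ x, 0 ≤ g x)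
    (hμν : μ = ν.withDensity (fun x => ENNReal.ofReal (g x)))
    (hac : UnifAbsCont P X μ) :
    UnifAbsCont P X ν := by
  intro ε hε
  obtain ⟨K, hK, hKε⟩ := htight (ε / 2) (by positivity)
  obtain ⟨δ, hδ, hδs⟩ := hac (ε / 2) (by positivity)
  obtain ⟨C, hC⟩ := hK.exists_bound_of_continuousOn hg.continuousOn
  have hM : 0 < max C 1 := lt_of_lt_of_le one_pos (le_max_right _ _)
  refine ⟨δ / max C 1, by positivity, fun s hs hνs => ?_⟩
  have hmeas : MeasurableSet (s ∩ K) := hs.inter hK.isClosed.measurableSet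
  have hμs : μ (s ∩ K) < ENNReal.ofReal δ := by
    rw [hμν, withDensity_apply _ hmeas]
    calc ∫⁻ x in s ∩ K, ENNReal.ofReal (g x) ∂ν
        ≤ ∫⁻ _ in s ∩ K, ENNReal.ofReal (max C 1) ∂ν := by
          refine setLIntegral_mono measurable_const fun x hx => ?_
          exact ENNReal.ofReal_le_ofReal
            ((le_abs_self _).trans ((hC x hx.2).trans (le_max_left _ _)))
      _ = ENNReal.ofReal (max C 1) * ν (s ∩ K) := by
          rw [setLIntegral_const]
      _ ≤ ENNReal.ofReal (max C 1) * ν s := by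
          gcongr
          exact Set.inter_subset_left
      _ < ENNReal.ofReal (max C 1) * ENNReal.ofReal (δ / max C 1) :=
          ENNReal.mul_lt_mul_right (by simpa using hM) ENNReal.ofReal_ne_top hνs
      _ = ENNReal.ofReal δ := by
          rw [← ENNReal.ofReal_mul hM.le, mul_div_cancel₀ _ hM.ne']
  have h1 := hδs _ hmeas hμs
  calc (⨆ θ, P θ (X θ ⁻¹' s))
      ≤ (⨆ θ, P θ (X θ ⁻¹' (s ∩ K))) + ⨆ θ, P θ {ω | X θ ω ∉ K} := by
        refine iSup_le fun θ => ?_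
        calc P θ (X θ ⁻¹' s) ≤ P θ (X θ ⁻¹' (s ∩ K) ∪ {ω | X θ ω ∉ K}) := by
              refine measure_mono fun ω hω => ?_
              by_cases h : X θ ω ∈ K
              · exact Or.inl ⟨hω, h⟩
              · exact Or.inr h
          _ ≤ P θ (X θ ⁻¹' (s ∩ K)) + P θ {ω | X θ ω ∉ K} := measure_union_le _ _
          _ ≤ _ := add_le_add (le_iSup (fun θ => P θ (X θ ⁻¹' (s ∩ K))) θ)
              (le_iSup (fun θ => P θ {ω | X θ ω ∉ K}) θ)
    _ < ENNReal.ofReal (ε / 2) + ENNReal.ofReal (ε / 2) := ENNReal.add_lt_add h1 hKε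
    _ = ENNReal.ofReal ε := by
        rw [← ENNReal.ofReal_add (by positivity) (by positivity), add_halves]
end
end

section
/- Let (X_θ)_{θ∈Θ} and (Y_θ)_{θ∈Θ} be real-valued random variables on (Ω, F) such that for every θ ∈ Θ the variables X_θ and Y_θ are independent under P_θ. If (X_θ)_{θ∈Θ} is uniformly absolutely continuous with respect to Lebesgue measure, then (X_θ + Y_θ)_{θ∈Θ} is uniformly absolutely continuous with respect to Lebesgue measure. -/
open MeasureTheory ProbabilityTheory Filter
open scoped ENNReal NNReal RealInnerProductSpace

noncomputable section

/-- An independent convolution preserves uniform absolute continuity with respect to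
Lebesgue measure. -/
theorem unifAbsCont_add_of_indep
    {Ω Θ : Type*} [MeasurableSpace Ω]
    (P : Θ → Measure Ω) (hP : ∀ θ, IsProbabilityMeasure (P θ))
    (X Y : Θ → Ω → ℝ) (hX : ∀ θ, Measurable (X θ)) (hY : ∀ θ, Measurable (Y θ))
    (hindep : ∀ θ, IndepFun (X θ) (Y θ) (P θ))
    (hac : UnifAbsCont P X (volume : Measure ℝ)) :
    UnifAbsCont P (fun θ ω => X θ ω + Y θ ω) (volume : Measure ℝ) := by
  intro ε hε
  obtain ⟨δ, hδ, h⟩ := hac (ε / 2) (by positivity)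
  refine ⟨δ, hδ, fun s hs hvol => ?_⟩
  refine lt_of_le_of_lt (iSup_le fun θ => ?_)
    ((ENNReal.ofReal_lt_ofReal_iff hε).2 (half_lt_self hε))
  haveI := hP θ
  haveI : IsProbabilityMeasure ((P θ).map (X θ)) :=
    Measure.isProbabilityMeasure_map (hX θ).aemeasurable
  haveI : IsProbabilityMeasure ((P θ).map (Y θ)) :=
    Measure.isProbabilityMeasure_map (hY θ).aemeasurable
  have hprod := (indepFun_iff_map_prod_eq_prod_map_map (hX θ).aemeasurable
    (hY θ).aemeasurable).1 (hindep θ)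
  have hT : MeasurableSet ((fun p : ℝ × ℝ => p.1 + p.2) ⁻¹' s) :=
    (measurable_fst.add measurable_snd) hs
  have h1 : P θ ((fun ω => X θ ω + Y θ ω) ⁻¹' s)
      = (P θ).map (fun ω => (X θ ω, Y θ ω)) ((fun p : ℝ × ℝ => p.1 + p.2) ⁻¹' s) := by
    rw [Measure.map_apply ((hX θ).prodMk (hY θ)) hT]
    rfl
  rw [h1, hprod, Measure.prod_apply_symm hT]
  have hb : ∀ y : ℝ, (P θ).map (X θ)
      ((fun x => (x, y)) ⁻¹' ((fun p : ℝ × ℝ => p.1 + p.2) ⁻¹' s)) ≤ ENNReal.ofReal (ε / 2) := by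
    intro y
    have hm : MeasurableSet ((fun x : ℝ => x + y) ⁻¹' s) := (measurable_id.add_const y) hs
    have hv : volume ((fun x : ℝ => x + y) ⁻¹' s) < ENNReal.ofReal δ := by
      rw [measure_preimage_add_right]
      exact hvol
    change (P θ).map (X θ) ((fun x : ℝ => x + y) ⁻¹' s) ≤ _
    rw [Measure.map_apply (hX θ) hm]
    exact (le_iSup (fun θ => P θ (X θ ⁻¹' ((fun x : ℝ => x + y) ⁻¹' s))) θ).trans (h _ hm hv).le
  calc _ ≤ ∫⁻ _, ENNReal.ofReal (ε / 2) ∂((P θ).map (Y θ)) := lintegral_mono hb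
    _ = ENNReal.ofReal (ε / 2) := by simp
end
end
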